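/- (Reaction–diffusion regime.) There exist constants κ, σ, C > 0, independent of ε₁, ε₂ and of p, such that for all parameters with ε₂² ≪ ε₁ ≤ 1 (i.e. uniformly over 0 < ε₂² ≤ ε₁ ≤ 1), the solution u of the two-parameter problem and the weak Galerkin solution u_p of degree p on the Spectral Boundary Layer mesh ω_BL(κ,p) satisfy |||u − u_p|||_p ≤ C e^{−σ p}. -/

import Mathlib

noncomputable section

open MeasureTheory Set

/-- A mesh `0 = x₀ < x₁ < ⋯ < x_N = 1` on the interval `I = (0,1)`. -/
structure Mesh (N : ℕ) where
  pt : Fin (N + 1) → ℝ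
  mono : StrictMono pt
  left : pt 0 = 0
  right : pt (Fin.last N) = 1

namespace Mesh

variable {N : ℕ}

/-- The left endpoint `x_{j-1}` of the `j`-th cell `I_j`. -/
def xl (m : Mesh N) (j : Fin N) : ℝ := m.pt j.castSucc

/-- The right endpoint `x_j` of the `j`-th cell `I_j`. -/
def xr (m : Mesh N) (j : Fin N) : ℝ := m.pt j.succ

/-- The width `h_j` of the `j`-th cell. -/
def width (m : Mesh N) (j : Fin N) : ℝ := m.xr j - m.xl j

end Mesh

/-- `f` coincides (everywhere) with a polynomial of degree at most `p`. -/
def IsPolyDeg (f : ℝ → ℝ) (p : ℕ) : Prop :=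
  ∃ q : Polynomial ℝ, q.natDegree ≤ p ∧ ∀ t, f t = q.eval t

/-- `D` is the weak derivative of degree `p` of the weak function with interior part `v0`
and boundary values `vl`, `vr` on the cell `(a,b)`. -/
def IsWeakDerivOn (a b : ℝ) (p : ℕ) (v0 : ℝ → ℝ) (vl vr : ℝ) (D : ℝ → ℝ) : Prop :=
  IsPolyDeg D p ∧ ∀ q : Polynomial ℝ, q.natDegree ≤ p →
    (∫ t in a..b, D t * q.eval t) =
      -(∫ t in a..b, v0 t * q.derivative.eval t) + vr * q.eval b - vl * q.eval a

/-- `D` is the (cellwise) weak derivative `D_p v` of the weak function `v = (v0, vb)`. -/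
def IsWeakDeriv {N : ℕ} (m : Mesh N) (p : ℕ) (v0 : Fin N → ℝ → ℝ)
    (vb : Fin (N + 1) → ℝ) (D : Fin N → ℝ → ℝ) : Prop :=
  ∀ j, IsWeakDerivOn (m.xl j) (m.xr j) p (v0 j) (vb j.castSucc) (vb j.succ) (D j)

/-- `D` is the weak convection derivative of degree `p` on the cell `(a,b)`,
with convection coefficient `bb`. -/
def IsWeakConvDerivOn (bb : ℝ → ℝ) (a b : ℝ) (p : ℕ) (v0 : ℝ → ℝ) (vl vr : ℝ)
    (D : ℝ → ℝ) : Prop :=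
  IsPolyDeg D p ∧ ∀ q : Polynomial ℝ, q.natDegree ≤ p →
    (∫ t in a..b, D t * q.eval t) =
      -(∫ t in a..b, v0 t * deriv (fun s => bb s * q.eval s) t)
      + vr * (bb b * q.eval b) - vl * (bb a * q.eval a)

/-- `D` is the (cellwise) weak convection derivative `D_p^c v` of `v = (v0, vb)`. -/
def IsWeakConvDeriv {N : ℕ} (m : Mesh N) (bb : ℝ → ℝ) (p : ℕ) (v0 : Fin N → ℝ → ℝ)
    (vb : Fin (N + 1) → ℝ) (D : Fin N → ℝ → ℝ) : Prop :=
  ∀ j, IsWeakConvDerivOn bb (m.xl j) (m.xr j) p (v0 j) (vb j.castSucc) (vb j.succ) (D j)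

/-- The stabilisation bilinear form `S(u,v)`. -/
def Sform {N : ℕ} (m : Mesh N) (σ : Fin N → ℝ)
    (u0 : Fin N → ℝ → ℝ) (ub : Fin (N + 1) → ℝ)
    (v0 : Fin N → ℝ → ℝ) (vb : Fin (N + 1) → ℝ) : ℝ :=
  ∑ j : Fin N, σ j * ((u0 j (m.xr j) - ub j.succ) * (v0 j (m.xr j) - vb j.succ)
    + (u0 j (m.xl j) - ub j.castSucc) * (v0 j (m.xl j) - vb j.castSucc))

/-- The convection stabilisation bilinear form `S_c(u,v)`. -/
def Scform {N : ℕ} (m : Mesh N) (ε₂ : ℝ) (bb : ℝ → ℝ)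
    (u0 : Fin N → ℝ → ℝ) (ub : Fin (N + 1) → ℝ)
    (v0 : Fin N → ℝ → ℝ) (vb : Fin (N + 1) → ℝ) : ℝ :=
  ∑ j : Fin N, ε₂ * bb (m.xr j) * (u0 j (m.xr j) - ub j.succ) * (v0 j (m.xr j) - vb j.succ)

/-- The squared jump seminorm `|v|_J²`. -/
def Jsemi2 {N : ℕ} (m : Mesh N) (ε₂ : ℝ) (bb : ℝ → ℝ)
    (v0 : Fin N → ℝ → ℝ) (vb : Fin (N + 1) → ℝ) : ℝ :=
  ∑ j : Fin N, (if j.succ = Fin.last N then (1 : ℝ) / 2 else 1) * ε₂ * bb (m.xr j) *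
    (v0 j (m.xr j) - vb j.succ) ^ 2

/-- The squared WG energy norm `|||v|||_p²`, where `Dv` is the weak derivative `D_{p-1} v`. -/
def normP2 {N : ℕ} (m : Mesh N) (ε₁ ε₂ : ℝ) (bb : ℝ → ℝ) (σ : Fin N → ℝ)
    (v0 : Fin N → ℝ → ℝ) (vb : Fin (N + 1) → ℝ) (Dv : Fin N → ℝ → ℝ) : ℝ :=
  ε₁ * (∑ j : Fin N, ∫ t in (m.xl j)..(m.xr j), (Dv j t) ^ 2)
    + (∑ j : Fin N, ∫ t in (m.xl j)..(m.xr j), (v0 j t) ^ 2)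
    + Sform m σ v0 vb v0 vb + Scform m ε₂ bb v0 vb v0 vb + Jsemi2 m ε₂ bb v0 vb

/-- The squared WG norm `|||v|||²` (with the broken classical derivative). -/
def normT2 {N : ℕ} (m : Mesh N) (ε₁ ε₂ : ℝ) (bb : ℝ → ℝ) (σ : Fin N → ℝ)
    (v0 : Fin N → ℝ → ℝ) (vb : Fin (N + 1) → ℝ) : ℝ :=
  ε₁ * (∑ j : Fin N, ∫ t in (m.xl j)..(m.xr j), (deriv (v0 j) t) ^ 2)
    + (∑ j : Fin N, ∫ t in (m.xl j)..(m.xr j), (v0 j t) ^ 2)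
    + Sform m σ v0 vb v0 vb + Scform m ε₂ bb v0 vb v0 vb + Jsemi2 m ε₂ bb v0 vb

/-- The WG bilinear form `A_p(u,v)`; `Du = D_{p-1}u`, `Dcu = D_p^c u`, `Dv = D_{p-1}v`. -/
def Aform {N : ℕ} (m : Mesh N) (ε₁ ε₂ : ℝ) (bb rr : ℝ → ℝ) (σ : Fin N → ℝ)
    (u0 : Fin N → ℝ → ℝ) (ub : Fin (N + 1) → ℝ) (Du Dcu : Fin N → ℝ → ℝ)
    (v0 : Fin N → ℝ → ℝ) (vb : Fin (N + 1) → ℝ) (Dv : Fin N → ℝ → ℝ) : ℝ :=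
  ε₁ * (∑ j : Fin N, ∫ t in (m.xl j)..(m.xr j), Du j t * Dv j t)
    + ε₂ * (∑ j : Fin N, ∫ t in (m.xl j)..(m.xr j), Dcu j t * v0 j t)
    + (∑ j : Fin N, ∫ t in (m.xl j)..(m.xr j), rr t * u0 j t * v0 j t)
    + Sform m σ u0 ub v0 vb + Scform m ε₂ bb u0 ub v0 vb

/-- `u` solves the two-parameter singularly perturbed boundary-value problem
`-ε₁ u'' + ε₂ b u' + r u = f` on `(0,1)`, `u(0) = u(1) = 0`. -/
def SolvesBVP (ε₁ ε₂ : ℝ) (bb rr ff u : ℝ → ℝ) : Prop :=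
  u 0 = 0 ∧ u 1 = 0 ∧
    ∀ x ∈ Set.Icc (0 : ℝ) 1,
      -ε₁ * deriv (deriv u) x + ε₂ * bb x * deriv u x + rr x * u x = ff x

/-- `P` is the interpolant `I y` of `y` on the cell `(a,b)`. -/
def IsInterpOn (a b : ℝ) (p : ℕ) (y P : ℝ → ℝ) : Prop :=
  IsPolyDeg P p ∧ P a = y a ∧ P b = y b ∧
    ∀ q : Polynomial ℝ, q.natDegree ≤ p →
      (∫ t in a..b, (deriv P t - deriv y t) * q.derivative.eval t) = 0

/-- `P` is the (cellwise) interpolant `I y` of `y` on the mesh `m`. -/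
def IsInterp {N : ℕ} (m : Mesh N) (p : ℕ) (y : ℝ → ℝ) (P : Fin N → ℝ → ℝ) : Prop :=
  ∀ j, IsInterpOn (m.xl j) (m.xr j) p y (P j)

/-- Glue cellwise functions into a single function on `I` (cells taken left-closed). -/
def glue {N : ℕ} (m : Mesh N) (v0 : Fin N → ℝ → ℝ) : ℝ → ℝ :=
  fun t => ∑ j : Fin N, Set.indicator (Set.Ico (m.xl j) (m.xr j)) (v0 j) t

/-- The standard penalty parameters `σ_j = ε₁ p² / h_j`. -/
def stdPen {N : ℕ} (m : Mesh N) (ε₁ : ℝ) (p : ℕ) : Fin N → ℝ :=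
  fun j => ε₁ * (p : ℝ) ^ 2 / m.width j

/-- Membership of the interior part in the broken Sobolev space `H¹(ω)`. -/
def MemM {N : ℕ} (m : Mesh N) (v0 : Fin N → ℝ → ℝ) : Prop :=
  ∀ j, DifferentiableOn ℝ (v0 j) (Set.Icc (m.xl j) (m.xr j))

/-- `(up0, upb)`, with weak derivatives `Du = D_{p-1} u_p` and `Dcu = D_p^c u_p`, is a
weak Galerkin solution of degree `p` on the mesh `m`. -/
def IsWGsol {N : ℕ} (m : Mesh N) (ε₁ ε₂ : ℝ) (bb rr ff : ℝ → ℝ) (p : ℕ)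
    (up0 : Fin N → ℝ → ℝ) (upb : Fin (N + 1) → ℝ) (Du Dcu : Fin N → ℝ → ℝ) : Prop :=
  (∀ j, IsPolyDeg (up0 j) p) ∧ upb 0 = 0 ∧ upb (Fin.last N) = 0 ∧
    IsWeakDeriv m (p - 1) up0 upb Du ∧ IsWeakConvDeriv m bb p up0 upb Dcu ∧
    ∀ (w0 : Fin N → ℝ → ℝ) (wb : Fin (N + 1) → ℝ),
      (∀ j, IsPolyDeg (w0 j) p) → wb 0 = 0 → wb (Fin.last N) = 0 →
      ∀ Dw : Fin N → ℝ → ℝ, IsWeakDeriv m (p - 1) w0 wb Dw →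
        Aform m ε₁ ε₂ bb rr (stdPen m ε₁ p) up0 upb Du Dcu w0 wb Dw
          = ∑ j : Fin N, ∫ t in (m.xl j)..(m.xr j), ff t * w0 j t

/-- Broken `L²` norm over the mesh of a cellwise-given function. -/
def brokenL2 {N : ℕ} (m : Mesh N) (f : Fin N → ℝ → ℝ) : ℝ :=
  Real.sqrt (∑ j : Fin N, ∫ t in (m.xl j)..(m.xr j), (f j t) ^ 2)

/-- `L²(a,b)` norm. -/
def intL2 (a b : ℝ) (f : ℝ → ℝ) : ℝ := Real.sqrt (∫ t in a..b, (f t) ^ 2)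

/-- Analyticity of the data: `‖g⁽ⁿ⁾‖_{∞,[0,1]} ≲ n! γ_g^n`. -/
def AnalyticData (g : ℝ → ℝ) : Prop :=
  ContDiff ℝ (⊤ : ℕ∞) g ∧ ∃ C γg : ℝ, 0 < C ∧ 0 < γg ∧
    ∀ n : ℕ, ∀ x ∈ Set.Icc (0 : ℝ) 1, |iteratedDeriv n g x| ≤ C * n.factorial * γg ^ n

/-- The characteristic values `μ₀` (`sgn = -1`) and `μ₁` (`sgn = 1`). -/
def muVal (sgn ε₁ ε₂ : ℝ) (bb rr : ℝ → ℝ) : ℝ :=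
  sInf ((fun x => (sgn * ε₂ * bb x + Real.sqrt (ε₂ ^ 2 * (bb x) ^ 2 + 4 * ε₁ * rr x))
      / (2 * ε₁)) '' Set.Icc 0 1)

def mu0 (ε₁ ε₂ : ℝ) (bb rr : ℝ → ℝ) : ℝ := muVal (-1) ε₁ ε₂ bb rr

def mu1 (ε₁ ε₂ : ℝ) (bb rr : ℝ → ℝ) : ℝ := muVal 1 ε₁ ε₂ bb rr

/-- The Spectral Boundary Layer mesh in the reaction-convection-diffusion regime. -/
def IsSBLmeshRCD {N : ℕ} (κ : ℝ) (p : ℕ) (ε₁ ε₂ : ℝ) (bb rr : ℝ → ℝ) (m : Mesh N) : Prop :=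
  ((1 : ℝ) / 2 ≤ κ * p * ε₁ ∧ N = 1) ∨
    (κ * p * ε₂ < 1 / 2 ∧ N = 3 ∧
      m.pt 1 = κ * p / mu0 ε₁ ε₂ bb rr ∧ m.pt 2 = 1 - κ * p / mu1 ε₁ ε₂ bb rr)

/-- The Spectral Boundary Layer mesh in the reaction-diffusion regime. -/
def IsSBLmeshRD {N : ℕ} (κ : ℝ) (p : ℕ) (ε₁ : ℝ) (m : Mesh N) : Prop :=
  ((1 : ℝ) / 2 ≤ κ * p * ε₁ ∧ N = 1) ∨
    (κ * p * ε₁ < 1 / 2 ∧ N = 3 ∧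
      m.pt 1 = κ * p * Real.sqrt ε₁ ∧ m.pt 2 = 1 - κ * p * Real.sqrt ε₁)

/-- The Spectral Boundary Layer mesh in the convection-diffusion regime. -/
def IsSBLmeshCD {N : ℕ} (κ : ℝ) (p : ℕ) (ε₁ : ℝ) (m : Mesh N) : Prop :=
  ((1 : ℝ) / 2 ≤ κ * p * ε₁ ∧ N = 1) ∨
    (κ * p * ε₁ ≤ 1 / 2 ∧ N = 2 ∧ m.pt 1 = 1 - κ * p * ε₁)

/-!
The error is compared with a piecewise polynomial interpolant `Q` of `u` at the mesh points.

*Stability.* Testing the Galerkin equation with the discrete error `Q - u_p` and using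
`r - ε₂ b' / 2 ≥ γ` bounds the energy norm of `u - u_p` by `p` times the size of `u - Q` and
`ε₁^{1/2} (u - Q)'`. The constants are uniform because `ε₂² ≤ ε₁`. The factor `p`
comes from the trace inequality `h_j |q(x_j)|² ≤ 2 (n + 1)⁴ ‖q‖²` for polynomials of degree `n`,
read off from the Chebyshev polynomials of the second kind, against the penalty `ε₁ p² / h_j`.

*Approximation.* Substituting `z ↦ z ∘ cos`, Parseval's identity gains a factor `1 / p` for each
derivative, so that a function with `|y⁽ᵏ⁾| ≤ A Λᵏ` for `k ≤ n + 2` is approximated by polynomials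
of degree `p ≥ 2 n + 2` on a cell of length `h` up to a power of `p` times `(h Λ / p)ⁿ`. This is
exponentially small when `n` is a small multiple of `p` and `h Λ ≤ p / e`.

*Regularity.* With `ε = ε₁^{1/2}`, the equation gives such bounds for `u` with `Λ ~ 1 / ε + n`,
which serves cells of length at most `κ p ε`. In the middle of the interval a truncated formal
solution `w` of `-ε² y'' + ε₂ b y' + r y = f` is used. It varies on the scale `Λ ~ n` and leaves a
residual of size `e⁻ⁿ`. By the maximum principle `u - w` is bounded by this residual plus boundary
layers decaying like `exp (-c x / ε)`, which are of size `exp (-c κ p)` outside the layer cells.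
-/

section Jackson

open Real Polynomial

lemma exists_derivative_eq_natDegree_le (q : ℝ[X]) :
    ∃ P : ℝ[X], derivative P = q ∧ P.natDegree ≤ q.natDegree + 1 := by
  refine ⟨∑ i ∈ Finset.range (q.natDegree + 1), C (q.coeff i / (i + 1)) * X ^ (i + 1), ?_, ?_⟩
  · conv_rhs => rw [q.as_sum_range_C_mul_X_pow]
    rw [derivative_sum]
    refine Finset.sum_congr rfl fun i _ => ?_
    have hi : (i : ℝ) + 1 ≠ 0 := by positivity
    rw [derivative_C_mul_X_pow, Nat.cast_succ, div_mul_cancel₀ _ hi, Nat.succ_sub_one]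
  · refine natDegree_sum_le_of_forall_le _ _ fun i hi => (natDegree_C_mul_X_pow_le _ _).trans ?_
    exact Nat.succ_le_of_lt (Finset.mem_range.1 hi)

lemma integral_cos_int_mul_eq_zero {n : ℤ} (hn : n ≠ 0) {a b : ℝ} (ha : sin (n * a) = 0)
    (hb : sin (n * b) = 0) : ∫ θ in a..b, cos (n * θ) = 0 := by
  rw [intervalIntegral.integral_comp_mul_left (fun x => cos x) (by exact_mod_cast hn),
    integral_cos, ha, hb, sub_zero, smul_zero]

lemma integral_cos_mul_cos_of_ne {n m : ℕ} (h : n ≠ m) :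
    ∫ θ in (-π)..π, cos (n * θ) * cos (m * θ) = 0 := by
  have product_to_sum : ∀ θ : ℝ, cos (n * θ) * cos (m * θ)
      = (cos (((n : ℤ) - m : ℤ) * θ) + cos (((n : ℤ) + m : ℤ) * θ)) / 2 := by
    intro θ; push_cast; rw [sub_mul, add_mul, cos_sub, cos_add]; ring
  simp_rw [product_to_sum]
  rw [intervalIntegral.integral_div, intervalIntegral.integral_add
    (Continuous.intervalIntegrable (by fun_prop) _ _)
    (Continuous.intervalIntegrable (by fun_prop) _ _),
    integral_cos_int_mul_eq_zero (by lia)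
      (by simp only [mul_neg, sin_neg, sin_int_mul_pi, neg_zero]) (sin_int_mul_pi _),
    integral_cos_int_mul_eq_zero (by lia)
      (by simp only [mul_neg, sin_neg, sin_int_mul_pi, neg_zero]) (sin_int_mul_pi _), add_zero,
    zero_div]

lemma integral_cos_mul_cos_self_pos (n : ℕ) :
    0 < ∫ θ in (-π)..π, cos (n * θ) * cos (n * θ) :=
  intervalIntegral.integral_pos (neg_lt_self pi_pos) (by fun_prop) (fun _ _ => mul_self_nonneg _)
    ⟨0, ⟨by linarith [pi_pos], pi_pos.le⟩, by simp⟩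

lemma integral_neg_eq_zero_of_odd {f : ℝ → ℝ} (hf : f.Odd) (a : ℝ) : ∫ x in (-a)..a, f x = 0 := by
  have h := intervalIntegral.integral_comp_neg (a := -a) (b := a) f
  simp only [hf _, intervalIntegral.integral_neg, neg_neg] at h
  linarith

lemma fourierCoeffOn_ofReal_of_even {F : ℝ → ℝ} (hF : F.Even) (hFc : Continuous F) (n : ℤ) :
    fourierCoeffOn (neg_lt_self pi_pos) (fun x => (F x : ℂ)) n
      = ((1 / (2 * π) * ∫ θ in (-π)..π, F θ * cos (n * θ) : ℝ) : ℂ) := by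
  have cos_sub_sin : ∀ x : ℝ, fourier (-n) (x : AddCircle (π - -π)) • (F x : ℂ)
      = ((F x * cos (n * x) : ℝ) : ℂ) - Complex.I * ((F x * sin (n * x) : ℝ) : ℂ) := by
    intro x
    have exponent : 2 * π * Complex.I * ((-n : ℤ) : ℂ) * (x : ℂ) / ((π - -π : ℝ) : ℂ)
        = ((-(n * x) : ℝ) : ℂ) * Complex.I := by
      have : (π : ℂ) ≠ 0 := by exact_mod_cast pi_ne_zero
      push_cast; field_simp; ring
    rw [fourier_coe_apply, exponent, Complex.exp_mul_I, ← Complex.ofReal_cos,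
      ← Complex.ofReal_sin, cos_neg, sin_neg, smul_eq_mul]
    push_cast; ring
  have sine_part : ∫ x in (-π)..π, F x * sin (n * x) = 0 :=
    integral_neg_eq_zero_of_odd (fun x => by rw [hF x, mul_neg, sin_neg, mul_neg]) π
  rw [fourierCoeffOn_eq_integral]
  simp_rw [cos_sub_sin]
  rw [intervalIntegral.integral_sub (Continuous.intervalIntegrable (by fun_prop) _ _)
    (Continuous.intervalIntegrable (by fun_prop) _ _), intervalIntegral.integral_const_mul,
    intervalIntegral.integral_ofReal, intervalIntegral.integral_ofReal, sine_part,
    Complex.ofReal_zero, mul_zero, sub_zero, sub_neg_eq_add, ← two_mul, Complex.real_smul,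
    ← Complex.ofReal_mul]

lemma norm_fourierCoeffOn_deriv {a b : ℝ} (hab : a < b) {F F' : ℝ → ℝ}
    (hF : ∀ x, HasDerivAt F (F' x) x) (hF' : Continuous F') (hper : F a = F b) {n : ℤ}
    (hn : n ≠ 0) :
    ‖fourierCoeffOn hab (fun x => (F' x : ℂ)) n‖
      = 2 * π / (b - a) * |(n : ℝ)| * ‖fourierCoeffOn hab (fun x => (F x : ℂ)) n‖ := by
  have hba : 0 < b - a := sub_pos.2 hab
  have hn' : |(n : ℝ)| ≠ 0 := by simpa using hn
  rw [fourierCoeffOn_of_hasDerivAt hab (f := fun x => (F x : ℂ)) (f' := fun x => (F' x : ℂ))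
    hn (fun x _ => (hF x).ofReal_comp) (Continuous.intervalIntegrable (by fun_prop) _ _), hper]
  have hlen : ‖(b : ℂ) - a‖ = b - a := by
    rw [← Complex.ofReal_sub, Complex.norm_real, norm_of_nonneg hba.le]
  simp only [sub_self, mul_zero, zero_sub, norm_mul, norm_neg, norm_div, norm_one, hlen,
    Complex.norm_real, norm_of_nonneg pi_pos.le, Complex.norm_I, Complex.norm_intCast,
    Complex.norm_ofNat]
  field_simp

lemma hasSum_sq_norm_fourierCoeffOn_of_continuous {a b : ℝ} (hab : a < b) {F : ℝ → ℝ}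
    (hF : Continuous F) :
    HasSum (fun n => ‖fourierCoeffOn hab (fun x => (F x : ℂ)) n‖ ^ 2)
      ((b - a)⁻¹ * ∫ x in a..b, F x ^ 2) := by
  have hFc : Continuous fun x => (F x : ℂ) := by fun_prop
  obtain ⟨M, hM⟩ := (isCompact_Icc (a := a) (b := b)).bddAbove_image hFc.norm.continuousOn
  have hL2 : MemLp (fun x => (F x : ℂ)) 2 (volume.restrict (Ioc a b)) :=
    MemLp.of_bound hFc.aestronglyMeasurable M ((ae_restrict_iff' measurableSet_Ioc).2
      (.of_forall fun x hx => hM ⟨x, Ioc_subset_Icc_self hx, rfl⟩))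
  simpa only [smul_eq_mul, Complex.norm_real, norm_eq_abs, sq_abs]
    using hasSum_sq_fourierCoeffOn hab hL2

/- Parseval turns the estimate into a comparison of Fourier coefficients; the `n`-th coefficient of
`F'` is `2πn / (b - a)` times that of `F`. -/
theorem sq_mul_integral_sq_le_of_fourierCoeffOn_eq {a b : ℝ} (hab : a < b) {F F' H : ℝ → ℝ}
    (hF : ∀ x, HasDerivAt F (F' x) x) (hF' : Continuous F') (hper : F a = F b)
    (hH : Continuous H) (p : ℕ)
    (hlow : ∀ n : ℤ, n.natAbs ≤ p → fourierCoeffOn hab (fun x => (H x : ℂ)) n = 0)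
    (hhigh : ∀ n : ℤ, p < n.natAbs → fourierCoeffOn hab (fun x => (H x : ℂ)) n
      = fourierCoeffOn hab (fun x => (F x : ℂ)) n) :
    (2 * π / (b - a) * ((p : ℝ) + 1)) ^ 2 * ∫ x in a..b, H x ^ 2 ≤ ∫ x in a..b, F' x ^ 2 := by
  have hba : 0 < b - a := sub_pos.2 hab
  have coeff_le : ∀ n : ℤ, (2 * π / (b - a) * ((p : ℝ) + 1)) ^ 2
        * ‖fourierCoeffOn hab (fun x => (H x : ℂ)) n‖ ^ 2
      ≤ ‖fourierCoeffOn hab (fun x => (F' x : ℂ)) n‖ ^ 2 := by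
    intro n
    rcases le_or_gt n.natAbs p with hn | hn
    · rw [hlow n hn, norm_zero, zero_pow two_ne_zero, mul_zero]
      positivity
    · have hn0 : n ≠ 0 := by rintro rfl; simp at hn
      have hpn : (p : ℝ) + 1 ≤ |(n : ℝ)| := by
        rw [← Int.cast_abs, ← Nat.cast_natAbs]
        exact_mod_cast hn
      rw [norm_fourierCoeffOn_deriv hab hF hF' hper hn0, hhigh n hn, ← mul_pow]
      gcongr
  have h := hasSum_le coeff_le
    ((hasSum_sq_norm_fourierCoeffOn_of_continuous hab hH).mul_left _)
    (hasSum_sq_norm_fourierCoeffOn_of_continuous hab hF')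
  rw [mul_left_comm] at h
  exact le_of_mul_le_mul_left h (inv_pos.2 hba)

/-- The `n`-th coefficient of `z` in its expansion in Chebyshev polynomials of the first kind,
written as an integral over the angle. -/
def chebyshevCoeff (z : ℝ → ℝ) (n : ℕ) : ℝ :=
  (∫ θ in (-π)..π, z (cos θ) * cos (n * θ)) / ∫ θ in (-π)..π, cos (n * θ) * cos (n * θ)

/-- The Chebyshev expansion of `z` on `[-1, 1]`, truncated after the term of degree `p`. -/
def chebyshevPartialSum (z : ℝ → ℝ) (p : ℕ) : ℝ[X] :=
  ∑ n ∈ Finset.range (p + 1), C (chebyshevCoeff z n) * Chebyshev.T ℝ n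

lemma natDegree_chebyshevPartialSum_le (z : ℝ → ℝ) (p : ℕ) :
    (chebyshevPartialSum z p).natDegree ≤ p := by
  refine natDegree_sum_le_of_forall_le _ _ fun n hn => (natDegree_C_mul_le _ _).trans ?_
  rw [Chebyshev.natDegree_T, Int.natAbs_natCast]
  exact Nat.lt_succ_iff.1 (Finset.mem_range.1 hn)

lemma eval_cos_chebyshevPartialSum (z : ℝ → ℝ) (p : ℕ) (θ : ℝ) :
    (chebyshevPartialSum z p).eval (cos θ)
      = ∑ n ∈ Finset.range (p + 1), chebyshevCoeff z n * cos (n * θ) := by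
  simp only [chebyshevPartialSum, eval_finsetSum, eval_mul, eval_C, Chebyshev.T_real_cos,
    Int.cast_natCast]

lemma integral_sub_chebyshevPartialSum_mul_cos {z : ℝ → ℝ} (hz : Continuous z) (p m : ℕ) :
    ∫ θ in (-π)..π, (z (cos θ) - (chebyshevPartialSum z p).eval (cos θ)) * cos (m * θ)
      = if m ≤ p then 0 else ∫ θ in (-π)..π, z (cos θ) * cos (m * θ) := by
  simp_rw [eval_cos_chebyshevPartialSum, sub_mul, Finset.sum_mul, mul_assoc]
  rw [intervalIntegral.integral_sub (Continuous.intervalIntegrable (by fun_prop) _ _)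
    (Continuous.intervalIntegrable (by fun_prop) _ _), intervalIntegral.integral_finsetSum
    (fun n _ => Continuous.intervalIntegrable (by fun_prop) _ _)]
  simp_rw [intervalIntegral.integral_const_mul]
  split_ifs with hm
  · rw [Finset.sum_eq_single_of_mem m (Finset.mem_range.2 (Nat.lt_succ_of_le hm))
      (fun n _ hn => by rw [integral_cos_mul_cos_of_ne hn, mul_zero]), chebyshevCoeff,
      div_mul_cancel₀ _ (integral_cos_mul_cos_self_pos m).ne', sub_self]
  · rw [Finset.sum_eq_zero, sub_zero]
    intro n hn
    have : n ≠ m := by have := Finset.mem_range.1 hn; lia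
    rw [integral_cos_mul_cos_of_ne this, mul_zero]

theorem sq_mul_integral_sq_sub_chebyshevPartialSum_le {z z' : ℝ → ℝ}
    (hz : ∀ x, HasDerivAt z (z' x) x) (hz' : Continuous z') (p : ℕ) :
    ((p : ℝ) + 1) ^ 2
        * ∫ θ in (-π)..π, (z (cos θ) - (chebyshevPartialSum z p).eval (cos θ)) ^ 2
      ≤ ∫ θ in (-π)..π, z' (cos θ) ^ 2 := by
  have hzc : Continuous z := continuous_iff_continuousAt.2 fun x => (hz x).continuousAt
  have hcoeff : ∀ n : ℤ, fourierCoeffOn (neg_lt_self pi_pos)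
      (fun θ => ((z (cos θ) - (chebyshevPartialSum z p).eval (cos θ) : ℝ) : ℂ)) n
      = if n.natAbs ≤ p then 0
        else fourierCoeffOn (neg_lt_self pi_pos) (fun θ => (z (cos θ) : ℂ)) n := by
    intro n
    have cos_natAbs : ∀ θ : ℝ, cos (n * θ) = cos (n.natAbs * θ) := by
      intro θ
      rcases n.natAbs_eq with h | h <;> rw [h] <;> simp
    rw [fourierCoeffOn_ofReal_of_even (fun θ => by simp only [cos_neg]) (by fun_prop),
      fourierCoeffOn_ofReal_of_even (F := fun θ => z (cos θ)) (fun θ => by simp only [cos_neg])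
        (by fun_prop)]
    simp_rw [cos_natAbs]
    rw [integral_sub_chebyshevPartialSum_mul_cos hzc]
    split_ifs <;> simp
  have h := sq_mul_integral_sq_le_of_fourierCoeffOn_eq (neg_lt_self pi_pos)
    (F := fun θ => z (cos θ)) (F' := fun θ => z' (cos θ) * -sin θ)
    (H := fun θ => z (cos θ) - (chebyshevPartialSum z p).eval (cos θ))
    (fun θ => (hz (cos θ)).comp θ (hasDerivAt_cos θ)) (by fun_prop) (by simp) (by fun_prop) p
    (fun n hn => by rw [hcoeff, if_pos hn]) (fun n hn => by rw [hcoeff, if_neg (by lia)])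
  rw [sub_neg_eq_add, ← two_mul, div_self (by positivity), one_mul] at h
  refine h.trans (intervalIntegral.integral_mono_on (by linarith [pi_pos])
    (Continuous.intervalIntegrable (by fun_prop) _ _)
    (Continuous.intervalIntegrable (by fun_prop) _ _) fun θ _ => ?_)
  rw [mul_pow, neg_sq]
  exact mul_le_of_le_one_right (sq_nonneg _) (sin_sq_le_one θ)

/- Apply the first-order estimate to `y` minus an antiderivative of an approximation of `y'`. -/
theorem exists_polynomial_pow_mul_integral_sq_sub_le {k p : ℕ} {y : ℝ → ℝ} {A : ℝ}
    (hkp : k ≤ p) (hy : ContDiff ℝ k y) (hA : ∀ x ∈ Icc (-1 : ℝ) 1, |iteratedDeriv k y x| ≤ A) :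
    ∃ s : ℝ[X], s.natDegree ≤ p ∧
      ((p : ℝ) + 1 - k) ^ (2 * k) * ∫ θ in (-π)..π, (y (cos θ) - s.eval (cos θ)) ^ 2
        ≤ 2 * π * A ^ 2 := by
  induction k generalizing p y with
  | zero =>
    refine ⟨0, by simp, ?_⟩
    have hyc := hy.continuous
    have hle : ∫ θ in (-π)..π, y (cos θ) ^ 2 ≤ ∫ θ in (-π)..π, A ^ 2 := by
      refine intervalIntegral.integral_mono_on (by linarith [pi_pos])
        (Continuous.intervalIntegrable (by fun_prop) _ _) (by simp) fun θ _ => ?_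
      have h := hA _ (cos_mem_Icc θ)
      exact sq_le_sq' (neg_le_of_abs_le h) (le_of_abs_le h)
    simpa [two_mul] using hle
  | succ k ih =>
    obtain ⟨q, rfl⟩ : ∃ q, p = q + 1 := ⟨p - 1, by lia⟩
    obtain ⟨hy0, -, hy'⟩ := contDiff_succ_iff_deriv.1 (by exact_mod_cast hy : ContDiff ℝ (k + 1) y)
    obtain ⟨s, hs, hsb⟩ := ih (by lia : k ≤ q) hy' (by simpa [iteratedDeriv_succ'] using hA)
    obtain ⟨P, hP, hPd⟩ := exists_derivative_eq_natDegree_le s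
    set t := chebyshevPartialSum (fun x => y x - P.eval x) (q + 1)
    have ht := sq_mul_integral_sq_sub_chebyshevPartialSum_le (z := fun x => y x - P.eval x)
      (z' := fun x => deriv y x - s.eval x)
      (fun x => (hy0 x).hasDerivAt.sub (hP ▸ P.hasDerivAt x))
      (hy'.continuous.sub s.continuous) (q + 1)
    refine ⟨P + t, (natDegree_add_le _ _).trans
      (max_le (by lia) (natDegree_chebyshevPartialSum_le _ _)), ?_⟩
    simp_rw [eval_add, ← sub_sub]
    have hkq : (k : ℝ) ≤ q := by exact_mod_cast (by lia : k ≤ q)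
    calc _ = ((q : ℝ) + 1 - k) ^ (2 * k) * (((q : ℝ) + 1 - k) ^ 2
          * ∫ θ in (-π)..π, (y (cos θ) - P.eval (cos θ) - t.eval (cos θ)) ^ 2) := by
          rw [← mul_assoc, ← pow_add]; push_cast; ring_nf
      _ ≤ ((q : ℝ) + 1 - k) ^ (2 * k) * (((q + 1 : ℕ) + 1 : ℝ) ^ 2
          * ∫ θ in (-π)..π, (y (cos θ) - P.eval (cos θ) - t.eval (cos θ)) ^ 2) := by
          have : 0 ≤ ∫ θ in (-π)..π, (y (cos θ) - P.eval (cos θ) - t.eval (cos θ)) ^ 2 :=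
            intervalIntegral.integral_nonneg (by linarith [pi_pos]) fun _ _ => sq_nonneg _
          have : (0 : ℝ) ≤ (q : ℝ) + 1 - k := by linarith
          gcongr
          push_cast
          linarith [k.cast_nonneg (α := ℝ)]
      _ ≤ _ := (mul_le_mul_of_nonneg_left ht ((even_two_mul k).pow_nonneg _)).trans hsb

end Jackson

section PolynomialApproximation

open Real Polynomial

lemma integral_neg_one_one_eq_integral_cos {f : ℝ → ℝ} (hf : Continuous f) :
    ∫ x in (-1 : ℝ)..1, f x = ∫ θ in (0 : ℝ)..π, f (cos θ) * sin θ := by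
  have h := intervalIntegral.integral_comp_mul_deriv (a := 0) (b := π)
    (fun x _ => hasDerivAt_cos x) (by fun_prop) hf
  simp only [Function.comp_apply, mul_neg, intervalIntegral.integral_neg, cos_zero, cos_pi] at h
  rw [intervalIntegral.integral_symm, ← h, neg_neg]

lemma integral_neg_one_one_le_integral_cos {f : ℝ → ℝ} (hf : Continuous f) (hf0 : 0 ≤ f) :
    ∫ x in (-1 : ℝ)..1, f x ≤ ∫ θ in (-π)..π, f (cos θ) := by
  have hint : ∀ c d, IntervalIntegrable (fun θ => f (cos θ)) volume c d := fun c d =>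
    (hf.comp continuous_cos).intervalIntegrable c d
  calc ∫ x in (-1 : ℝ)..1, f x = ∫ θ in (0 : ℝ)..π, f (cos θ) * sin θ :=
        integral_neg_one_one_eq_integral_cos hf
    _ ≤ ∫ θ in (0 : ℝ)..π, f (cos θ) :=
        intervalIntegral.integral_mono_on pi_pos.le
          (Continuous.intervalIntegrable (by fun_prop) _ _) (hint _ _)
          fun θ _ => mul_le_of_le_one_right (hf0 _) (sin_le_one θ)
    _ ≤ (∫ θ in (-π)..0, f (cos θ)) + ∫ θ in (0 : ℝ)..π, f (cos θ) :=
        le_add_of_nonneg_left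
          (intervalIntegral.integral_nonneg (by linarith [pi_pos]) fun θ _ => hf0 _)
    _ = ∫ θ in (-π)..π, f (cos θ) :=
        intervalIntegral.integral_add_adjacent_intervals (hint _ _) (hint _ _)

lemma sq_integral_mul_le {a b : ℝ} (hab : a ≤ b) {f g : ℝ → ℝ} (hf : Continuous f)
    (hg : Continuous g) :
    (∫ x in a..b, f x * g x) ^ 2 ≤ (∫ x in a..b, f x ^ 2) * ∫ x in a..b, g x ^ 2 := by
  have hquad : ∀ t : ℝ, 0 ≤ (∫ x in a..b, g x ^ 2) * (t * t) + (2 * ∫ x in a..b, f x * g x) * t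
      + ∫ x in a..b, f x ^ 2 := by
    intro t
    calc 0 ≤ ∫ x in a..b, (f x + t * g x) ^ 2 :=
          intervalIntegral.integral_nonneg hab fun _ _ => sq_nonneg _
      _ = ∫ x in a..b, ((t * t) * g x ^ 2 + (2 * t) * (f x * g x) + f x ^ 2) := by
          congr 1 with x; ring
      _ = _ := by
          rw [intervalIntegral.integral_add (Continuous.intervalIntegrable (by fun_prop) _ _)
              (Continuous.intervalIntegrable (by fun_prop) _ _),
            intervalIntegral.integral_add (Continuous.intervalIntegrable (by fun_prop) _ _)
              (Continuous.intervalIntegrable (by fun_prop) _ _),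
            intervalIntegral.integral_const_mul, intervalIntegral.integral_const_mul]
          ring
  have hdiscrim := discrim_le_zero hquad
  rw [discrim] at hdiscrim
  linarith

lemma sq_integral_abs_le {a b : ℝ} (hab : a ≤ b) {f : ℝ → ℝ} (hf : Continuous f) :
    (∫ x in a..b, |f x|) ^ 2 ≤ (b - a) * ∫ x in a..b, f x ^ 2 := by
  have h := sq_integral_mul_le hab (continuous_const (y := (1 : ℝ))) hf.abs
  simpa only [one_mul, one_pow, sq_abs, intervalIntegral.integral_const, smul_eq_mul, mul_one]
    using h

lemma exists_polynomial_pow_mul_integral_abs_sub_le {k p : ℕ} {y : ℝ → ℝ} {A : ℝ}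
    (hkp : k ≤ p) (hy : ContDiff ℝ k y) (hA : ∀ x ∈ Icc (-1 : ℝ) 1, |iteratedDeriv k y x| ≤ A) :
    ∃ s : ℝ[X], s.natDegree ≤ p ∧
      ((p : ℝ) + 1 - k) ^ k * ∫ x in (-1 : ℝ)..1, |y x - s.eval x| ≤ 2 * π * A := by
  obtain ⟨s, hs, hsA⟩ := exists_polynomial_pow_mul_integral_sq_sub_le hkp hy hA
  have hA0 : 0 ≤ A := (abs_nonneg _).trans (hA 0 (by norm_num))
  have hq : 0 ≤ (p : ℝ) + 1 - k := by
    have : (k : ℝ) ≤ p := by exact_mod_cast hkp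
    linarith
  have hyc := hy.continuous
  refine ⟨s, hs, (mul_le_mul_of_nonneg_left (integral_neg_one_one_le_integral_cos
    (by fun_prop) fun x => abs_nonneg (y x - s.eval x)) (by positivity)).trans ?_⟩
  refine le_of_sq_le_sq ?_ (by positivity)
  have hL1 := sq_integral_abs_le (by linarith [pi_pos] : -π ≤ π)
    (f := fun θ => y (cos θ) - s.eval (cos θ)) (by fun_prop)
  calc (((p : ℝ) + 1 - k) ^ k * ∫ θ in (-π)..π, |y (cos θ) - s.eval (cos θ)|) ^ 2
      = ((p : ℝ) + 1 - k) ^ (2 * k) * (∫ θ in (-π)..π, |y (cos θ) - s.eval (cos θ)|) ^ 2 := by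
        rw [mul_pow, ← pow_mul, mul_comm k 2]
    _ ≤ ((p : ℝ) + 1 - k) ^ (2 * k)
        * ((π - -π) * ∫ θ in (-π)..π, (y (cos θ) - s.eval (cos θ)) ^ 2) := by gcongr
    _ = 2 * π * (((p : ℝ) + 1 - k) ^ (2 * k)
        * ∫ θ in (-π)..π, (y (cos θ) - s.eval (cos θ)) ^ 2) := by ring
    _ ≤ 2 * π * (2 * π * A ^ 2) := by gcongr
    _ = (2 * π * A) ^ 2 := by ring

lemma iteratedDeriv_comp_mul_add {k : ℕ} {y : ℝ → ℝ} (hy : ContDiff ℝ k y) (c m s : ℝ) :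
    iteratedDeriv k (fun s => y (c * s + m)) s = c ^ k * iteratedDeriv k y (c * s + m) := by
  have h := congrFun (iteratedDeriv_comp_const_mul (f := fun x => y (x + m))
    (hy.comp (by fun_prop)) c) s
  rwa [iteratedDeriv_comp_add_const] at h

lemma natDegree_comp_linear_le (s : ℝ[X]) (c d : ℝ) :
    (s.comp (C c * X + C d)).natDegree ≤ s.natDegree := by
  rw [natDegree_comp]
  exact mul_le_of_le_one_right (Nat.zero_le _) natDegree_linear_le

lemma exists_polynomial_integral_abs_sub_le {a b : ℝ} (hab : a < b) {k p : ℕ} {y : ℝ → ℝ} {A : ℝ}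
    (hkp : k ≤ p) (hy : ContDiff ℝ k y) (hA : ∀ x ∈ Icc a b, |iteratedDeriv k y x| ≤ A) :
    ∃ g : ℝ[X], g.natDegree ≤ p ∧ ∫ x in a..b, |y x - g.eval x|
      ≤ π * (b - a) * ((b - a) / (2 * ((p : ℝ) + 1 - k))) ^ k * A := by
  obtain ⟨c, hc⟩ : ∃ c, c = (b - a) / 2 := ⟨_, rfl⟩
  obtain ⟨m, hm⟩ : ∃ m, m = (a + b) / 2 := ⟨_, rfl⟩
  have hc0 : 0 < c := by rw [hc]; linarith
  have ha : c * -1 + m = a := by rw [hc, hm]; ring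
  have hb : c * 1 + m = b := by rw [hc, hm]; ring
  have hq : 0 < (p : ℝ) + 1 - k := by
    have : (k : ℝ) ≤ p := by exact_mod_cast hkp
    linarith
  have hYA : ∀ s ∈ Icc (-1 : ℝ) 1, |iteratedDeriv k (fun s => y (c * s + m)) s| ≤ c ^ k * A := by
    intro s hs
    rw [iteratedDeriv_comp_mul_add hy, abs_mul, abs_of_pos (pow_pos hc0 k)]
    gcongr
    refine hA _ ⟨?_, ?_⟩
    · rw [← ha]; gcongr; exact hs.1
    · rw [← hb]; gcongr; exact hs.2
  obtain ⟨s, hs, hsA⟩ := exists_polynomial_pow_mul_integral_abs_sub_le hkp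
    (hy.comp (by fun_prop)) hYA
  refine ⟨s.comp (C c⁻¹ * X + C (-(m / c))), (natDegree_comp_linear_le _ _ _).trans hs, ?_⟩
  have hsub := intervalIntegral.mul_integral_comp_mul_add (a := -1) (b := 1)
    (f := fun x => |y x - (s.comp (C c⁻¹ * X + C (-(m / c)))).eval x|) c m
  have heval : ∀ t, (s.comp (C c⁻¹ * X + C (-(m / c)))).eval (c * t + m) = s.eval t := fun t => by
    simp only [eval_comp, eval_add, eval_mul, eval_C, eval_X]
    congr 1; field_simp; ring
  simp only [heval, ha, hb] at hsub
  rw [← hsub]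
  calc c * ∫ t in (-1 : ℝ)..1, |y (c * t + m) - s.eval t|
      ≤ c * (2 * π * (c ^ k * A) / ((p : ℝ) + 1 - k) ^ k) := by
        gcongr
        rw [le_div_iff₀' (by positivity)]
        exact hsA
    _ = π * (2 * c) * (c / ((p : ℝ) + 1 - k)) ^ k * A := by rw [div_pow]; ring
    _ = π * (b - a) * ((b - a) / (2 * ((p : ℝ) + 1 - k))) ^ k * A := by
        rw [show 2 * c = b - a by rw [hc]; ring, ← div_div, ← hc]

/-- The linear interpolant of `y` at `a` and `b`, as a polynomial; it is constant if `a = b`. -/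
def chord (y : ℝ → ℝ) (a b : ℝ) : ℝ[X] := C (slope y a b) * X + C (y a - slope y a b * a)

lemma natDegree_chord_le (y : ℝ → ℝ) (a b : ℝ) : (chord y a b).natDegree ≤ 1 :=
  natDegree_linear_le

lemma derivative_chord (y : ℝ → ℝ) (a b : ℝ) : (chord y a b).derivative = C (slope y a b) := by
  simp [chord]

lemma eval_chord (y : ℝ → ℝ) (a b x : ℝ) :
    (chord y a b).eval x = y a + slope y a b * (x - a) := by
  simp only [chord, eval_add, eval_mul, eval_C, eval_X]
  ring

@[simp]
lemma eval_chord_left (y : ℝ → ℝ) (a b : ℝ) : (chord y a b).eval a = y a := by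
  simp [eval_chord]

@[simp]
lemma eval_chord_right (y : ℝ → ℝ) (a b : ℝ) : (chord y a b).eval b = y b := by
  rw [eval_chord, mul_comm, ← smul_eq_mul, sub_smul_slope (k := ℝ), vsub_eq_sub, add_sub_cancel]

lemma abs_eval_chord_le {y : ℝ → ℝ} {a b x V : ℝ} (hab : a < b) (hx : x ∈ Icc a b)
    (ha : |y a| ≤ V) (hb : |y b| ≤ V) : |(chord y a b).eval x| ≤ V := by
  have hba : 0 < b - a := sub_pos.2 hab
  have hconv : (chord y a b).eval x
      = ((b - x) / (b - a)) • y a + ((x - a) / (b - a)) • y b := by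
    rw [eval_chord, slope_def_field]
    simp only [smul_eq_mul]
    field_simp
    ring
  rw [hconv, abs_le]
  exact convex_Icc (-V) V (abs_le.1 ha) (abs_le.1 hb)
    (div_nonneg (sub_nonneg.2 hx.2) hba.le) (div_nonneg (sub_nonneg.2 hx.1) hba.le)
    (by field_simp; ring)

lemma abs_integral_le_integral_abs_of_subset {a b ξ x : ℝ} {f : ℝ → ℝ} (hf : Continuous f)
    (hξ : ξ ∈ Icc a b) (hx : x ∈ Icc a b) : |∫ t in ξ..x, f t| ≤ ∫ t in a..b, |f t| := by
  refine (intervalIntegral.norm_integral_le_integral_norm_uIoc (f := f)).trans ?_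
  rw [intervalIntegral.integral_of_le (hx.1.trans hx.2)]
  exact setIntegral_mono_set (hf.abs.intervalIntegrable a b).1
    (Filter.Eventually.of_forall fun _ => abs_nonneg _)
    (Ioc_subset_Ioc (le_min hξ.1 hx.1) (max_le hξ.2 hx.2)).eventuallyLE

lemma abs_deriv_sub_slope_le {a b x : ℝ} (hab : a < b) {y : ℝ → ℝ} (hy : ContDiff ℝ 2 y)
    (hx : x ∈ Icc a b) : |deriv y x - slope y a b| ≤ ∫ t in a..b, |deriv (deriv y) t| := by
  have hy' : ContDiff ℝ 1 (deriv y) := ContDiff.deriv' hy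
  obtain ⟨ξ, hξ, he⟩ := exists_deriv_eq_slope' y hab hy.continuous.continuousOn
    (hy.differentiable (by simp)).differentiableOn
  rw [← he, ← intervalIntegral.integral_deriv_eq_sub
    (fun t _ => (hy'.differentiable (by simp)) t)
    ((hy'.continuous_deriv le_rfl).intervalIntegrable _ _)]
  exact abs_integral_le_integral_abs_of_subset (hy'.continuous_deriv le_rfl)
    (Ioo_subset_Icc_self hξ) hx

lemma abs_le_mul_sub_of_abs_deriv_le {a b x η : ℝ} {z : ℝ → ℝ} (hz : Differentiable ℝ z)
    (hza : z a = 0) (hη : ∀ x ∈ Icc a b, |deriv z x| ≤ η) (hx : x ∈ Icc a b) :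
    |z x| ≤ η * (b - a) := by
  have ha : a ∈ Icc a b := left_mem_Icc.2 (hx.1.trans hx.2)
  have hη0 : 0 ≤ η := (abs_nonneg _).trans (hη a ha)
  have h := (convex_Icc a b).norm_image_sub_le_of_norm_deriv_le (fun t _ => hz t) hη ha hx
  rw [hza, sub_zero, Real.norm_eq_abs, Real.norm_of_nonneg (sub_nonneg.2 hx.1)] at h
  exact h.trans (by gcongr; exact hx.2)

/- Integrate an `L¹` approximation of `y''` twice and correct the end values by a chord. -/
theorem exists_polynomial_abs_sub_le {a b : ℝ} (hab : a < b) {k p : ℕ} {y : ℝ → ℝ} {A : ℝ}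
    (hkp : k + 2 ≤ p) (hy : ContDiff ℝ (k + 2 : ℕ) y)
    (hA : ∀ x ∈ Icc a b, |iteratedDeriv (k + 2) y x| ≤ A) :
    ∃ Q : ℝ[X], Q.natDegree ≤ p ∧ Q.eval a = y a ∧ Q.eval b = y b ∧
      (∀ x ∈ Icc a b, |deriv y x - Q.derivative.eval x|
        ≤ π * (b - a) * ((b - a) / (2 * ((p : ℝ) - 1 - k))) ^ k * A) ∧
      ∀ x ∈ Icc a b, |y x - Q.eval x|
        ≤ π * (b - a) * ((b - a) / (2 * ((p : ℝ) - 1 - k))) ^ k * A * (b - a) := by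
  have hy1 : ContDiff ℝ (k + 1 : ℕ) (deriv y) := ContDiff.deriv' (by exact_mod_cast hy)
  have hy2 : ContDiff ℝ k (deriv (deriv y)) := ContDiff.deriv' (by exact_mod_cast hy1)
  obtain ⟨g, hg, hgA⟩ := exists_polynomial_integral_abs_sub_le hab (p := p - 2) (by lia) hy2
    (by simpa only [iteratedDeriv_succ'] using hA)
  rw [show ((p - 2 : ℕ) : ℝ) + 1 - k = p - 1 - k by
    rw [Nat.cast_sub (by lia)]; push_cast; ring] at hgA
  obtain ⟨P₁, hP₁, hP₁d⟩ := exists_derivative_eq_natDegree_le g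
  obtain ⟨P₂, hP₂, hP₂d⟩ := exists_derivative_eq_natDegree_le P₁
  set z : ℝ → ℝ := fun x => y x - P₂.eval x
  have hyd : Differentiable ℝ y := hy.differentiable (by simp)
  have hz : ContDiff ℝ 2 z :=
    (hy.of_le (by norm_cast; lia)).sub (by simpa using P₂.contDiff_aeval (𝕜 := ℝ) 2)
  have hz' : deriv z = fun x => deriv y x - P₁.eval x := by
    ext x; rw [deriv_fun_sub (hyd x) P₂.differentiableAt, Polynomial.deriv, hP₂]
  have hz'' : deriv (deriv z) = fun x => deriv (deriv y) x - g.eval x := by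
    ext x
    rw [hz', deriv_fun_sub (hy1.differentiable (by simp) x) P₁.differentiableAt,
      Polynomial.deriv, hP₁]
  have herr : ∀ x ∈ Icc a b, |deriv y x - (P₂ + chord z a b).derivative.eval x|
      ≤ π * (b - a) * ((b - a) / (2 * ((p : ℝ) - 1 - k))) ^ k * A := fun x hx => by
    have h := (abs_deriv_sub_slope_le hab hz hx).trans (by simpa only [hz''] using hgA)
    simpa only [hz', derivative_add, hP₂, derivative_chord, eval_add, eval_C, sub_sub] using h
  refine ⟨P₂ + chord z a b, (natDegree_add_le _ _).trans
    (max_le (by lia) ((natDegree_chord_le _ _ _).trans (by lia))), by simp [z], by simp [z],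
    herr, fun x hx => abs_le_mul_sub_of_abs_deriv_le (z := fun x => y x - (P₂ + chord z a b).eval x)
      (hyd.sub (P₂ + chord z a b).differentiable) (by simp [z]) (fun t ht => ?_) hx⟩
  rw [deriv_fun_sub (hyd t) (P₂ + chord z a b).differentiableAt, Polynomial.deriv]
  exact herr t ht

end PolynomialApproximation

section DiscreteTrace

open Real Polynomial

lemma integral_sin_nat_mul_sin_nat_mul {n m : ℕ} (hn : n ≠ 0) :
    ∫ θ in (0 : ℝ)..π, sin (n * θ) * sin (m * θ) = if n = m then π / 2 else 0 := by
  have hprod : ∀ θ : ℝ, sin (n * θ) * sin (m * θ)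
      = (cos (((n : ℤ) - m : ℤ) * θ) - cos (((n : ℤ) + m : ℤ) * θ)) / 2 := by
    intro θ; push_cast; rw [sub_mul, add_mul, cos_sub, cos_add]; ring
  have hzero : ∀ k : ℤ, k ≠ 0 → ∫ θ in (0 : ℝ)..π, cos (k * θ) = 0 := fun k hk =>
    integral_cos_int_mul_eq_zero hk (by simp) (sin_int_mul_pi k)
  simp_rw [hprod]
  rw [intervalIntegral.integral_div, intervalIntegral.integral_sub
    (Continuous.intervalIntegrable (by fun_prop) _ _)
    (Continuous.intervalIntegrable (by fun_prop) _ _), hzero ((n : ℤ) + m) (by lia), sub_zero]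
  split_ifs with h
  · simp [h]
  · rw [hzero _ (by lia), zero_div]

/-- The Chebyshev polynomials of the second kind, as a graded basis of the polynomials. -/
def chebyshevUsequence : Polynomial.Sequence ℝ where
  elems' n := Chebyshev.U ℝ n
  degree_eq' n := Chebyshev.degree_U_natCast ℝ n

/-- The polynomial with coefficients `c 0, …, c n` in the basis of Chebyshev polynomials of the
second kind. -/
def chebyshevUSum (c : ℕ → ℝ) (n : ℕ) : ℝ[X] :=
  ∑ k ∈ Finset.range (n + 1), c k • Chebyshev.U ℝ k

lemma exists_eq_chebyshevUSum {t : ℝ[X]} {n : ℕ} (ht : t.natDegree ≤ n) :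
    ∃ c : ℕ → ℝ, t = chebyshevUSum c n := by
  have hmem : t ∈ degreeLT ℝ (n + 1) := by
    rw [mem_degreeLT]
    exact degree_le_natDegree.trans_lt (by exact_mod_cast Nat.lt_succ_of_le ht)
  rw [← Sequence.span_degreeLT chebyshevUsequence
      fun i _ => isUnit_iff_ne_zero.2 (leadingCoeff_ne_zero.2 (chebyshevUsequence.ne_zero i)),
    show Set.Iio (n + 1) = Finset.range (n + 1) by simp,
    Submodule.mem_span_image_finset_iff_exists_fun'] at hmem
  exact hmem.imp fun c hc => hc.symm

lemma eval_cos_chebyshevUSum_mul_sin (c : ℕ → ℝ) (n : ℕ) (θ : ℝ) :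
    (chebyshevUSum c n).eval (cos θ) * sin θ
      = ∑ k ∈ Finset.range (n + 1), c k * sin ((k + 1 : ℕ) * θ) := by
  simp only [chebyshevUSum, eval_finsetSum, eval_smul, smul_eq_mul, Finset.sum_mul, mul_assoc,
    Chebyshev.U_real_cos]
  norm_cast

lemma integral_chebyshevUSum_mul_sin (c : ℕ → ℝ) {n k : ℕ} (hk : k ≤ n) :
    ∫ θ in (0 : ℝ)..π, (chebyshevUSum c n).eval (cos θ) * sin θ * sin ((k + 1 : ℕ) * θ)
      = c k * (π / 2) := by
  simp_rw [eval_cos_chebyshevUSum_mul_sin, Finset.sum_mul, mul_assoc]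
  rw [intervalIntegral.integral_finsetSum
    fun i _ => Continuous.intervalIntegrable (by fun_prop) _ _]
  simp only [intervalIntegral.integral_const_mul,
    integral_sin_nat_mul_sin_nat_mul (Nat.succ_ne_zero _), Nat.succ_inj, mul_ite, mul_zero]
  rw [Finset.sum_ite_eq' _ k, if_pos (Finset.mem_range.2 (Nat.lt_succ_of_le hk))]

lemma integral_sq_comp_cos_mul_sin_le {f : ℝ → ℝ} (hf : Continuous f) :
    ∫ θ in (0 : ℝ)..π, (f (cos θ) * sin θ) ^ 2 ≤ ∫ x in (-1 : ℝ)..1, f x ^ 2 := by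
  rw [integral_neg_one_one_eq_integral_cos (f := fun x => f x ^ 2) (hf.pow 2)]
  refine intervalIntegral.integral_mono_on pi_pos.le
    (Continuous.intervalIntegrable (by fun_prop) _ _)
    (Continuous.intervalIntegrable (by fun_prop) _ _) fun θ hθ => ?_
  rw [mul_pow]
  gcongr
  exact pow_le_of_le_one (sin_nonneg_of_mem_Icc hθ) (sin_le_one θ) two_ne_zero

lemma sq_coeff_chebyshevUSum_le (c : ℕ → ℝ) {n k : ℕ} (hk : k ≤ n) :
    c k ^ 2 ≤ ∫ x in (-1 : ℝ)..1, (chebyshevUSum c n).eval x ^ 2 := by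
  have hcs := sq_integral_mul_le pi_pos.le
    (f := fun θ => (chebyshevUSum c n).eval (cos θ) * sin θ)
    (g := fun θ => sin ((k + 1 : ℕ) * θ))
    (((chebyshevUSum c n).continuous.comp continuous_cos).mul continuous_sin) (by fun_prop)
  have hsin : ∫ θ in (0 : ℝ)..π, sin ((k + 1 : ℕ) * θ) ^ 2 = π / 2 := by
    simp_rw [sq]
    rw [integral_sin_nat_mul_sin_nat_mul k.succ_ne_zero, if_pos rfl]
  rw [integral_chebyshevUSum_mul_sin c hk, hsin] at hcs
  have hpi : 0 < π / 2 := by positivity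
  have hc : c k ^ 2 * (π / 2)
      ≤ ∫ θ in (0 : ℝ)..π, ((chebyshevUSum c n).eval (cos θ) * sin θ) ^ 2 :=
    le_of_mul_le_mul_right ((by ring : _ = (c k * (π / 2)) ^ 2).trans_le hcs) hpi
  refine (le_mul_of_one_le_right (sq_nonneg _) ?_).trans
    (hc.trans (integral_sq_comp_cos_mul_sin_le (chebyshevUSum c n).continuous))
  linarith [pi_gt_three]

lemma sq_eval_one_le {t : ℝ[X]} {n : ℕ} (ht : t.natDegree ≤ n) :
    t.eval 1 ^ 2 ≤ ((n : ℝ) + 1) ^ 4 * ∫ x in (-1 : ℝ)..1, t.eval x ^ 2 := by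
  obtain ⟨c, rfl⟩ := exists_eq_chebyshevUSum ht
  set G := ∫ x in (-1 : ℝ)..1, (chebyshevUSum c n).eval x ^ 2
  have hG : 0 ≤ G := intervalIntegral.integral_nonneg (by norm_num) fun _ _ => sq_nonneg _
  have habs : |(chebyshevUSum c n).eval 1| ≤ ((n : ℝ) + 1) ^ 2 * √G := by
    simp only [chebyshevUSum, eval_finsetSum, eval_smul, smul_eq_mul, Chebyshev.U_eval_one]
    calc |∑ k ∈ Finset.range (n + 1), c k * (((k : ℤ) : ℝ) + 1)|
        ≤ ∑ k ∈ Finset.range (n + 1), |c k * (((k : ℤ) : ℝ) + 1)| :=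
          Finset.abs_sum_le_sum_abs _ _
      _ ≤ ∑ k ∈ Finset.range (n + 1), √G * ((n : ℝ) + 1) := by
          refine Finset.sum_le_sum fun k hk => ?_
          have hkn : k ≤ n := Nat.lt_succ_iff.1 (Finset.mem_range.1 hk)
          rw [abs_mul, Int.cast_natCast, abs_of_nonneg (by positivity : (0 : ℝ) ≤ k + 1)]
          gcongr
          exact abs_le_sqrt (sq_coeff_chebyshevUSum_le c hkn)
      _ = ((n : ℝ) + 1) ^ 2 * √G := by simp; ring
  calc (chebyshevUSum c n).eval 1 ^ 2 = |(chebyshevUSum c n).eval 1| ^ 2 := (sq_abs _).symm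
    _ ≤ (((n : ℝ) + 1) ^ 2 * √G) ^ 2 := by gcongr
    _ = ((n : ℝ) + 1) ^ 4 * G := by rw [mul_pow, sq_sqrt hG]; ring

/- Allowing `b < a` covers both end points of a cell at once. -/
lemma sq_eval_right_le_of_ne {a b : ℝ} (hab : a ≠ b) {t : ℝ[X]} {n : ℕ} (ht : t.natDegree ≤ n) :
    t.eval b ^ 2 ≤ 2 * ((n : ℝ) + 1) ^ 4 * ((b - a)⁻¹ * ∫ x in a..b, t.eval x ^ 2) := by
  have hc : (b - a) / 2 ≠ 0 := div_ne_zero (sub_ne_zero.2 hab.symm) two_ne_zero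
  have h := sq_eval_one_le (t := t.comp (C ((b - a) / 2) * X + C ((a + b) / 2)))
    ((natDegree_comp_linear_le _ _ _).trans ht)
  simp only [eval_comp, eval_add, eval_mul, eval_C, eval_X] at h
  rw [intervalIntegral.integral_comp_mul_add (fun x => t.eval x ^ 2) hc, smul_eq_mul,
    show (b - a) / 2 * 1 + (a + b) / 2 = b by ring,
    show (b - a) / 2 * -1 + (a + b) / 2 = a by ring, inv_div, div_eq_mul_inv] at h
  linarith

theorem sub_mul_sq_eval_right_le {a b : ℝ} (hab : a < b) {t : ℝ[X]} {n : ℕ}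
    (ht : t.natDegree ≤ n) :
    (b - a) * t.eval b ^ 2 ≤ 2 * ((n : ℝ) + 1) ^ 4 * ∫ x in a..b, t.eval x ^ 2 := by
  have h := sq_eval_right_le_of_ne hab.ne ht
  rw [← mul_left_comm, inv_mul_eq_div, le_div_iff₀ (sub_pos.2 hab)] at h
  linarith

theorem sub_mul_sq_eval_left_le {a b : ℝ} (hab : a < b) {t : ℝ[X]} {n : ℕ}
    (ht : t.natDegree ≤ n) :
    (b - a) * t.eval a ^ 2 ≤ 2 * ((n : ℝ) + 1) ^ 4 * ∫ x in a..b, t.eval x ^ 2 := by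
  have h := sq_eval_right_le_of_ne hab.ne' ht
  rw [intervalIntegral.integral_symm, ← neg_sub b a, inv_neg, neg_mul_neg,
    ← mul_left_comm, inv_mul_eq_div, le_div_iff₀ (sub_pos.2 hab)] at h
  linarith

end DiscreteTrace

section WeakDerivative

open Polynomial

variable {a b : ℝ} {n : ℕ}

theorem integral_deriv_mul_eq (a b : ℝ) {F G : ℝ → ℝ} (hF : ContDiff ℝ 1 F) (hG : ContDiff ℝ 1 G) :
    ∫ x in a..b, deriv F x * G x = F b * G b - F a * G a - ∫ x in a..b, F x * deriv G x := by
  have hasDerivAt {H : ℝ → ℝ} (hH : ContDiff ℝ 1 H) (x : ℝ) : HasDerivAt H (deriv H x) x :=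
    (hH.differentiable one_ne_zero x).hasDerivAt
  rw [intervalIntegral.integral_mul_deriv_eq_deriv_mul (fun x _ => hasDerivAt hF x)
    (fun x _ => hasDerivAt hG x) ((hF.continuous_deriv le_rfl).intervalIntegrable a b)
    ((hG.continuous_deriv le_rfl).intervalIntegrable a b)]
  ring

theorem contDiff_eval (P : ℝ[X]) {k : WithTop ℕ∞} : ContDiff ℝ k fun t => P.eval t := by
  simpa using P.contDiff_aeval (𝕜 := ℝ) k

theorem integral_derivative_mul_eq (a b : ℝ) (P : ℝ[X]) {G : ℝ → ℝ} (hG : ContDiff ℝ 1 G) :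
    ∫ x in a..b, P.derivative.eval x * G x
      = P.eval b * G b - P.eval a * G a - ∫ x in a..b, P.eval x * deriv G x := by
  simpa only [Polynomial.deriv] using integral_deriv_mul_eq a b (contDiff_eval P) hG

theorem IsPolyDeg.natDegree_le {P : ℝ[X]} (h : IsPolyDeg (fun t => P.eval t) n) :
    P.natDegree ≤ n := by
  obtain ⟨q, hq, hPq⟩ := h
  rwa [Polynomial.funext hPq]

theorem exists_polynomials {N : ℕ} {f : Fin N → ℝ → ℝ} (hf : ∀ j, IsPolyDeg (f j) n) :
    ∃ P : Fin N → ℝ[X], (∀ j, (P j).natDegree ≤ n) ∧ f = fun j t => (P j).eval t := by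
  choose P hP hfP using hf
  exact ⟨P, hP, funext fun j => funext (hfP j)⟩

theorem isWeakDerivOn_eval_iff {v : ℝ → ℝ} {vl vr : ℝ} {D : ℝ[X]} :
    IsWeakDerivOn a b n v vl vr (fun t => D.eval t) ↔ D.natDegree ≤ n ∧
      ∀ q : ℝ[X], q.natDegree ≤ n → (∫ t in a..b, D.eval t * q.eval t) =
        -(∫ t in a..b, v t * q.derivative.eval t) + vr * q.eval b - vl * q.eval a :=
  and_congr_left' ⟨IsPolyDeg.natDegree_le, fun h => ⟨D, h, fun _ => rfl⟩⟩

theorem isWeakDerivOn_derivative {Q : ℝ[X]} (hQ : Q.natDegree ≤ n + 1) :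
    IsWeakDerivOn a b n (fun t => Q.eval t) (Q.eval a) (Q.eval b)
      (fun t => Q.derivative.eval t) := by
  refine isWeakDerivOn_eval_iff.2
    ⟨(natDegree_derivative_le Q).trans (Nat.sub_le_of_le_add hQ), fun q _ => ?_⟩
  have h := integral_derivative_mul_eq a b Q (contDiff_eval q)
  simp only [Polynomial.deriv] at h
  rw [h]; ring

variable {v w : ℝ → ℝ} {vl vr wl wr : ℝ} {D E : ℝ[X]}

theorem IsWeakDerivOn.add (hv : Continuous v) (hw : Continuous w)
    (hD : IsWeakDerivOn a b n v vl vr (fun t => D.eval t))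
    (hE : IsWeakDerivOn a b n w wl wr (fun t => E.eval t)) :
    IsWeakDerivOn a b n (fun t => v t + w t) (vl + wl) (vr + wr) (fun t => (D + E).eval t) := by
  rw [isWeakDerivOn_eval_iff] at hD hE ⊢
  refine ⟨(natDegree_add_le D E).trans (max_le hD.1 hE.1), fun q hq => ?_⟩
  simp only [eval_add, add_mul]
  rw [intervalIntegral.integral_add, intervalIntegral.integral_add, hD.2 q hq, hE.2 q hq]
  · ring
  all_goals exact Continuous.intervalIntegrable (by fun_prop) _ _

theorem IsWeakDerivOn.sub (hv : Continuous v) (hw : Continuous w)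
    (hD : IsWeakDerivOn a b n v vl vr (fun t => D.eval t))
    (hE : IsWeakDerivOn a b n w wl wr (fun t => E.eval t)) :
    IsWeakDerivOn a b n (fun t => v t - w t) (vl - wl) (vr - wr) (fun t => (D - E).eval t) := by
  rw [isWeakDerivOn_eval_iff] at hD hE ⊢
  refine ⟨(natDegree_sub_le D E).trans (max_le hD.1 hE.1), fun q hq => ?_⟩
  simp only [eval_sub, sub_mul]
  rw [intervalIntegral.integral_sub, intervalIntegral.integral_sub, hD.2 q hq, hE.2 q hq]
  · ring
  all_goals exact Continuous.intervalIntegrable (by fun_prop) _ _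

theorem IsWeakDerivOn.integral_mul_eq (hv : ContDiff ℝ 1 v)
    (hD : IsWeakDerivOn a b n v (v a) (v b) (fun t => D.eval t)) {q : ℝ[X]}
    (hq : q.natDegree ≤ n) :
    ∫ t in a..b, D.eval t * q.eval t = ∫ t in a..b, deriv v t * q.eval t := by
  rw [hD.2 q hq, integral_deriv_mul_eq a b hv (contDiff_eval q)]
  simp only [Polynomial.deriv]
  ring

/-- The weak derivative of a smooth function is the projection of its derivative, so the
classical identity `∫ v' X' + ∫ X v'' = [X v']` survives up to the jumps of the test function. -/
theorem IsWeakDerivOn.integral_mul_add_integral_mul_deriv_deriv {X Y : ℝ[X]} {zl zr : ℝ}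
    (hv : ContDiff ℝ 2 v) (hD : IsWeakDerivOn a b n v (v a) (v b) (fun t => D.eval t))
    (hX : X.natDegree ≤ n + 1)
    (hY : IsWeakDerivOn a b n (fun t => X.eval t) zl zr (fun t => Y.eval t)) :
    (∫ t in a..b, D.eval t * Y.eval t) + (∫ t in a..b, X.eval t * deriv (deriv v) t)
      = (X.eval b - zr) * (deriv v b - D.eval b) - (X.eval a - zl) * (deriv v a - D.eval a)
        + (deriv v b * zr - deriv v a * zl) := by
  have hX' : X.derivative.natDegree ≤ n :=
    (natDegree_derivative_le X).trans (Nat.sub_le_of_le_add hX)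
  have hYD := hY.2 D (isWeakDerivOn_eval_iff.1 hD).1
  have hDX := hD.integral_mul_eq (hv.of_le one_le_two) hX'
  have hXD := integral_derivative_mul_eq a b X (contDiff_eval D)
  have hXv := integral_derivative_mul_eq a b X
    (((contDiff_succ_iff_deriv (n := 1)).1 hv).2.2)
  simp only [Polynomial.deriv] at hXD
  simp only [mul_comm (Y.eval _), mul_comm (X.derivative.eval _)] at hYD hXD hXv
  linarith

theorem IsWeakConvDerivOn.integral_mul_sub {Q U Dc : ℝ[X]} {bb : ℝ → ℝ} {p : ℕ} {ul ur zl zr : ℝ}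
    (hbb : ContDiff ℝ 1 bb) (hQ : Q.natDegree ≤ p) (hU : U.natDegree ≤ p)
    (hQa : Q.eval a = ul + zl) (hQb : Q.eval b = ur + zr)
    (hDc : IsWeakConvDerivOn bb a b p (fun t => U.eval t) ul ur (fun t => Dc.eval t)) :
    ∫ t in a..b, Dc.eval t * (Q - U).eval t
      = (∫ t in a..b, bb t * Q.derivative.eval t * (Q - U).eval t)
        + 1 / 2 * (∫ t in a..b, deriv bb t * (Q - U).eval t ^ 2)
        + 1 / 2 * (bb b * ((Q - U).eval b - zr) ^ 2 - bb a * ((Q - U).eval a - zl) ^ 2)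
        - 1 / 2 * (bb b * zr ^ 2 - bb a * zl ^ 2) := by
  obtain ⟨X, hX⟩ : ∃ X, X = Q - U := ⟨_, rfl⟩
  have hUX : ∀ t, U.eval t = Q.eval t - X.eval t := fun t => by simp [hX]
  have hbX : ContDiff ℝ 1 fun t => bb t * X.eval t := hbb.mul (contDiff_eval X)
  have hbc := hbb.continuous
  have hbX' (t : ℝ) : deriv (fun s => bb s * X.eval s) t
      = deriv bb t * X.eval t + bb t * X.derivative.eval t := by
    rw [deriv_fun_mul (hbb.differentiable one_ne_zero t) X.differentiableAt, Polynomial.deriv]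
  have hQ_ibp := integral_derivative_mul_eq a b Q hbX
  have hX_ibp := integral_derivative_mul_eq a b X hbX
  have htest := hDc.2 X (hX ▸ (natDegree_sub_le Q U).trans (max_le hQ hU))
  simp only [hbX', hUX, sub_mul] at htest hQ_ibp hX_ibp
  rw [intervalIntegral.integral_sub (Continuous.intervalIntegrable (by fun_prop) _ _)
    (Continuous.intervalIntegrable (by fun_prop) _ _)] at htest
  have hsplit : ∫ t in a..b, X.eval t * (deriv bb t * X.eval t + bb t * X.derivative.eval t)
      = (∫ t in a..b, deriv bb t * X.eval t ^ 2)
        + ∫ t in a..b, X.derivative.eval t * (bb t * X.eval t) := by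
    rw [← intervalIntegral.integral_add (Continuous.intervalIntegrable (by fun_prop) _ _)
      (Continuous.intervalIntegrable (by fun_prop) _ _)]
    exact intervalIntegral.integral_congr fun t _ => by ring
  simp only [mul_left_comm (Polynomial.eval _ Q.derivative)] at hQ_ibp
  simp only [← hX, mul_assoc]
  rw [htest]
  rw [hQa, hQb] at hQ_ibp
  linear_combination (1 / 2) * hX_ibp + (1 / 2) * hsplit - hQ_ibp

end WeakDerivative

section CellError

open Polynomial

theorem integral_le_of_forall_le {a b c : ℝ} {f : ℝ → ℝ} (hab : a ≤ b) (hab1 : b - a ≤ 1)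
    (hf : Continuous f) (hc : 0 ≤ c) (hfc : ∀ x ∈ Icc a b, f x ≤ c) : ∫ x in a..b, f x ≤ c := by
  calc ∫ x in a..b, f x ≤ ∫ _ in a..b, c :=
        intervalIntegral.integral_mono_on hab (hf.intervalIntegrable _ _)
          intervalIntegrable_const hfc
    _ = (b - a) * c := by rw [intervalIntegral.integral_const, smul_eq_mul]
    _ ≤ c := mul_le_of_le_one_left hc hab1

theorem integral_le_mul_integral_add_mul_integral {a b α β : ℝ} {f g h : ℝ → ℝ} (hab : a ≤ b)
    (hf : Continuous f) (hg : Continuous g) (hh : Continuous h)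
    (hle : ∀ x ∈ Icc a b, f x ≤ α * g x + β * h x) :
    ∫ x in a..b, f x ≤ α * (∫ x in a..b, g x) + β * ∫ x in a..b, h x := by
  rw [← intervalIntegral.integral_const_mul, ← intervalIntegral.integral_const_mul,
    ← intervalIntegral.integral_add (Continuous.intervalIntegrable (by fun_prop) _ _)
      (Continuous.intervalIntegrable (by fun_prop) _ _)]
  exact intervalIntegral.integral_mono_on hab (hf.intervalIntegrable _ _)
    (Continuous.intervalIntegrable (by fun_prop) _ _) hle

theorem integral_sq_le_of_integral_mul_eq {a b : ℝ} {f g : ℝ → ℝ} (hab : a ≤ b)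
    (hf : Continuous f) (hg : Continuous g)
    (hfg : ∫ x in a..b, f x * f x = ∫ x in a..b, g x * f x) :
    ∫ x in a..b, f x ^ 2 ≤ ∫ x in a..b, g x ^ 2 := by
  have hle := integral_le_mul_integral_add_mul_integral (α := 1 / 2) (β := 1 / 2) hab
    (f := fun x => g x * f x) (by fun_prop) (hg.fun_pow 2) (hf.fun_pow 2)
    fun x _ => by linarith [sq_nonneg (g x - f x)]
  simp only [← sq] at hfg
  linarith

theorem neg_integral_mul_le {a b γ M : ℝ} {s v : ℝ → ℝ} (hab : a ≤ b) (hab1 : b - a ≤ 1)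
    (hγ : 0 < γ) (hs : Continuous s) (hv : Continuous v) (hsM : ∀ x ∈ Icc a b, s x ^ 2 ≤ M) :
    -∫ x in a..b, s x * v x ≤ γ / 4 * (∫ x in a..b, v x ^ 2) + M / γ := by
  have hM : 0 ≤ M := (sq_nonneg _).trans (hsM a (left_mem_Icc.2 hab))
  have hyoung := integral_le_mul_integral_add_mul_integral (α := γ / 4) (β := 1 / γ) hab
    (f := fun x => -(s x * v x)) (by fun_prop) (hv.fun_pow 2) (hs.fun_pow 2) fun x _ => by
      have hsq : γ / 4 * v x ^ 2 + 1 / γ * s x ^ 2 - -(s x * v x)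
          = (γ / 2 * v x + s x) ^ 2 / γ := by
        field_simp; ring
      have : 0 ≤ (γ / 2 * v x + s x) ^ 2 / γ := by positivity
      linarith
  rw [intervalIntegral.integral_neg] at hyoung
  have hint := integral_le_of_forall_le hab hab1 (hs.fun_pow 2) hM hsM
  calc _ ≤ γ / 4 * (∫ x in a..b, v x ^ 2) + 1 / γ * ∫ x in a..b, s x ^ 2 := hyoung
    _ ≤ γ / 4 * (∫ x in a..b, v x ^ 2) + 1 / γ * M := by gcongr
    _ = _ := by ring

theorem mul_jump_mul_le {ε₁ h P j e t η : ℝ} (hε : 0 ≤ ε₁) (hh : 0 < h) (hh1 : h ≤ 1) (hP : 1 ≤ P)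
    (he : ε₁ * e ^ 2 ≤ η ^ 2) (ht : ε₁ * (h * t ^ 2) ≤ 2 * P ^ 4 * η ^ 2) :
    ε₁ * (j * (e - t)) ≤ 1 / 2 * (ε₁ * P ^ 2 / h * j ^ 2) + 3 * P ^ 2 * η ^ 2 := by
  have hyoung : ε₁ * (j * (e - t))
      ≤ 1 / 2 * (ε₁ * P ^ 2 / h * j ^ 2) + ε₁ * h * (e - t) ^ 2 / (2 * P ^ 2) := by
    have hsq : 1 / 2 * (ε₁ * P ^ 2 / h * j ^ 2) + ε₁ * h * (e - t) ^ 2 / (2 * P ^ 2)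
        - ε₁ * (j * (e - t)) = ε₁ * (P ^ 2 * j - h * (e - t)) ^ 2 / (2 * h * P ^ 2) := by
      field_simp; ring
    have : 0 ≤ ε₁ * (P ^ 2 * j - h * (e - t)) ^ 2 / (2 * h * P ^ 2) := by positivity
    linarith
  have htrace : ε₁ * h * (e - t) ^ 2 ≤ 6 * P ^ 4 * η ^ 2 := by
    calc ε₁ * h * (e - t) ^ 2 ≤ ε₁ * h * (2 * (e ^ 2 + t ^ 2)) := by
          gcongr; linarith [sq_nonneg (e + t)]
      _ = 2 * (h * (ε₁ * e ^ 2)) + 2 * (ε₁ * (h * t ^ 2)) := by ring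
      _ ≤ 2 * (1 * (P ^ 4 * η ^ 2)) + 2 * (2 * P ^ 4 * η ^ 2) := by
          have := he.trans (le_mul_of_one_le_left (sq_nonneg η) (one_le_pow₀ hP (n := 4)))
          gcongr 2 * ?_ + 2 * ?_
          exact mul_le_mul hh1 this (by positivity) zero_le_one
      _ = _ := by ring
  calc _ ≤ 1 / 2 * (ε₁ * P ^ 2 / h * j ^ 2) + 6 * P ^ 4 * η ^ 2 / (2 * P ^ 2) := by
        refine hyoung.trans ?_; gcongr
    _ = _ := by field_simp; ring

/-- The properties of the coefficients `bb`, `rr` on a set `s` that make the weak Galerkin form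
coercive and bounded: `γ` is the coercivity constant and `B` a common bound. -/
structure CoefficientBounds (ε₂ γ B : ℝ) (bb rr : ℝ → ℝ) (s : Set ℝ) : Prop where
  contDiff_bb : ContDiff ℝ 1 bb
  continuous_rr : Continuous rr
  pos : 0 < γ
  abs_bb_le : ∀ x ∈ s, |bb x| ≤ B
  abs_rr_le : ∀ x ∈ s, |rr x| ≤ B
  bb_nonneg : ∀ x ∈ s, 0 ≤ bb x
  le_sub : ∀ x ∈ s, γ ≤ rr x - ε₂ * deriv bb x / 2

theorem CoefficientBounds.mono {ε₂ γ B : ℝ} {bb rr : ℝ → ℝ} {s t : Set ℝ}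
    (h : CoefficientBounds ε₂ γ B bb rr t) (hst : s ⊆ t) : CoefficientBounds ε₂ γ B bb rr s where
  __ := h
  abs_bb_le x hx := h.abs_bb_le x (hst hx)
  abs_rr_le x hx := h.abs_rr_le x (hst hx)
  bb_nonneg x hx := h.bb_nonneg x (hst hx)
  le_sub x hx := h.le_sub x (hst hx)

/-- The weak Galerkin approximation of `u` on one cell `(a,b)`: `U` is its interior part, `ul` and
`ur` are its nodal values, `dU` and `Dc` its weak and weak convection derivatives, and `D` is the
weak derivative of the error. The polynomial `Q` is a comparison function which agrees with `u` at
the nodes, so that the discrete error `Q - U` has the nodal values `u a - ul` and `u b - ur`. -/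
structure CellSolution (bb u : ℝ → ℝ) (a b : ℝ) (n : ℕ) (Q U dU Dc D : ℝ[X]) (ul ur : ℝ) :
    Prop where
  contDiff : ContDiff ℝ 2 u
  natDegree_Q : Q.natDegree ≤ n + 1
  eval_left : Q.eval a = u a
  eval_right : Q.eval b = u b
  natDegree_U : U.natDegree ≤ n + 1
  weakDeriv : IsWeakDerivOn a b n (fun t => U.eval t) ul ur (fun t => dU.eval t)
  weakConvDeriv : IsWeakConvDerivOn bb a b (n + 1) (fun t => U.eval t) ul ur (fun t => Dc.eval t)
  weakDeriv_error :
    IsWeakDerivOn a b n (fun t => u t - U.eval t) (u a - ul) (u b - ur) (fun t => D.eval t)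

namespace CellSolution

variable {a b ε₁ ε₂ γ B η ul ur : ℝ} {n : ℕ} {u bb rr : ℝ → ℝ} {Q U dU Dc D : ℝ[X]}

theorem natDegree_sub_le (h : CellSolution bb u a b n Q U dU Dc D ul ur) :
    (Q - U).natDegree ≤ n + 1 :=
  (Polynomial.natDegree_sub_le Q U).trans (max_le h.natDegree_Q h.natDegree_U)

theorem continuous_deriv (h : CellSolution bb u a b n Q U dU Dc D ul ur) : Continuous (deriv u) :=
  h.contDiff.continuous_deriv one_le_two

theorem weakDeriv_sub (h : CellSolution bb u a b n Q U dU Dc D ul ur) :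
    IsWeakDerivOn a b n (fun t => (Q - U).eval t) (u a - ul) (u b - ur)
      (fun t => (Q.derivative - dU).eval t) := by
  have := (isWeakDerivOn_derivative (a := a) (b := b) h.natDegree_Q).sub Q.continuous U.continuous
    h.weakDeriv
  simpa only [eval_sub, h.eval_left, h.eval_right] using this

theorem weakDeriv_add (h : CellSolution bb u a b n Q U dU Dc D ul ur) :
    IsWeakDerivOn a b n u (u a) (u b) (fun t => (D + dU).eval t) := by
  have := h.weakDeriv_error.add (h.contDiff.continuous.fun_sub U.continuous) U.continuous
    h.weakDeriv
  simpa only [sub_add_cancel] using this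

theorem weakDeriv_interpolation_error (h : CellSolution bb u a b n Q U dU Dc D ul ur) :
    IsWeakDerivOn a b n (fun t => u t - Q.eval t) (u a - Q.eval a) (u b - Q.eval b)
      (fun t => (D - (Q.derivative - dU)).eval t) := by
  have := h.weakDeriv_error.sub (h.contDiff.continuous.fun_sub U.continuous) (Q - U).continuous
    h.weakDeriv_sub
  simpa only [eval_sub, sub_sub_sub_cancel_right, sub_self, h.eval_left, h.eval_right] using this

/-- `D - (Q' - dU)` is the `L²` projection of `u' - Q'`. -/
theorem mul_integral_projection_sq_le (h : CellSolution bb u a b n Q U dU Dc D ul ur)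
    (hab : a ≤ b) (hab1 : b - a ≤ 1) (hε₁ : 0 ≤ ε₁)
    (hη : ∀ x ∈ Icc a b, ε₁ * (deriv u x - Q.derivative.eval x) ^ 2 ≤ η ^ 2) :
    ε₁ * ∫ x in a..b, (D - (Q.derivative - dU)).eval x ^ 2 ≤ η ^ 2 := by
  have hθ := h.weakDeriv_interpolation_error
  have hu' := h.continuous_deriv
  have hproj := hθ.integral_mul_eq ((h.contDiff.of_le one_le_two).sub (contDiff_eval Q))
    (isWeakDerivOn_eval_iff.1 hθ).1
  have hderiv (x : ℝ) : deriv (fun t => u t - Q.eval t) x = deriv u x - Q.derivative.eval x := by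
    rw [deriv_fun_sub (h.contDiff.differentiable two_ne_zero x) Q.differentiableAt,
      Polynomial.deriv]
  simp only [hderiv] at hproj
  calc _ ≤ ε₁ * ∫ x in a..b, (deriv u x - Q.derivative.eval x) ^ 2 := by
        gcongr
        exact integral_sq_le_of_integral_mul_eq hab (Polynomial.continuous _)
          (hu'.sub Q.derivative.continuous) hproj
    _ = ∫ x in a..b, ε₁ * (deriv u x - Q.derivative.eval x) ^ 2 :=
        (intervalIntegral.integral_const_mul _ _).symm
    _ ≤ η ^ 2 := integral_le_of_forall_le hab hab1 (by fun_prop) (sq_nonneg η) hη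

end CellSolution

end CellError

section CellEnergy

open Polynomial

/-- The boundary flux `ε₁ u' z - ε₂ b z² / 2` carried through the node `x` by a discrete function
with nodal value `z`; its contributions telescope over the mesh. -/
def nodalFlux (ε₁ ε₂ : ℝ) (bb u : ℝ → ℝ) (x z : ℝ) : ℝ :=
  ε₁ * deriv u x * z - ε₂ / 2 * bb x * z ^ 2

/-- The contribution of the cell `(a,b)` to `A_p(u_p, Q - u_p) - (f, Q - u_p)` for the weak Galerkin
solution with interior part `U`, without the stabilisation terms. -/
def cellResidual (ε₁ ε₂ : ℝ) (rr ff : ℝ → ℝ) (a b : ℝ) (Q U dU Dc : ℝ[X]) : ℝ :=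
  ε₁ * (∫ x in a..b, dU.eval x * (Q.derivative - dU).eval x)
    + ε₂ * (∫ x in a..b, Dc.eval x * (Q - U).eval x)
    + (∫ x in a..b, rr x * U.eval x * (Q - U).eval x)
    - ∫ x in a..b, ff x * (Q - U).eval x

namespace CellSolution

variable {a b ε₁ ε₂ γ B η ul ur : ℝ} {n : ℕ} {u bb rr ff : ℝ → ℝ} {Q U dU Dc D : ℝ[X]}

theorem jump_flux_le (h : CellSolution bb u a b n Q U dU Dc D ul ur)
    (hab : a < b) (hab1 : b - a ≤ 1) (hε₁ : 0 ≤ ε₁)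
    (hη : ∀ x ∈ Icc a b, ε₁ * (deriv u x - Q.derivative.eval x) ^ 2 ≤ η ^ 2) :
    ε₁ * (((Q - U).eval b - (u b - ur)) * (deriv u b - (D + dU).eval b)
        - ((Q - U).eval a - (u a - ul)) * (deriv u a - (D + dU).eval a))
      ≤ 1 / 2 * (ε₁ * ((n : ℝ) + 1) ^ 2 / (b - a) * ((U.eval b - ur) ^ 2 + (U.eval a - ul) ^ 2))
        + 6 * ((n : ℝ) + 1) ^ 2 * η ^ 2 := by
  obtain ⟨θ, hθ⟩ : ∃ θ, θ = D - (Q.derivative - dU) := ⟨_, rfl⟩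
  have hθ_deg : θ.natDegree ≤ n :=
    hθ ▸ (isWeakDerivOn_eval_iff.1 h.weakDeriv_interpolation_error).1
  have hθ_int := hθ ▸ h.mul_integral_projection_sq_le hab.le hab1 hε₁ hη
  have htrace (t : ℝ) (ht : (b - a) * t ^ 2 ≤ 2 * ((n : ℝ) + 1) ^ 4 * ∫ x in a..b, θ.eval x ^ 2) :
      ε₁ * ((b - a) * t ^ 2) ≤ 2 * ((n : ℝ) + 1) ^ 4 * η ^ 2 := by
    calc _ ≤ ε₁ * (2 * ((n : ℝ) + 1) ^ 4 * ∫ x in a..b, θ.eval x ^ 2) := by gcongr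
      _ = 2 * ((n : ℝ) + 1) ^ 4 * (ε₁ * ∫ x in a..b, θ.eval x ^ 2) := by ring
      _ ≤ _ := by gcongr
  have hP : (1 : ℝ) ≤ (n : ℝ) + 1 := le_add_of_nonneg_left n.cast_nonneg
  have hright := mul_jump_mul_le (j := ur - U.eval b) hε₁ (sub_pos.2 hab) hab1 hP
    (hη b (right_mem_Icc.2 hab.le)) (htrace _ (sub_mul_sq_eval_right_le hab hθ_deg))
  have hleft := mul_jump_mul_le (j := U.eval a - ul) hε₁ (sub_pos.2 hab) hab1 hP
    (hη a (left_mem_Icc.2 hab.le)) (htrace _ (sub_mul_sq_eval_left_le hab hθ_deg))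
  have heval (x : ℝ) : (D + dU).eval x = Q.derivative.eval x + θ.eval x := by
    simp only [hθ, eval_add, eval_sub]; ring
  simp only [heval, eval_sub, h.eval_left, h.eval_right]
  linarith

theorem diffusion_le (h : CellSolution bb u a b n Q U dU Dc D ul ur)
    (hab : a < b) (hab1 : b - a ≤ 1) (hε₁ : 0 ≤ ε₁)
    (hη : ∀ x ∈ Icc a b, ε₁ * (deriv u x - Q.derivative.eval x) ^ 2 ≤ η ^ 2) :
    ε₁ * ((∫ x in a..b, dU.eval x * (Q.derivative - dU).eval x)
        + ∫ x in a..b, (Q - U).eval x * deriv (deriv u) x)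
      ≤ -(3 / 4) * (ε₁ * ∫ x in a..b, (Q.derivative - dU).eval x ^ 2)
        + 1 / 2 * (ε₁ * ((n : ℝ) + 1) ^ 2 / (b - a) * ((U.eval b - ur) ^ 2 + (U.eval a - ul) ^ 2))
        + ε₁ * (deriv u b * (u b - ur) - deriv u a * (u a - ul))
        + 7 * ((n : ℝ) + 1) ^ 2 * η ^ 2 := by
  have hident := h.weakDeriv_add.integral_mul_add_integral_mul_deriv_deriv h.contDiff
    h.natDegree_sub_le h.weakDeriv_sub
  have hjump := h.jump_flux_le hab hab1 hε₁ hη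
  have hproj := h.mul_integral_projection_sq_le hab.le hab1 hε₁ hη
  have hyoung := mul_le_mul_of_nonneg_left (integral_le_mul_integral_add_mul_integral
    (f := fun x => -(D.eval x * (Q.derivative - dU).eval x))
    (g := fun x => (Q.derivative - dU).eval x ^ 2)
    (h := fun x => (D - (Q.derivative - dU)).eval x ^ 2) (α := -(3 / 4)) (β := 1) hab.le
    (by fun_prop) (by fun_prop) (by fun_prop) fun x _ => by
      simp only [eval_sub]
      linarith [sq_nonneg (1 / 2 * (Q.derivative.eval x - dU.eval x)
        + (D.eval x - (Q.derivative.eval x - dU.eval x)))]) hε₁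
  have hsplit : ∫ x in a..b, (D + dU).eval x * (Q.derivative - dU).eval x
      = (∫ x in a..b, D.eval x * (Q.derivative - dU).eval x)
        + ∫ x in a..b, dU.eval x * (Q.derivative - dU).eval x := by
    rw [← intervalIntegral.integral_add (Continuous.intervalIntegrable (by fun_prop) _ _)
      (Continuous.intervalIntegrable (by fun_prop) _ _)]
    exact intervalIntegral.integral_congr fun x _ => by simp only [eval_add]; ring
  have hη2 : η ^ 2 ≤ ((n : ℝ) + 1) ^ 2 * η ^ 2 :=
    le_mul_of_one_le_left (sq_nonneg η) (one_le_pow₀ (le_add_of_nonneg_left n.cast_nonneg))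
  rw [intervalIntegral.integral_neg] at hyoung
  rw [hsplit] at hident
  linear_combination ε₁ * hident + hyoung + hjump + hproj + hη2

theorem convection_le (h : CellSolution bb u a b n Q U dU Dc D ul ur)
    (hc : CoefficientBounds ε₂ γ B bb rr (Icc a b))
    (hab : a ≤ b) (hab1 : b - a ≤ 1) (hεε : ε₂ ^ 2 ≤ ε₁)
    (hη : ∀ x ∈ Icc a b, ε₁ * (deriv u x - Q.derivative.eval x) ^ 2 ≤ η ^ 2) :
    ε₂ * ((∫ x in a..b, Dc.eval x * (Q - U).eval x)
        - ∫ x in a..b, bb x * deriv u x * (Q - U).eval x)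
      ≤ γ / 4 * (∫ x in a..b, (Q - U).eval x ^ 2) + B ^ 2 * η ^ 2 / γ
        + ε₂ / 2 * (∫ x in a..b, deriv bb x * (Q - U).eval x ^ 2)
        + ε₂ / 2 * (bb b * (U.eval b - ur) ^ 2 - bb a * (U.eval a - ul) ^ 2)
        - ε₂ / 2 * (bb b * (u b - ur) ^ 2 - bb a * (u a - ul) ^ 2) := by
  have hbc := hc.contDiff_bb.continuous
  have hu' := h.continuous_deriv
  have hident := h.weakConvDeriv.integral_mul_sub (zl := u a - ul) (zr := u b - ur) hc.contDiff_bb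
    h.natDegree_Q h.natDegree_U (by linarith [h.eval_left]) (by linarith [h.eval_right])
  have hyoung := neg_integral_mul_le (s := fun x => ε₂ * bb x * (deriv u x - Q.derivative.eval x))
    hab hab1 hc.pos (by fun_prop) (Q - U).continuous fun x hx => by
      calc (ε₂ * bb x * (deriv u x - Q.derivative.eval x)) ^ 2
          = bb x ^ 2 * (ε₂ ^ 2 * (deriv u x - Q.derivative.eval x) ^ 2) := by ring
        _ ≤ B ^ 2 * (ε₁ * (deriv u x - Q.derivative.eval x) ^ 2) := by
            exact mul_le_mul (sq_le_sq.2 ((hc.abs_bb_le x hx).trans (le_abs_self B)))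
              (mul_le_mul_of_nonneg_right hεε (sq_nonneg _)) (by positivity) (sq_nonneg B)
        _ ≤ B ^ 2 * η ^ 2 := by gcongr; exact hη x hx
  have hsplit : ∫ x in a..b, ε₂ * bb x * (deriv u x - Q.derivative.eval x) * (Q - U).eval x
      = ε₂ * (∫ x in a..b, bb x * deriv u x * (Q - U).eval x)
        - ε₂ * ∫ x in a..b, bb x * Q.derivative.eval x * (Q - U).eval x := by
    rw [← intervalIntegral.integral_const_mul, ← intervalIntegral.integral_const_mul,
      ← intervalIntegral.integral_sub (Continuous.intervalIntegrable (by fun_prop) _ _)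
      (Continuous.intervalIntegrable (by fun_prop) _ _)]
    exact intervalIntegral.integral_congr fun x _ => by ring
  rw [hsplit] at hyoung
  simp only [eval_sub, h.eval_left, h.eval_right] at hident hyoung ⊢
  linear_combination ε₂ * hident + hyoung

theorem reaction_le (h : CellSolution bb u a b n Q U dU Dc D ul ur)
    (hc : CoefficientBounds ε₂ γ B bb rr (Icc a b)) (hab : a ≤ b) (hab1 : b - a ≤ 1)
    (hη : ∀ x ∈ Icc a b, |u x - Q.eval x| ≤ η) :
    (∫ x in a..b, rr x * U.eval x * (Q - U).eval x)
        - (∫ x in a..b, rr x * u x * (Q - U).eval x)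
      ≤ γ / 4 * (∫ x in a..b, (Q - U).eval x ^ 2) + B ^ 2 * η ^ 2 / γ
        - ∫ x in a..b, rr x * (Q - U).eval x ^ 2 := by
  have hrc := hc.continuous_rr
  have huc := h.contDiff.continuous
  have hyoung := neg_integral_mul_le (s := fun x => rr x * (u x - Q.eval x)) hab hab1 hc.pos
    (by fun_prop) (Q - U).continuous fun x hx => by
      rw [mul_pow]
      exact mul_le_mul (sq_le_sq.2 ((hc.abs_rr_le x hx).trans (le_abs_self B)))
        (sq_le_sq.2 ((hη x hx).trans (le_abs_self η))) (sq_nonneg _) (sq_nonneg B)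
  have hsplit : (∫ x in a..b, rr x * U.eval x * (Q - U).eval x)
      = (∫ x in a..b, rr x * u x * (Q - U).eval x)
        - (∫ x in a..b, rr x * (u x - Q.eval x) * (Q - U).eval x)
        - ∫ x in a..b, rr x * (Q - U).eval x ^ 2 := by
    rw [← intervalIntegral.integral_sub, ← intervalIntegral.integral_sub]
    · exact intervalIntegral.integral_congr fun x _ => by simp only [eval_sub]; ring
    all_goals exact Continuous.intervalIntegrable (by fun_prop) _ _
  linarith

theorem residual_le (h : CellSolution bb u a b n Q U dU Dc D ul ur)
    (hc : CoefficientBounds ε₂ γ B bb rr (Icc a b))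
    (hab : a < b) (hab1 : b - a ≤ 1) (hε₁ : 0 ≤ ε₁) (hε₂ : 0 ≤ ε₂) (hεε : ε₂ ^ 2 ≤ ε₁)
    (hf : ∀ x ∈ Icc a b, -ε₁ * deriv (deriv u) x + ε₂ * bb x * deriv u x + rr x * u x = ff x)
    (hη : ∀ x ∈ Icc a b, |u x - Q.eval x| ≤ η)
    (hη' : ∀ x ∈ Icc a b, ε₁ * (deriv u x - Q.derivative.eval x) ^ 2 ≤ η ^ 2) :
    cellResidual ε₁ ε₂ rr ff a b Q U dU Dc
      ≤ -(3 / 4) * (ε₁ * ∫ x in a..b, (Q.derivative - dU).eval x ^ 2)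
        - γ / 2 * (∫ x in a..b, (Q - U).eval x ^ 2)
        + 1 / 2 * (ε₁ * ((n : ℝ) + 1) ^ 2 / (b - a) * ((U.eval b - ur) ^ 2 + (U.eval a - ul) ^ 2))
        + 1 / 2 * (ε₂ * bb b * (U.eval b - ur) ^ 2)
        + (nodalFlux ε₁ ε₂ bb u b (u b - ur) - nodalFlux ε₁ ε₂ bb u a (u a - ul))
        + (7 + 2 * B ^ 2 / γ) * (((n : ℝ) + 1) ^ 2 * η ^ 2) := by
  have hbc := hc.contDiff_bb.continuous
  have hb'c := hc.contDiff_bb.continuous_deriv le_rfl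
  have hrc := hc.continuous_rr
  have huc := h.contDiff.continuous
  have hu' := h.continuous_deriv
  have hu'' : Continuous (deriv (deriv u)) :=
    (((contDiff_succ_iff_deriv (n := 1)).1 h.contDiff).2.2).continuous_deriv le_rfl
  have hsplit : ∫ x in a..b, ff x * (Q - U).eval x
      = -ε₁ * (∫ x in a..b, (Q - U).eval x * deriv (deriv u) x)
        + ε₂ * (∫ x in a..b, bb x * deriv u x * (Q - U).eval x)
        + ∫ x in a..b, rr x * u x * (Q - U).eval x := by
    rw [← intervalIntegral.integral_const_mul, ← intervalIntegral.integral_const_mul,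
      ← intervalIntegral.integral_add, ← intervalIntegral.integral_add]
    · refine intervalIntegral.integral_congr fun x hx => ?_
      simp only [← hf x (uIcc_of_le hab.le ▸ hx)]; ring
    all_goals exact Continuous.intervalIntegrable (by fun_prop) _ _
  have hcoercive := integral_le_mul_integral_add_mul_integral hab.le (α := 1) (β := -(ε₂ / 2))
    (f := fun x => γ * (Q - U).eval x ^ 2) (g := fun x => rr x * (Q - U).eval x ^ 2)
    (h := fun x => deriv bb x * (Q - U).eval x ^ 2) (by fun_prop) (by fun_prop) (by fun_prop)
    fun x hx => by
      linarith [mul_le_mul_of_nonneg_right (hc.le_sub x hx) (sq_nonneg ((Q - U).eval x))]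
  rw [intervalIntegral.integral_const_mul] at hcoercive
  have hflux : 0 ≤ ε₂ * (bb a * (U.eval a - ul) ^ 2) :=
    mul_nonneg hε₂ (mul_nonneg (hc.bb_nonneg a (left_mem_Icc.2 hab.le)) (sq_nonneg _))
  have hBη : B ^ 2 * η ^ 2 / γ ≤ B ^ 2 / γ * (((n : ℝ) + 1) ^ 2 * η ^ 2) := by
    have := hc.pos
    rw [mul_div_right_comm]
    gcongr
    exact le_mul_of_one_le_left (sq_nonneg η) (one_le_pow₀ (le_add_of_nonneg_left n.cast_nonneg))
  rw [cellResidual, hsplit, nodalFlux, nodalFlux]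
  linear_combination h.diffusion_le hab hab1 hε₁ hη' + h.convection_le hc hab.le hab1 hεε hη'
    + h.reaction_le hc hab.le hab1 hη + hcoercive + 1 / 2 * hflux + 2 * hBη

theorem energy_error_le (h : CellSolution bb u a b n Q U dU Dc D ul ur)
    (hab : a ≤ b) (hab1 : b - a ≤ 1) (hε₁ : 0 ≤ ε₁)
    (hη : ∀ x ∈ Icc a b, |u x - Q.eval x| ≤ η)
    (hη' : ∀ x ∈ Icc a b, ε₁ * (deriv u x - Q.derivative.eval x) ^ 2 ≤ η ^ 2) :
    ε₁ * (∫ x in a..b, D.eval x ^ 2) + (∫ x in a..b, (u x - U.eval x) ^ 2)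
      ≤ 2 * (ε₁ * ∫ x in a..b, (Q.derivative - dU).eval x ^ 2)
        + 2 * (∫ x in a..b, (Q - U).eval x ^ 2) + 4 * η ^ 2 := by
  have huc := h.contDiff.continuous
  have hD := mul_le_mul_of_nonneg_left (integral_le_mul_integral_add_mul_integral hab
    (f := fun x => D.eval x ^ 2) (g := fun x => (Q.derivative - dU).eval x ^ 2)
    (h := fun x => (D - (Q.derivative - dU)).eval x ^ 2) (α := 2) (β := 2)
    (by fun_prop) (by fun_prop) (by fun_prop) fun x _ => by
      rw [eval_sub D]
      linarith [sq_nonneg (D.eval x - 2 * (Q.derivative - dU).eval x)]) hε₁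
  have hU := integral_le_mul_integral_add_mul_integral hab
    (f := fun x => (u x - U.eval x) ^ 2) (g := fun x => (Q - U).eval x ^ 2)
    (h := fun x => (u x - Q.eval x) ^ 2) (α := 2) (β := 2)
    (by fun_prop) (by fun_prop) (by fun_prop) fun x _ => by
      rw [eval_sub]
      linarith [sq_nonneg (u x + U.eval x - 2 * Q.eval x)]
  have hQ := integral_le_of_forall_le hab hab1 (f := fun x => (u x - Q.eval x) ^ 2)
    (by fun_prop) (sq_nonneg η) fun x hx => sq_le_sq.2 ((hη x hx).trans (le_abs_self η))
  linear_combination hD + hU + 2 * h.mul_integral_projection_sq_le hab hab1 hε₁ hη' + 2 * hQ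

/- The Galerkin residual and the flux difference both vanish after summation over the mesh. -/
theorem error_le (h : CellSolution bb u a b n Q U dU Dc D ul ur)
    (hc : CoefficientBounds ε₂ γ B bb rr (Icc a b))
    (hab : a < b) (hab1 : b - a ≤ 1) (hε₁ : 0 ≤ ε₁) (hε₂ : 0 ≤ ε₂) (hεε : ε₂ ^ 2 ≤ ε₁)
    (hf : ∀ x ∈ Icc a b, -ε₁ * deriv (deriv u) x + ε₂ * bb x * deriv u x + rr x * u x = ff x)
    (hη : ∀ x ∈ Icc a b, |u x - Q.eval x| ≤ η)
    (hη' : ∀ x ∈ Icc a b, ε₁ * (deriv u x - Q.derivative.eval x) ^ 2 ≤ η ^ 2) :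
    ε₁ * (∫ x in a..b, D.eval x ^ 2) + (∫ x in a..b, (u x - U.eval x) ^ 2)
        + ε₁ * ((n : ℝ) + 1) ^ 2 / (b - a) * ((U.eval b - ur) ^ 2 + (U.eval a - ul) ^ 2)
        + 2 * (ε₂ * bb b * (U.eval b - ur) ^ 2)
      ≤ (4 + 4 / γ) *
          (ε₁ * ((n : ℝ) + 1) ^ 2 / (b - a) * ((U.eval b - ur) ^ 2 + (U.eval a - ul) ^ 2)
            + ε₂ * bb b * (U.eval b - ur) ^ 2
            - cellResidual ε₁ ε₂ rr ff a b Q U dU Dc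
            + (nodalFlux ε₁ ε₂ bb u b (u b - ur) - nodalFlux ε₁ ε₂ bb u a (u a - ul)))
        + ((4 + 4 / γ) * (7 + 2 * B ^ 2 / γ) + 4) * (((n : ℝ) + 1) ^ 2 * η ^ 2) := by
  have hγ := hc.pos
  have hstab : 0 ≤ ε₁ * ((n : ℝ) + 1) ^ 2 / (b - a)
      * ((U.eval b - ur) ^ 2 + (U.eval a - ul) ^ 2) := by
    have := sub_pos.2 hab
    positivity
  have hconv : 0 ≤ ε₂ * bb b * (U.eval b - ur) ^ 2 := by
    have := hc.bb_nonneg b (right_mem_Icc.2 hab.le)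
    positivity
  have hdiff : 0 ≤ ε₁ * ∫ x in a..b, (Q.derivative - dU).eval x ^ 2 :=
    mul_nonneg hε₁ (intervalIntegral.integral_nonneg hab.le fun _ _ => sq_nonneg _)
  have hreac : 0 ≤ γ * ∫ x in a..b, (Q - U).eval x ^ 2 :=
    mul_nonneg hγ.le (intervalIntegral.integral_nonneg hab.le fun _ _ => sq_nonneg _)
  have hη2 : η ^ 2 ≤ ((n : ℝ) + 1) ^ 2 * η ^ 2 :=
    le_mul_of_one_le_left (sq_nonneg η) (one_le_pow₀ (le_add_of_nonneg_left n.cast_nonneg))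
  have henergy := h.energy_error_le hab.le hab1 hε₁ hη hη'
  have hres := h.residual_le hc hab hab1 hε₁ hε₂ hεε hf hη hη'
  have hγ4 : 4 / γ * (γ * ∫ x in a..b, (Q - U).eval x ^ 2)
      = 4 * ∫ x in a..b, (Q - U).eval x ^ 2 := by field_simp
  have hrest : 0 ≤ 4 / γ * (3 / 4 * (ε₁ * ∫ x in a..b, (Q.derivative - dU).eval x ^ 2)
      + 1 / 2 * (ε₁ * ((n : ℝ) + 1) ^ 2 / (b - a) * ((U.eval b - ur) ^ 2 + (U.eval a - ul) ^ 2))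
      + 1 / 2 * (ε₂ * bb b * (U.eval b - ur) ^ 2)) := by positivity
  linear_combination henergy + (4 + 4 / γ) * hres - 1 / 2 * hγ4 + hrest + hdiff + 2 * hreac
    + hstab + 4 * hη2

end CellSolution

end CellEnergy

section GlobalError

open Polynomial

theorem sum_succ_sub_castSucc {N : ℕ} (g : Fin (N + 1) → ℝ) :
    ∑ j : Fin N, (g j.succ - g j.castSucc) = g (Fin.last N) - g 0 := by
  rw [Finset.sum_sub_distrib]
  linarith [Fin.sum_univ_succ g, Fin.sum_univ_castSucc g]

theorem Mesh.xl_lt_xr {N : ℕ} (m : Mesh N) (j : Fin N) : m.xl j < m.xr j :=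
  m.mono Fin.castSucc_lt_succ

theorem Mesh.pt_mem_Icc {N : ℕ} (m : Mesh N) (i : Fin (N + 1)) : m.pt i ∈ Icc (0 : ℝ) 1 :=
  ⟨m.left ▸ m.mono.monotone (Fin.zero_le i), m.right ▸ m.mono.monotone (Fin.le_last i)⟩

theorem Mesh.Icc_subset {N : ℕ} (m : Mesh N) (j : Fin N) :
    Icc (m.xl j) (m.xr j) ⊆ Icc (0 : ℝ) 1 :=
  Icc_subset_Icc (m.pt_mem_Icc _).1 (m.pt_mem_Icc _).2

theorem Mesh.xr_sub_xl_le_one {N : ℕ} (m : Mesh N) (j : Fin N) : m.xr j - m.xl j ≤ 1 :=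
  (sub_le_self _ (m.pt_mem_Icc _).1).trans (m.pt_mem_Icc _).2

variable {N n : ℕ} {m : Mesh N} {ε₁ ε₂ γ B η : ℝ} {u bb rr ff : ℝ → ℝ}
  {Q U dU Dc D : Fin N → ℝ[X]} {upb : Fin (N + 1) → ℝ}

theorem sum_nodalFlux_sub_eq_zero (m : Mesh N) (hu₀ : u 0 = 0) (hu₁ : u 1 = 0) (hub₀ : upb 0 = 0)
    (hub₁ : upb (Fin.last N) = 0) :
    ∑ j : Fin N, (nodalFlux ε₁ ε₂ bb u (m.xr j) (u (m.xr j) - upb j.succ)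
      - nodalFlux ε₁ ε₂ bb u (m.xl j) (u (m.xl j) - upb j.castSucc)) = 0 := by
  refine (sum_succ_sub_castSucc
    fun i => nodalFlux ε₁ ε₂ bb u (m.pt i) (u (m.pt i) - upb i)).trans ?_
  simp [nodalFlux, m.left, m.right, hu₀, hu₁, hub₀, hub₁]

/-- Galerkin orthogonality, tested with the discrete error `Q - U`. -/
theorem sum_cellResidual_eq
    (hwg : IsWGsol m ε₁ ε₂ bb rr ff (n + 1) (fun j t => (U j).eval t) upb
      (fun j t => (dU j).eval t) (fun j t => (Dc j).eval t))
    (h : ∀ j, CellSolution bb u (m.xl j) (m.xr j) n (Q j) (U j) (dU j) (Dc j) (D j)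
      (upb j.castSucc) (upb j.succ))
    (hu₀ : u 0 = 0) (hu₁ : u 1 = 0) :
    ∑ j : Fin N, (ε₁ * ((n : ℝ) + 1) ^ 2 / (m.xr j - m.xl j)
        * (((U j).eval (m.xr j) - upb j.succ) ^ 2 + ((U j).eval (m.xl j) - upb j.castSucc) ^ 2)
      + ε₂ * bb (m.xr j) * ((U j).eval (m.xr j) - upb j.succ) ^ 2
      - cellResidual ε₁ ε₂ rr ff (m.xl j) (m.xr j) (Q j) (U j) (dU j) (Dc j)) = 0 := by
  obtain ⟨-, hub₀, hub₁, -, -, hgal⟩ := hwg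
  have hG := hgal (fun j t => (Q j - U j).eval t) (fun i => u (m.pt i) - upb i)
    (fun j => ⟨_, (h j).natDegree_sub_le, fun _ => rfl⟩) (by simp [m.left, hu₀, hub₀])
    (by simp [m.right, hu₁, hub₁]) _ fun j => (h j).weakDeriv_sub
  rw [← sub_eq_zero] at hG
  simp only [Aform, Sform, Scform, Finset.mul_sum, ← Finset.sum_add_distrib,
    ← Finset.sum_sub_distrib] at hG
  rw [← neg_zero, ← hG, ← Finset.sum_neg_distrib]
  refine Finset.sum_congr rfl fun j _ => ?_
  have hl : u (m.xl j) = u (m.pt j.castSucc) := rfl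
  have hr : u (m.xr j) = u (m.pt j.succ) := rfl
  simp only [cellResidual, stdPen, Mesh.width, Nat.cast_add, Nat.cast_one,
    eval_sub _ _ (m.xl j), eval_sub _ _ (m.xr j), (h j).eval_left, (h j).eval_right, hl, hr]
  ring

theorem normP2_sub_le_sum (hε₂ : 0 ≤ ε₂) (hbb : ∀ x ∈ Icc (0 : ℝ) 1, 0 ≤ bb x) :
    normP2 m ε₁ ε₂ bb (stdPen m ε₁ (n + 1)) (fun j t => u t - (U j).eval t)
        (fun i => u (m.pt i) - upb i) (fun j t => (D j).eval t)
      ≤ ∑ j : Fin N, (ε₁ * (∫ x in m.xl j..m.xr j, (D j).eval x ^ 2)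
        + (∫ x in m.xl j..m.xr j, (u x - (U j).eval x) ^ 2)
        + ε₁ * ((n : ℝ) + 1) ^ 2 / (m.xr j - m.xl j)
          * (((U j).eval (m.xr j) - upb j.succ) ^ 2 + ((U j).eval (m.xl j) - upb j.castSucc) ^ 2)
        + 2 * (ε₂ * bb (m.xr j) * ((U j).eval (m.xr j) - upb j.succ) ^ 2)) := by
  simp only [normP2, Sform, Scform, Jsemi2, Finset.mul_sum, ← Finset.sum_add_distrib]
  refine Finset.sum_le_sum fun j _ => ?_
  have hflux : 0 ≤ ε₂ * bb (m.xr j) * ((U j).eval (m.xr j) - upb j.succ) ^ 2 := by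
    have := hbb _ (m.pt_mem_Icc j.succ)
    exact mul_nonneg (mul_nonneg hε₂ this) (sq_nonneg _)
  have hweight : (if j.succ = Fin.last N then (1 : ℝ) / 2 else 1) ≤ 1 := by
    split_ifs <;> norm_num
  have hl : u (m.xl j) = u (m.pt j.castSucc) := rfl
  have hr : u (m.xr j) = u (m.pt j.succ) := rfl
  simp only [stdPen, Mesh.width, Nat.cast_add, Nat.cast_one, hl, hr]
  linear_combination mul_le_mul_of_nonneg_right hweight hflux

theorem IsWGsol.normP2_error_le (hε₁ : 0 ≤ ε₁) (hε₂ : 0 ≤ ε₂) (hεε : ε₂ ^ 2 ≤ ε₁)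
    (hc : CoefficientBounds ε₂ γ B bb rr (Icc 0 1)) (hu : ContDiff ℝ 2 u)
    (hbvp : SolvesBVP ε₁ ε₂ bb rr ff u) {up0 Dup Dcup Derr : Fin N → ℝ → ℝ}
    (hwg : IsWGsol m ε₁ ε₂ bb rr ff (n + 1) up0 upb Dup Dcup)
    (hD : IsWeakDeriv m n (fun j t => u t - up0 j t) (fun i => u (m.pt i) - upb i) Derr)
    (hQ : ∀ j, (Q j).natDegree ≤ n + 1)
    (hQl : ∀ j, (Q j).eval (m.xl j) = u (m.xl j)) (hQr : ∀ j, (Q j).eval (m.xr j) = u (m.xr j))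
    (hη : ∀ j, ∀ x ∈ Icc (m.xl j) (m.xr j), |u x - (Q j).eval x| ≤ η)
    (hη' : ∀ j, ∀ x ∈ Icc (m.xl j) (m.xr j),
      ε₁ * (deriv u x - (Q j).derivative.eval x) ^ 2 ≤ η ^ 2) :
    normP2 m ε₁ ε₂ bb (stdPen m ε₁ (n + 1)) (fun j t => u t - up0 j t)
        (fun i => u (m.pt i) - upb i) Derr
      ≤ N * (((4 + 4 / γ) * (7 + 2 * B ^ 2 / γ) + 4) * (((n : ℝ) + 1) ^ 2 * η ^ 2)) := by
  have ⟨hup0, hub₀, hub₁, hdU, hDc, _⟩ := hwg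
  obtain ⟨U, hU, rfl⟩ := exists_polynomials hup0
  obtain ⟨dU, -, rfl⟩ := exists_polynomials fun j => (hdU j).1
  obtain ⟨Dc, -, rfl⟩ := exists_polynomials fun j => (hDc j).1
  obtain ⟨D, -, rfl⟩ := exists_polynomials fun j => (hD j).1
  have hcell (j : Fin N) : CellSolution bb u (m.xl j) (m.xr j) n (Q j) (U j) (dU j) (Dc j) (D j)
      (upb j.castSucc) (upb j.succ) :=
    ⟨hu, hQ j, hQl j, hQr j, hU j, hdU j, hDc j, hD j⟩
  refine (normP2_sub_le_sum hε₂ hc.bb_nonneg).trans ((Finset.sum_le_sum fun j _ =>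
    (hcell j).error_le (hc.mono (m.Icc_subset j)) (m.xl_lt_xr j) (m.xr_sub_xl_le_one j) hε₁ hε₂ hεε
      (fun x hx => hbvp.2.2 x (m.Icc_subset j hx)) (hη j) (hη' j)).trans_eq ?_)
  rw [Finset.sum_add_distrib, ← Finset.mul_sum, Finset.sum_add_distrib,
    sum_cellResidual_eq hwg hcell hbvp.1 hbvp.2.1,
    sum_nodalFlux_sub_eq_zero m hbvp.1 hbvp.2.1 hub₀ hub₁, add_zero, mul_zero, zero_add,
    Finset.sum_const, Finset.card_univ, Fintype.card_fin, nsmul_eq_mul]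

end GlobalError

section MaximumPrinciple

/-- The singularly perturbed operator `-ε² v'' + ε₂ b v' + r v`. The diffusion parameter is written
as a square, `ε₁ = ε²`, so that `ε` is the width of the boundary layers. -/
def diffOp (ε ε₂ : ℝ) (b r v : ℝ → ℝ) (x : ℝ) : ℝ :=
  -ε ^ 2 * deriv (deriv v) x + ε₂ * b x * deriv v x + r x * v x

variable {ε ε₂ γ B ρ : ℝ} {b r v w : ℝ → ℝ}

theorem diffOp_add_const_mul (hv : ContDiff ℝ 2 v) (hw : ContDiff ℝ 2 w) (c x : ℝ) :
    diffOp ε ε₂ b r (fun t => v t + c * w t) x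
      = diffOp ε ε₂ b r v x + c * diffOp ε ε₂ b r w x := by
  have hderiv : deriv (fun t => v t + c * w t) = fun t => deriv v t + c * deriv w t :=
    funext fun t => ((hv.differentiable two_ne_zero t).hasDerivAt.add
      ((hw.differentiable two_ne_zero t).hasDerivAt.const_mul c)).deriv
  have hderiv2 := ((hv.differentiable_deriv_two x).hasDerivAt.add
      ((hw.differentiable_deriv_two x).hasDerivAt.const_mul c)).deriv
  simp only [diffOp, hderiv]
  linear_combination (-ε ^ 2) * hderiv2

theorem deriv_deriv_nonneg_of_isLocalMin {x : ℝ} (hv : ContinuousAt v x) (h : IsLocalMin v x) :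
    0 ≤ deriv (deriv v) x := by
  by_contra! hneg
  have hmax := isLocalMax_of_deriv_deriv_neg hneg h.deriv_eq_zero hv
  have hconst : v =ᶠ[nhds x] fun _ => v x := h.and hmax |>.mono fun _ hz => le_antisymm hz.2 hz.1
  have := hconst.deriv.deriv_eq
  simp only [deriv_const', deriv_const] at this
  exact hneg.ne this

theorem nonneg_of_diffOp_nonneg {s t : ℝ} (hst : s ≤ t) (hv : ContinuousOn v (Icc s t))
    (hr : ∀ x ∈ Ioo s t, 0 < r x) (hL : ∀ x ∈ Ioo s t, 0 ≤ diffOp ε ε₂ b r v x)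
    (hs : 0 ≤ v s) (ht : 0 ≤ v t) : ∀ x ∈ Icc s t, 0 ≤ v x := by
  obtain ⟨x₀, hx₀, hmin⟩ := isCompact_Icc.exists_isMinOn (nonempty_Icc.2 hst) hv
  intro x hx
  refine le_trans ?_ (hmin hx)
  by_contra! hneg
  have hx₀' : x₀ ∈ Ioo s t := by
    refine ⟨hx₀.1.lt_of_ne ?_, hx₀.2.lt_of_ne ?_⟩ <;> rintro rfl <;> linarith
  have hnhds := Icc_mem_nhds hx₀'.1 hx₀'.2
  have hloc := hmin.isLocalMin hnhds
  have hd2 := deriv_deriv_nonneg_of_isLocalMin (hv.continuousAt hnhds) hloc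
  have hL₀ := hL x₀ hx₀'
  rw [diffOp, hloc.deriv_eq_zero] at hL₀
  linarith [mul_nonneg (sq_nonneg ε) hd2, mul_neg_of_pos_of_neg (hr x₀ hx₀') hneg]

theorem abs_le_of_abs_diffOp_le {s t : ℝ} (hst : s ≤ t) (hv : ContDiff ℝ 2 v)
    (hw : ContDiff ℝ 2 w) (hr : ∀ x ∈ Ioo s t, 0 < r x)
    (hL : ∀ x ∈ Ioo s t, |diffOp ε ε₂ b r v x| ≤ diffOp ε ε₂ b r w x)
    (hs : |v s| ≤ w s) (ht : |v t| ≤ w t) : ∀ x ∈ Icc s t, |v x| ≤ w x := by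
  have hnonneg (c : ℝ) (hc : |c| = 1) : ∀ x ∈ Icc s t, 0 ≤ w x + c * v x := by
    have hcv {y z : ℝ} (h : |y| ≤ z) : 0 ≤ z + c * y := by
      have := neg_abs_le (c * y)
      rw [abs_mul, hc, one_mul] at this
      linarith
    refine nonneg_of_diffOp_nonneg (ε := ε) (ε₂ := ε₂) (b := b) hst
      (hw.continuous.add (hv.continuous.const_mul c)).continuousOn hr (fun x hx => ?_) (hcv hs)
      (hcv ht)
    rw [diffOp_add_const_mul hw hv]
    exact hcv (hL x hx)
  intro x hx
  have hpos := hnonneg 1 abs_one x hx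
  have hneg := hnonneg (-1) (by simp) x hx
  exact abs_le.2 ⟨by linarith, by linarith⟩

/-- The sum of two boundary layer functions of rate `k` at the endpoints of `[0,1]`. -/
def boundaryLayers (k x : ℝ) : ℝ := Real.exp (-k * x) + Real.exp (-k * (1 - x))

theorem contDiff_boundaryLayers (k : ℝ) {n : WithTop ℕ∞} : ContDiff ℝ n (boundaryLayers k) := by
  unfold boundaryLayers
  fun_prop

theorem boundaryLayers_nonneg (k x : ℝ) : 0 ≤ boundaryLayers k x := by
  unfold boundaryLayers
  positivity

theorem one_le_boundaryLayers_zero (k : ℝ) : 1 ≤ boundaryLayers k 0 := by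
  simp [boundaryLayers, Real.exp_nonneg]

theorem one_le_boundaryLayers_one (k : ℝ) : 1 ≤ boundaryLayers k 1 := by
  simp [boundaryLayers, Real.exp_nonneg]

theorem deriv_boundaryLayers (k : ℝ) : deriv (boundaryLayers k)
    = fun x => -k * Real.exp (-k * x) + k * Real.exp (-k * (1 - x)) := by
  funext x
  have hl := ((hasDerivAt_id x).const_mul (-k)).exp
  have hr := (((hasDerivAt_id x).const_sub 1).const_mul (-k)).exp
  refine (hl.add hr).deriv.trans ?_
  simp only [id]
  ring

theorem deriv_deriv_boundaryLayers (k x : ℝ) :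
    deriv (deriv (boundaryLayers k)) x = k ^ 2 * boundaryLayers k x := by
  have hl := (((hasDerivAt_id x).const_mul (-k)).exp).const_mul (-k)
  have hr := ((((hasDerivAt_id x).const_sub 1).const_mul (-k)).exp).const_mul k
  rw [deriv_boundaryLayers]
  refine (hl.add hr).deriv.trans ?_
  simp only [id, boundaryLayers]
  ring

theorem abs_deriv_boundaryLayers_le {k : ℝ} (hk : 0 ≤ k) (x : ℝ) :
    |deriv (boundaryLayers k) x| ≤ k * boundaryLayers k x := by
  have hl := mul_nonneg hk (Real.exp_nonneg (-k * x))
  have hr := mul_nonneg hk (Real.exp_nonneg (-k * (1 - x)))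
  rw [deriv_boundaryLayers, boundaryLayers, abs_le]
  constructor <;> linarith

theorem diffOp_sub (hv : ContDiff ℝ 2 v) (hw : ContDiff ℝ 2 w) (x : ℝ) :
    diffOp ε ε₂ b r (fun t => v t - w t) x = diffOp ε ε₂ b r v x - diffOp ε ε₂ b r w x := by
  simpa only [neg_one_mul, ← sub_eq_add_neg] using
    diffOp_add_const_mul (ε := ε) (ε₂ := ε₂) (b := b) (r := r) hv hw (-1) x

theorem diffOp_boundaryLayers_nonneg {α x : ℝ} (hε : 0 < ε) (hε₂ : 0 ≤ ε₂) (hεε : ε₂ ≤ ε)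
    (hα : 0 ≤ α) (hαγ : α ^ 2 + B * α ≤ γ) (hb : |b x| ≤ B) (hr : γ ≤ r x) :
    0 ≤ diffOp ε ε₂ b r (boundaryLayers (α / ε)) x := by
  have hB := (abs_nonneg _).trans hb
  have hE := boundaryLayers_nonneg (α / ε) x
  have hdiff : ε ^ 2 * ((α / ε) ^ 2 * boundaryLayers (α / ε) x)
      = α ^ 2 * boundaryLayers (α / ε) x := by field_simp
  have hconv : -(B * α * boundaryLayers (α / ε) x)
      ≤ ε₂ * b x * deriv (boundaryLayers (α / ε)) x := by
    refine neg_le_of_abs_le ?_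
    calc _ = ε₂ * (|b x| * |deriv (boundaryLayers (α / ε)) x|) := by
          rw [abs_mul, abs_mul, abs_of_nonneg hε₂, mul_assoc]
      _ ≤ ε * (B * (α / ε * boundaryLayers (α / ε) x)) := by
          gcongr
          exact abs_deriv_boundaryLayers_le (by positivity) x
      _ = _ := by field_simp
  have hreac : (α ^ 2 + B * α) * boundaryLayers (α / ε) x ≤ r x * boundaryLayers (α / ε) x :=
    mul_le_mul_of_nonneg_right (hαγ.trans hr) hE
  rw [diffOp, deriv_deriv_boundaryLayers]
  linarith

theorem abs_le_add_boundaryLayers {α V : ℝ} (hε : 0 < ε) (hε₂ : 0 ≤ ε₂) (hεε : ε₂ ≤ ε) (hγ : 0 < γ)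
    (hα : 0 ≤ α) (hαγ : α ^ 2 + B * α ≤ γ) (hV : 0 ≤ V) (hv : ContDiff ℝ 2 v)
    (hb : ∀ x ∈ Icc (0 : ℝ) 1, |b x| ≤ B) (hr : ∀ x ∈ Icc (0 : ℝ) 1, γ ≤ r x)
    (hL : ∀ x ∈ Icc (0 : ℝ) 1, |diffOp ε ε₂ b r v x| ≤ ρ) (hv₀ : |v 0| ≤ V) (hv₁ : |v 1| ≤ V) :
    ∀ x ∈ Icc (0 : ℝ) 1, |v x| ≤ ρ / γ + V * boundaryLayers (α / ε) x := by
  have hρ : 0 ≤ ρ := (abs_nonneg _).trans (hL 0 (left_mem_Icc.2 zero_le_one))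
  have hend {y : ℝ} (hy : 1 ≤ boundaryLayers (α / ε) y) :
      V ≤ ρ / γ + V * boundaryLayers (α / ε) y := by
    linarith [le_mul_of_one_le_right hV hy, div_nonneg hρ hγ.le]
  refine abs_le_of_abs_diffOp_le (ε := ε) (ε₂ := ε₂) (b := b) zero_le_one hv
    (contDiff_const.add (contDiff_const.mul (contDiff_boundaryLayers _)))
    (fun x hx => hγ.trans_le (hr x (Ioo_subset_Icc_self hx)))
    (fun x hx => (hL x (Ioo_subset_Icc_self hx)).trans ?_)
    (hv₀.trans (hend (one_le_boundaryLayers_zero _)))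
    (hv₁.trans (hend (one_le_boundaryLayers_one _)))
  replace hx := Ioo_subset_Icc_self hx
  rw [diffOp_add_const_mul contDiff_const (contDiff_boundaryLayers _)]
  have hlayer := diffOp_boundaryLayers_nonneg hε hε₂ hεε hα hαγ (hb x hx) (hr x hx)
  have hconst : ρ ≤ diffOp ε ε₂ b r (fun _ => ρ / γ) x := by
    have : γ * (ρ / γ) ≤ r x * (ρ / γ) :=
      mul_le_mul_of_nonneg_right (hr x hx) (div_nonneg hρ hγ.le)
    simpa [diffOp, mul_div_cancel₀ _ hγ.ne'] using this
  linarith [mul_nonneg hV hlayer]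

end MaximumPrinciple

section DerivativeBounds

open scoped ContDiff Nat

variable {g y z : ℝ → ℝ} {s : Set ℝ} {A A' C γ₀ γ Λ θ : ℝ} {m n : ℕ}

theorem eqOn_iteratedDeriv (hs : UniqueDiffOn ℝ s) (hg : ContDiff ℝ ∞ g) (hy : ContDiff ℝ ∞ y)
    (h : EqOn g y s) (n : ℕ) : EqOn (iteratedDeriv n g) (iteratedDeriv n y) s := fun x hx => by
  have hle : (n : WithTop ℕ∞) ≤ ∞ := mod_cast le_top
  rw [← iteratedDerivWithin_eq_iteratedDeriv hs (hg.contDiffAt.of_le hle) hx,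
    ← iteratedDerivWithin_eq_iteratedDeriv hs (hy.contDiffAt.of_le hle) hx,
    iteratedDerivWithin_congr h hx]

/-- The derivative bounds `|g⁽ᵏ⁾| ≤ C k! γ₀ᵏ`, for all `k`, of an analytic function on `s`. -/
structure AnalyticBoundsOn (s : Set ℝ) (C γ₀ : ℝ) (g : ℝ → ℝ) : Prop where
  contDiff : ContDiff ℝ ∞ g
  abs_iteratedDeriv_le : ∀ k, ∀ x ∈ s, |iteratedDeriv k g x| ≤ C * k ! * γ₀ ^ k

/-- The bounds `|y⁽ᵏ⁾| ≤ A Λᵏ` on `s`, for `k ≤ n`, of a smooth function varying on the length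
scale `Λ⁻¹`. -/
structure ScaleBoundsOn (s : Set ℝ) (n : ℕ) (A Λ : ℝ) (y : ℝ → ℝ) : Prop where
  contDiff : ContDiff ℝ ∞ y
  abs_iteratedDeriv_le : ∀ k ≤ n, ∀ x ∈ s, |iteratedDeriv k y x| ≤ A * Λ ^ k

namespace ScaleBoundsOn

theorem abs_le (h : ScaleBoundsOn s n A Λ y) {x : ℝ} (hx : x ∈ s) : |y x| ≤ A := by
  simpa using h.abs_iteratedDeriv_le 0 (Nat.zero_le n) x hx

theorem mono_order (h : ScaleBoundsOn s n A Λ y) (hmn : m ≤ n) : ScaleBoundsOn s m A Λ y :=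
  ⟨h.contDiff, fun k hk => h.abs_iteratedDeriv_le k (hk.trans hmn)⟩

theorem mono_const (h : ScaleBoundsOn s n A Λ y) (hΛ : 0 ≤ Λ) (hA : A ≤ A') :
    ScaleBoundsOn s n A' Λ y :=
  ⟨h.contDiff, fun k hk x hx => (h.abs_iteratedDeriv_le k hk x hx).trans (by gcongr)⟩

theorem mono_set {t : Set ℝ} (h : ScaleBoundsOn s n A Λ y) (hts : t ⊆ s) :
    ScaleBoundsOn t n A Λ y :=
  ⟨h.contDiff, fun k hk x hx => h.abs_iteratedDeriv_le k hk x (hts hx)⟩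

theorem congr (h : ScaleBoundsOn s n A Λ y) (hs : UniqueDiffOn ℝ s) (hz : ContDiff ℝ ∞ z)
    (hzy : EqOn z y s) : ScaleBoundsOn s n A Λ z :=
  ⟨hz, fun k hk x hx => eqOn_iteratedDeriv hs hz h.contDiff hzy k hx ▸
    h.abs_iteratedDeriv_le k hk x hx⟩

theorem sum {ι : Type*} {t : Finset ι} {a : ι → ℝ} {v : ι → ℝ → ℝ}
    (h : ∀ i ∈ t, ScaleBoundsOn s n (a i) Λ (v i)) :
    ScaleBoundsOn s n (∑ i ∈ t, a i) Λ (fun x => ∑ i ∈ t, v i x) := by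
  refine ⟨ContDiff.sum fun i hi => (h i hi).contDiff, fun k hk x hx => ?_⟩
  have hle : (k : WithTop ℕ∞) ≤ ∞ := mod_cast le_top
  rw [iteratedDeriv_fun_sum fun i hi => (h i hi).contDiff.contDiffAt.of_le hle, Finset.sum_mul]
  exact (Finset.abs_sum_le_sum_abs _ _).trans
    (Finset.sum_le_sum fun i hi => (h i hi).abs_iteratedDeriv_le k hk x hx)

theorem add (hy : ScaleBoundsOn s n A Λ y) (hz : ScaleBoundsOn s n A' Λ z) :
    ScaleBoundsOn s n (A + A') Λ (fun t => y t + z t) := by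
  simpa using sum (t := Finset.univ) (a := ![A, A']) (v := ![y, z])
    (by simpa [Fin.forall_fin_two] using ⟨hy, hz⟩)

theorem const_mul (h : ScaleBoundsOn s n A Λ y) (c : ℝ) :
    ScaleBoundsOn s n (|c| * A) Λ (fun t => c * y t) := by
  refine ⟨contDiff_const.mul h.contDiff, fun k hk x hx => ?_⟩
  rw [iteratedDeriv_const_mul_field, abs_mul, mul_assoc]
  exact mul_le_mul_of_nonneg_left (h.abs_iteratedDeriv_le k hk x hx) (abs_nonneg c)

theorem sub (hy : ScaleBoundsOn s n A Λ y) (hz : ScaleBoundsOn s n A' Λ z) :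
    ScaleBoundsOn s n (A + A') Λ (fun t => y t - z t) := by
  simpa [sub_eq_add_neg] using hy.add (hz.const_mul (-1))

theorem deriv (h : ScaleBoundsOn s (n + 1) A Λ y) : ScaleBoundsOn s n (A * Λ) Λ (deriv y) := by
  refine ⟨(contDiff_infty_iff_deriv.1 h.contDiff).2, fun k hk x hx => ?_⟩
  have := h.abs_iteratedDeriv_le (k + 1) (Nat.succ_le_succ hk) x hx
  rwa [iteratedDeriv_succ', pow_succ', ← mul_assoc] at this

theorem of_deriv (hy : ContDiff ℝ ∞ y) (hA : ∀ x ∈ s, |y x| ≤ A)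
    (h : ScaleBoundsOn s n (A * Λ) Λ (_root_.deriv y)) : ScaleBoundsOn s (n + 1) A Λ y := by
  refine ⟨hy, fun k hk x hx => ?_⟩
  rcases k with _ | k
  · simpa using hA x hx
  · rw [iteratedDeriv_succ', pow_succ', ← mul_assoc]
    exact h.abs_iteratedDeriv_le k (Nat.le_of_succ_le_succ hk) x hx

end ScaleBoundsOn

theorem abs_choose_mul_mul_le {k : ℕ} {G Y : ℝ} (hC : 0 ≤ C) (hγ₀ : 0 ≤ γ₀) (hA : 0 ≤ A)
    (hΛ : 0 ≤ Λ) (hθ : n * γ₀ ≤ θ * Λ) (hkn : k ≤ n) (hG : |G| ≤ C * k ! * γ₀ ^ k)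
    (hY : |Y| ≤ A * Λ ^ (n - k)) : |(n.choose k : ℝ) * G * Y| ≤ C * A * Λ ^ n * θ ^ k := by
  have hchoose : (n.choose k : ℝ) * k ! ≤ (n : ℝ) ^ k := by
    rw [mul_comm]
    exact_mod_cast (Nat.descFactorial_eq_factorial_mul_choose n k).symm.trans_le
      (Nat.descFactorial_le_pow n k)
  have hpow : (n : ℝ) ^ k * γ₀ ^ k ≤ θ ^ k * Λ ^ k := by
    rw [← mul_pow, ← mul_pow]
    exact pow_le_pow_left₀ (by positivity) hθ k
  rw [abs_mul, abs_mul, Nat.abs_cast]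
  calc (n.choose k : ℝ) * |G| * |Y|
      ≤ n.choose k * (C * k ! * γ₀ ^ k) * (A * Λ ^ (n - k)) := by gcongr
    _ = (n.choose k * k !) * γ₀ ^ k * (C * A * Λ ^ (n - k)) := by ring
    _ ≤ (n : ℝ) ^ k * γ₀ ^ k * (C * A * Λ ^ (n - k)) := by gcongr
    _ ≤ θ ^ k * Λ ^ k * (C * A * Λ ^ (n - k)) := by gcongr
    _ = C * A * (Λ ^ k * Λ ^ (n - k)) * θ ^ k := by ring
    _ = C * A * Λ ^ n * θ ^ k := by rw [← pow_add, Nat.add_sub_cancel' hkn]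

namespace AnalyticBoundsOn

theorem abs_le (h : AnalyticBoundsOn s C γ₀ g) {x : ℝ} (hx : x ∈ s) : |g x| ≤ C := by
  simpa using h.abs_iteratedDeriv_le 0 x hx

theorem congr (h : AnalyticBoundsOn s C γ₀ g) (hs : UniqueDiffOn ℝ s) (hz : ContDiff ℝ ∞ z)
    (hzg : EqOn z g s) : AnalyticBoundsOn s C γ₀ z :=
  ⟨hz, fun k x hx => eqOn_iteratedDeriv hs hz h.contDiff hzg k hx ▸
    h.abs_iteratedDeriv_le k x hx⟩

theorem scaleBoundsOn (h : AnalyticBoundsOn s C γ₀ g) (hC : 0 ≤ C) (hγ₀ : 0 ≤ γ₀)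
    (hΛ : n * γ₀ ≤ Λ) : ScaleBoundsOn s n C Λ g := by
  refine ⟨h.contDiff, fun k hk x hx => (h.abs_iteratedDeriv_le k x hx).trans ?_⟩
  have hfact : (k ! : ℝ) ≤ (n : ℝ) ^ k :=
    mod_cast (Nat.factorial_le_pow k).trans (Nat.pow_le_pow_left hk k)
  calc C * k ! * γ₀ ^ k ≤ C * (n : ℝ) ^ k * γ₀ ^ k := by gcongr
    _ = C * (n * γ₀) ^ k := by rw [mul_pow, mul_assoc]
    _ ≤ C * Λ ^ k := by gcongr

theorem mul (hg : AnalyticBoundsOn s C γ₀ g) (hy : ScaleBoundsOn s n A Λ y) (hC : 0 ≤ C)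
    (hγ₀ : 0 ≤ γ₀) (hA : 0 ≤ A) (hΛ : 2 * (n * γ₀) ≤ Λ) :
    ScaleBoundsOn s n (2 * C * A) Λ (fun t => g t * y t) := by
  refine ⟨hg.contDiff.mul hy.contDiff, fun m hm x hx => ?_⟩
  have hΛ0 : 0 ≤ Λ := le_trans (by positivity) hΛ
  have hθ : (m : ℝ) * γ₀ ≤ 1 / 2 * Λ := by
    have : (m : ℝ) * γ₀ ≤ n * γ₀ := by gcongr
    linarith
  have hle : (m : WithTop ℕ∞) ≤ ∞ := mod_cast le_top
  rw [iteratedDeriv_fun_mul (hg.contDiff.contDiffAt.of_le hle) (hy.contDiff.contDiffAt.of_le hle)]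
  calc _ ≤ ∑ i ∈ Finset.range (m + 1), C * A * Λ ^ m * (1 / 2 : ℝ) ^ i :=
        (Finset.abs_sum_le_sum_abs _ _).trans <| Finset.sum_le_sum fun i hi =>
          abs_choose_mul_mul_le hC hγ₀ hA hΛ0 hθ (Finset.mem_range_succ_iff.1 hi)
            (hg.abs_iteratedDeriv_le i x hx)
            (hy.abs_iteratedDeriv_le _ ((Nat.sub_le _ _).trans hm) x hx)
    _ = C * A * Λ ^ m * ∑ i ∈ Finset.range (m + 1), (1 / 2 : ℝ) ^ i := by rw [Finset.mul_sum]
    _ ≤ C * A * Λ ^ m * 2 := by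
        gcongr
        exact sum_geometric_two_le _
    _ = _ := by ring

/-- The terms of the Leibniz formula for `g y` other than `g y⁽ⁿ⁾` carry a derivative of `g` and
hence a factor `γ / C`. -/
theorem abs_sum_choose_succ_mul_le {x : ℝ} (hg : AnalyticBoundsOn s C γ₀ g) (hx : x ∈ s)
    (hγ₀ : 0 ≤ γ₀) (hγ : 0 < γ) (hγC : γ ≤ C) (hA : 0 ≤ A) (hΛ : 4 * C * (n * γ₀) ≤ γ * Λ)
    (hy : ∀ k < n, |iteratedDeriv k y x| ≤ A * Λ ^ k) :
    |∑ i ∈ Finset.range n, (n.choose (i + 1) : ℝ) * iteratedDeriv (i + 1) g x *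
      iteratedDeriv (n - (i + 1)) y x| ≤ γ / 2 * (A * Λ ^ n) := by
  have hC := hγ.trans_le hγC
  have hΛ0 : 0 ≤ Λ := nonneg_of_mul_nonneg_right (le_trans (by positivity) hΛ) hγ
  have hθ : (n : ℝ) * γ₀ ≤ γ / (4 * C) * Λ := by
    rw [div_mul_eq_mul_div, le_div_iff₀ (by positivity)]
    linarith
  have hθ2 : γ / (4 * C) ≤ 1 / 2 := by
    rw [div_le_iff₀ (by positivity)]
    linarith
  calc _ ≤ ∑ i ∈ Finset.range n, C * A * Λ ^ n * (γ / (4 * C)) ^ (i + 1) :=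
        (Finset.abs_sum_le_sum_abs _ _).trans <| Finset.sum_le_sum fun i hi =>
          abs_choose_mul_mul_le hC.le hγ₀ hA hΛ0 hθ (Finset.mem_range.1 hi)
            (hg.abs_iteratedDeriv_le _ x hx)
            (hy _ (by have := Finset.mem_range.1 hi; omega))
    _ ≤ ∑ i ∈ Finset.range n, γ / 4 * (A * Λ ^ n) * (1 / 2) ^ i := by
        refine Finset.sum_le_sum fun i _ => ?_
        calc _ = γ / 4 * (A * Λ ^ n) * (γ / (4 * C)) ^ i := by rw [pow_succ]; field_simp
          _ ≤ _ := by gcongr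
    _ = γ / 4 * (A * Λ ^ n) * ∑ i ∈ Finset.range n, (1 / 2 : ℝ) ^ i := by rw [Finset.mul_sum]
    _ ≤ γ / 4 * (A * Λ ^ n) * 2 := by
        gcongr
        exact sum_geometric_two_le _
    _ = _ := by ring

theorem of_mul (hg : AnalyticBoundsOn s C γ₀ g) (hγ₀ : 0 ≤ γ₀) (hγ : 0 < γ)
    (hgγ : ∀ x ∈ s, γ ≤ g x) (hy : ContDiff ℝ ∞ y) (hΛ : 4 * C * (n * γ₀) ≤ γ * Λ)
    (h : ScaleBoundsOn s n A Λ (fun t => g t * y t)) : ScaleBoundsOn s n (2 / γ * A) Λ y := by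
  refine ⟨hy, fun m hm x hx => ?_⟩
  have hγC : γ ≤ C := (hgγ x hx).trans ((le_abs_self _).trans (hg.abs_le hx))
  have hA : 0 ≤ A := (abs_nonneg _).trans (h.abs_le hx)
  have hC := hγ.trans_le hγC
  induction m using Nat.strong_induction_on with
  | _ m ih =>
  have hle : (m : WithTop ℕ∞) ≤ ∞ := mod_cast le_top
  have hleibniz := iteratedDeriv_fun_mul (x := x) (hg.contDiff.contDiffAt.of_le hle)
    (hy.contDiffAt.of_le hle)
  rw [Finset.sum_range_succ'] at hleibniz
  simp only [Nat.choose_zero_right, Nat.cast_one, one_mul, iteratedDeriv_zero, Nat.sub_zero]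
    at hleibniz
  have hm' : 4 * C * (m * γ₀) ≤ γ * Λ := hΛ.trans' (by gcongr)
  have hsum := hg.abs_sum_choose_succ_mul_le hx hγ₀ hγ hγC (A := 2 / γ * A) (by positivity) hm'
    fun k hk => ih k hk (hk.le.trans hm)
  have hmain := h.abs_iteratedDeriv_le m hm x hx
  have hgy : γ * |iteratedDeriv m y x| ≤ |g x * iteratedDeriv m y x| := by
    rw [abs_mul]
    gcongr
    exact (hgγ x hx).trans (le_abs_self _)
  rw [eq_sub_of_add_eq' hleibniz.symm] at hgy
  refine le_of_mul_le_mul_left (((hgy.trans (abs_sub _ _)).trans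
    (add_le_add hmain hsum)).trans_eq ?_) hγ
  field_simp
  ring

end AnalyticBoundsOn

end DerivativeBounds

section APrioriBounds

open scoped ContDiff

variable {y v u b r f : ℝ → ℝ} {s t ε ε₂ δ B F Y V M C γ₀ γ ρ Λ : ℝ} {n : ℕ}

theorem exists_abs_deriv_mul_le (hst : s < t) (hy : Differentiable ℝ y)
    (hY : ∀ x ∈ Icc s t, |y x| ≤ Y) : ∃ ξ ∈ Icc s t, |deriv y ξ| * (t - s) ≤ 2 * Y := by
  obtain ⟨ξ, hξ, hslope⟩ := exists_deriv_eq_slope y hst hy.continuous.continuousOn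
    hy.differentiableOn
  refine ⟨ξ, Ioo_subset_Icc_self hξ, ?_⟩
  have hlen := sub_pos.2 hst
  rw [← abs_of_pos hlen, ← abs_mul, hslope, div_mul_cancel₀ _ hlen.ne']
  linarith [abs_sub (y t) (y s), hY t (right_mem_Icc.2 hst.le), hY s (left_mem_Icc.2 hst.le)]

/-- Compare a maximal value of `|y'|` with a point of small slope at distance at most `δ ε`. -/
theorem mul_abs_deriv_le (hε : 0 < ε) (hδ : 0 < δ) (hB : 0 ≤ B) (hδB : δ * B ≤ 1 / 2)
    (hlen : δ * ε ≤ t - s) (hy : ContDiff ℝ 2 y) (hY : ∀ x ∈ Icc s t, |y x| ≤ Y)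
    (hL : ∀ x ∈ Icc s t, ε ^ 2 * |deriv (deriv y) x| ≤ B * ε * |deriv y x| + F) :
    ∀ x ∈ Icc s t, ε * |deriv y x| ≤ 4 * Y / δ + 2 * δ * F := by
  have hδε : 0 < δ * ε := by positivity
  have hst : s ≤ t := by linarith
  have hy' := hy.differentiable_deriv_two
  obtain ⟨x₀, hx₀, hmax⟩ := isCompact_Icc.exists_isMaxOn (nonempty_Icc.2 hst)
    hy'.continuous.abs.continuousOn
  obtain ⟨c, hsc, hct, hcx, hxc⟩ : ∃ c, s ≤ c ∧ c + δ * ε ≤ t ∧ c ≤ x₀ ∧ x₀ ≤ c + δ * ε := by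
    by_cases h : x₀ + δ * ε ≤ t
    · exact ⟨x₀, hx₀.1, h, le_rfl, by linarith⟩
    · exact ⟨t - δ * ε, by linarith, by linarith, by linarith, by linarith [hx₀.2]⟩
  obtain ⟨ξ, hξ, hslope⟩ := exists_abs_deriv_mul_le (lt_add_of_pos_right c hδε)
    (hy.differentiable two_ne_zero) fun x hx => hY x (Icc_subset_Icc hsc hct hx)
  have hlip := (convex_Icc s t).norm_image_sub_le_of_norm_deriv_le (f := deriv y)
    (C := (B * ε * |deriv y x₀| + F) / ε ^ 2) (fun x _ => hy' x) (fun x hx => by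
      rw [Real.norm_eq_abs, le_div_iff₀ (by positivity), mul_comm]
      have : |deriv y x| ≤ |deriv y x₀| := hmax hx
      exact (hL x hx).trans (by gcongr)) (Icc_subset_Icc hsc hct hξ) hx₀
  have hdist : |x₀ - ξ| ≤ δ * ε := abs_le.2 ⟨by linarith [hξ.2], by linarith [hξ.1]⟩
  have hvar : |deriv y x₀| - |deriv y ξ| ≤ (B * ε * |deriv y x₀| + F) / ε ^ 2 * (δ * ε) := by
    refine (abs_sub_abs_le_abs_sub _ _).trans (hlip.trans ?_)
    have hnum := (by positivity : 0 ≤ ε ^ 2 * |deriv (deriv y) x₀|).trans (hL x₀ hx₀)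
    exact mul_le_mul_of_nonneg_left hdist (div_nonneg hnum (sq_nonneg ε))
  have hgrowth : ε * |deriv y x₀| ≤ ε * |deriv y ξ| + δ * B * (ε * |deriv y x₀|) + δ * F := by
    calc ε * |deriv y x₀|
        ≤ ε * (|deriv y ξ| + (B * ε * |deriv y x₀| + F) / ε ^ 2 * (δ * ε)) := by
          gcongr
          linarith
      _ = _ := by field_simp; ring
  have hsmall : ε * |deriv y ξ| ≤ 2 * Y / δ := by
    rw [le_div_iff₀ hδ]
    linarith
  have habsorb : δ * B * (ε * |deriv y x₀|) ≤ 1 / 2 * (ε * |deriv y x₀|) := by gcongr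
  intro x hx
  calc ε * |deriv y x| ≤ ε * |deriv y x₀| := mul_le_mul_of_nonneg_left (hmax hx) hε.le
    _ ≤ 2 * (2 * Y / δ) + 2 * δ * F := by linarith
    _ = _ := by ring

/-- The reaction-dominated regime `ε₂² ≤ ε₁ ≤ 1` with `ε₁ = ε²`. -/
structure ReactionDominated (ε ε₂ : ℝ) : Prop where
  pos : 0 < ε
  le_one : ε ≤ 1
  nonneg : 0 ≤ ε₂
  le : ε₂ ≤ ε

/-- Analytic data of a reaction-dominated problem, with common constants. -/
structure DataBounds (b r f : ℝ → ℝ) (C γ₀ γ : ℝ) : Prop where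
  analytic_b : AnalyticBoundsOn (Icc 0 1) C γ₀ b
  analytic_r : AnalyticBoundsOn (Icc 0 1) C γ₀ r
  analytic_f : AnalyticBoundsOn (Icc 0 1) C γ₀ f
  one_le_C : 1 ≤ C
  one_le_rate : 1 ≤ γ₀
  pos : 0 < γ
  le_r : ∀ x ∈ Icc (0 : ℝ) 1, γ ≤ r x

namespace DataBounds

theorem C_pos (h : DataBounds b r f C γ₀ γ) : 0 < C := one_pos.trans_le h.one_le_C

theorem rate_nonneg (h : DataBounds b r f C γ₀ γ) : 0 ≤ γ₀ := zero_le_one.trans h.one_le_rate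

theorem le_C (h : DataBounds b r f C γ₀ γ) : γ ≤ C :=
  have h0 : (0 : ℝ) ∈ Icc (0 : ℝ) 1 := left_mem_Icc.2 zero_le_one
  (h.le_r 0 h0).trans ((le_abs_self _).trans (h.analytic_r.abs_le h0))

theorem abs_le (h : DataBounds b r f C γ₀ γ) (hε : ReactionDominated ε ε₂) (hV : 0 ≤ V)
    (hv : ContDiff ℝ 2 v) (hL : ∀ x ∈ Icc (0 : ℝ) 1, |diffOp ε ε₂ b r v x| ≤ ρ)
    (hv₀ : |v 0| ≤ V) (hv₁ : |v 1| ≤ V) :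
    ∀ x ∈ Icc (0 : ℝ) 1, |v x| ≤ ρ / γ + V * boundaryLayers (γ / (2 * C) / ε) x := by
  have hC := h.C_pos
  have hrate : (γ / (2 * C)) ^ 2 + C * (γ / (2 * C)) ≤ γ := by
    have : γ / (2 * C) ≤ C := by
      rw [div_le_iff₀ (by positivity)]
      nlinarith [h.le_C, h.one_le_C]
    calc (γ / (2 * C)) ^ 2 + C * (γ / (2 * C))
        ≤ C * (γ / (2 * C)) + C * (γ / (2 * C)) := by
          rw [sq]
          have := h.pos
          gcongr
      _ = γ := by field_simp; ring
  exact abs_le_add_boundaryLayers hε.pos hε.nonneg hε.le h.pos (div_pos h.pos (by positivity)).le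
    hrate hV hv (fun x hx => h.analytic_b.abs_le hx) h.le_r hL hv₀ hv₁

theorem abs_deriv_le (h : DataBounds b r f C γ₀ γ) (hε : ReactionDominated ε ε₂)
    (hs : 0 ≤ s) (ht : t ≤ 1) (hst : 1 / 2 ≤ t - s) (hv : ContDiff ℝ 2 v)
    (hY : ∀ x ∈ Icc s t, |v x| ≤ Y) (hL : ∀ x ∈ Icc s t, |diffOp ε ε₂ b r v x| ≤ ρ) :
    ∀ x ∈ Icc s t, ε * |deriv v x| ≤ (8 * C + 1) * Y + ρ := by
  have hC := h.C_pos
  have hlen : 1 / (2 * C) * ε ≤ t - s := by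
    have hinv : 1 / (2 * C) ≤ 1 / 2 := one_div_le_one_div_of_le two_pos (by linarith [h.one_le_C])
    linarith [mul_le_mul hinv hε.le_one hε.pos.le (by norm_num)]
  have hsecond (x : ℝ) (hx : x ∈ Icc s t) :
      ε ^ 2 * |deriv (deriv v) x| ≤ C * ε * |deriv v x| + (C * Y + ρ) := by
    have hx01 := Icc_subset_Icc hs ht hx
    calc ε ^ 2 * |deriv (deriv v) x|
        = |ε₂ * b x * deriv v x + r x * v x - diffOp ε ε₂ b r v x| := by
          have hsolve : ε₂ * b x * deriv v x + r x * v x - diffOp ε ε₂ b r v x =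
              ε ^ 2 * deriv (deriv v) x := by
            rw [diffOp]
            ring
          rw [hsolve, abs_mul, abs_of_nonneg (sq_nonneg ε)]
      _ ≤ |ε₂ * b x * deriv v x| + |r x * v x| + |diffOp ε ε₂ b r v x| :=
          (abs_sub _ _).trans (by gcongr; exact abs_add_le _ _)
      _ ≤ ε * C * |deriv v x| + C * Y + ρ := by
          rw [abs_mul, abs_mul, abs_mul, abs_of_nonneg hε.nonneg]
          gcongr
          exacts [hε.pos.le, hε.le, h.analytic_b.abs_le hx01, h.analytic_r.abs_le hx01, hY x hx,
            hL x hx]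
      _ = _ := by ring
  intro x hx
  have hρ : ρ / C ≤ ρ := div_le_self ((abs_nonneg _).trans (hL x hx)) h.one_le_C
  calc ε * |deriv v x| ≤ 4 * Y / (1 / (2 * C)) + 2 * (1 / (2 * C)) * (C * Y + ρ) :=
        mul_abs_deriv_le hε.pos (by positivity) hC.le (by field_simp; rfl) hlen hv hY hsecond x hx
    _ = (8 * C + 1) * Y + ρ / C := by field_simp; ring
    _ ≤ _ := by gcongr

theorem abs_solution_le (h : DataBounds b r f C γ₀ γ) (hε : ReactionDominated ε ε₂)
    (hu : ContDiff ℝ 2 u) (hbvp : SolvesBVP (ε ^ 2) ε₂ b r f u) :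
    ∀ x ∈ Icc (0 : ℝ) 1,
      |u x| ≤ (9 * C + 1) * (C / γ) ∧ ε * |deriv u x| ≤ (9 * C + 1) * (C / γ) := by
  have hL (x : ℝ) (hx : x ∈ Icc (0 : ℝ) 1) : |diffOp ε ε₂ b r u x| ≤ C := by
    rw [show diffOp ε ε₂ b r u x = f x from hbvp.2.2 x hx]
    exact h.analytic_f.abs_le hx
  have hmax (x : ℝ) (hx : x ∈ Icc (0 : ℝ) 1) : |u x| ≤ C / γ := by
    simpa using h.abs_le hε le_rfl hu hL (by simp [hbvp.1]) (by simp [hbvp.2.1]) x hx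
  have hderiv := h.abs_deriv_le hε le_rfl le_rfl (by norm_num) hu hmax hL
  have hC := h.C_pos
  have hγ := h.pos
  have hCγ : 1 ≤ C / γ := (one_le_div hγ).2 h.le_C
  intro x hx
  exact ⟨by nlinarith [hmax x hx], by nlinarith [hderiv x hx]⟩

theorem scaleBoundsOn_deriv_deriv (h : DataBounds b r f C γ₀ γ) (hε : ReactionDominated ε ε₂)
    (hbvp : SolvesBVP (ε ^ 2) ε₂ b r f u) (hM : 1 ≤ M) (hΛ : 2 * (n * γ₀) ≤ Λ)
    (hεΛ : 5 * C + 1 ≤ ε * Λ) (hu : ScaleBoundsOn (Icc 0 1) (n + 1) M Λ u) :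
    ScaleBoundsOn (Icc 0 1) n (M * Λ * Λ) Λ (deriv (deriv u)) := by
  have hC := h.C_pos
  have hγ₀ := h.rate_nonneg
  have hε0 := hε.pos
  have hΛ0 : 0 ≤ Λ := le_trans (by positivity) hΛ
  have hbu := h.analytic_b.mul hu.deriv hC.le hγ₀ (by positivity) hΛ
  have hru := h.analytic_r.mul (hu.mono_order n.le_succ) hC.le hγ₀ (by positivity) hΛ
  have hf := h.analytic_f.scaleBoundsOn hC.le hγ₀ (n := n) (Λ := Λ)
    (by linarith [mul_nonneg n.cast_nonneg hγ₀])
  refine ((((hbu.const_mul ε₂).add hru).sub hf).const_mul (ε ^ 2)⁻¹).congr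
    (uniqueDiffOn_Icc zero_lt_one) ?_ (fun x hx => ?_) |>.mono_const hΛ0 ?_
  · exact (contDiff_infty_iff_deriv.1 (contDiff_infty_iff_deriv.1 hu.contDiff).2).2
  · have := hbvp.2.2 x hx
    field_simp
    linarith
  · rw [abs_of_pos (by positivity), abs_of_nonneg hε.nonneg, inv_mul_le_iff₀ (by positivity)]
    calc ε₂ * (2 * C * (M * Λ)) + 2 * C * M + C
        ≤ ε * (2 * C * (M * Λ)) + 2 * C * M + C * M := by
          gcongr
          exacts [hε.le, le_mul_of_one_le_right hC.le hM]
      _ = C * (2 * (ε * Λ) + 3) * M := by ring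
      _ ≤ (ε * Λ) ^ 2 * M := by
          gcongr
          nlinarith
      _ = _ := by ring

theorem scaleBoundsOn_solution (h : DataBounds b r f C γ₀ γ) (hε : ReactionDominated ε ε₂)
    (hu : ContDiff ℝ ∞ u) (hbvp : SolvesBVP (ε ^ 2) ε₂ b r f u) (hΛ : 2 * (n * γ₀) ≤ Λ)
    (hεΛ : 5 * C + 1 ≤ ε * Λ) :
    ScaleBoundsOn (Icc 0 1) (n + 2) ((9 * C + 1) * (C / γ)) Λ u := by
  obtain ⟨M, hM⟩ : ∃ M, M = (9 * C + 1) * (C / γ) := ⟨_, rfl⟩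
  have hC := h.C_pos
  have hM1 : 1 ≤ M := by
    have : 1 ≤ C / γ := (one_le_div h.pos).2 h.le_C
    nlinarith
  have hbound := h.abs_solution_le hε (hu.of_le (WithTop.coe_le_coe.2 le_top)) hbvp
  rw [← hM] at hbound ⊢
  have hu' := (contDiff_infty_iff_deriv.1 hu).2
  have habs' (x : ℝ) (hx : x ∈ Icc (0 : ℝ) 1) : |deriv u x| ≤ M * Λ := by
    refine le_of_mul_le_mul_left ((hbound x hx).2.trans ?_) hε.pos
    nlinarith
  have hsucc : ∀ m ≤ n + 1, ScaleBoundsOn (Icc 0 1) (m + 1) M Λ u := by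
    intro m
    induction m with
    | zero =>
      refine fun _ => .of_deriv hu (fun x hx => (hbound x hx).1) ⟨hu', fun k hk x hx => ?_⟩
      simpa [Nat.le_zero.1 hk] using habs' x hx
    | succ m ih =>
      intro hm
      have hmΛ : 2 * ((m : ℝ) * γ₀) ≤ Λ := by
        have hmn : (m : ℝ) ≤ n := by exact_mod_cast Nat.le_of_succ_le_succ hm
        exact hΛ.trans' (by gcongr; exact h.rate_nonneg)
      exact .of_deriv hu (fun x hx => (hbound x hx).1) <| .of_deriv hu' habs' <|
        h.scaleBoundsOn_deriv_deriv hε hbvp hM1 hmΛ hεΛ (ih (by omega))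
  exact hsucc (n + 1) le_rfl

end DataBounds

end APrioriBounds

section SmoothPart

open scoped ContDiff

variable {b r f : ℝ → ℝ} {ε ε₂ C γ₀ γ q τ Λ : ℝ} {n j k N : ℕ}

/-- The terms of the formal solution `∑ⱼ yⱼ` of `diffOp y = f`, where `r y₀ = f` and
`r yⱼ₊₁ = ε² yⱼ'' - ε₂ b yⱼ'`. -/
def smoothTerm (ε ε₂ : ℝ) (b r f : ℝ → ℝ) : ℕ → ℝ → ℝ
  | 0 => fun t => f t / r t
  | j + 1 => fun t => (ε ^ 2 * deriv (deriv (smoothTerm ε ε₂ b r f j)) t -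
      ε₂ * (b t * deriv (smoothTerm ε ε₂ b r f j) t)) / r t

/-- The formal solution of `diffOp y = f`, truncated after `k` terms: the part of the solution
which does not see the boundary layers. -/
def smoothPart (ε ε₂ : ℝ) (b r f : ℝ → ℝ) (k : ℕ) : ℝ → ℝ :=
  fun t => ∑ j ∈ Finset.range k, smoothTerm ε ε₂ b r f j t

theorem contDiff_smoothTerm (hb : ContDiff ℝ ∞ b) (hr : ContDiff ℝ ∞ r) (hf : ContDiff ℝ ∞ f)
    (hr0 : ∀ x, r x ≠ 0) (j : ℕ) : ContDiff ℝ ∞ (smoothTerm ε ε₂ b r f j) := by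
  induction j with
  | zero => exact hf.div hr hr0
  | succ j ih =>
    have hderiv := (contDiff_infty_iff_deriv.1 ih).2
    exact ((contDiff_const.mul (contDiff_infty_iff_deriv.1 hderiv).2).sub
      (contDiff_const.mul (hb.mul hderiv))).div hr hr0

theorem contDiff_smoothPart (hb : ContDiff ℝ ∞ b) (hr : ContDiff ℝ ∞ r) (hf : ContDiff ℝ ∞ f)
    (hr0 : ∀ x, r x ≠ 0) (k : ℕ) : ContDiff ℝ ∞ (smoothPart ε ε₂ b r f k) :=
  ContDiff.sum fun j _ => contDiff_smoothTerm hb hr hf hr0 j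

theorem diffOp_smoothTerm {x : ℝ} (hr0 : r x ≠ 0) (j : ℕ) :
    diffOp ε ε₂ b r (smoothTerm ε ε₂ b r f j) x =
      r x * smoothTerm ε ε₂ b r f j x - r x * smoothTerm ε ε₂ b r f (j + 1) x := by
  rw [diffOp, smoothTerm, mul_div_cancel₀ _ hr0]
  ring

theorem diffOp_smoothPart (hb : ContDiff ℝ ∞ b) (hr : ContDiff ℝ ∞ r) (hf : ContDiff ℝ ∞ f)
    (hr0 : ∀ x, r x ≠ 0) (k : ℕ) (x : ℝ) : diffOp ε ε₂ b r (smoothPart ε ε₂ b r f k) x =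
      f x - r x * smoothTerm ε ε₂ b r f k x := by
  induction k with
  | zero =>
    rw [smoothTerm, mul_div_cancel₀ _ (hr0 x), sub_self]
    simp [show smoothPart ε ε₂ b r f 0 = fun _ => 0 from rfl, diffOp]
  | succ k ih =>
    have hle : (2 : WithTop ℕ∞) ≤ ∞ := WithTop.coe_le_coe.2 le_top
    have hsum : smoothPart ε ε₂ b r f (k + 1) =
        fun t => smoothPart ε ε₂ b r f k t + 1 * smoothTerm ε ε₂ b r f k t := by
      funext t
      rw [one_mul, smoothPart, Finset.sum_range_succ, smoothPart]
    rw [hsum, diffOp_add_const_mul ((contDiff_smoothPart hb hr hf hr0 k).of_le hle)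
      ((contDiff_smoothTerm hb hr hf hr0 k).of_le hle), ih, diffOp_smoothTerm (hr0 x)]
    ring

namespace DataBounds

theorem scaleBoundsOn_smoothTerm (h : DataBounds b r f C γ₀ γ) (hε : ReactionDominated ε ε₂)
    (hr0 : ∀ x, r x ≠ 0) (hΛ : 4 * C * (N * γ₀) ≤ γ * Λ) (hτ : ε * Λ ≤ τ)
    (hq : 2 / γ * (τ ^ 2 + 2 * C * τ) ≤ q) (hn : n + 2 * j ≤ N) :
    ScaleBoundsOn (Icc 0 1) n (2 / γ * C * q ^ j) Λ (smoothTerm ε ε₂ b r f j) := by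
  have hC := h.C_pos
  have hγ := h.pos
  have hγ₀ := h.rate_nonneg
  have hε0 := hε.pos
  have hγΛ : γ * Λ ≤ C * Λ := mul_le_mul_of_nonneg_right h.le_C
    (nonneg_of_mul_nonneg_right (le_trans (by positivity) hΛ) hγ)
  have hΛ2 : 4 * (N * γ₀) ≤ Λ := le_of_mul_le_mul_left (by linarith) hC
  have hΛ0 : 0 ≤ Λ := le_trans (by positivity) hΛ2
  have hτ0 : 0 ≤ τ := le_trans (by positivity) hτ
  have hq0 : 0 ≤ q := le_trans (by positivity) hq
  induction j generalizing n with
  | zero =>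
    have hnN : (n : ℝ) * γ₀ ≤ N * γ₀ := by gcongr; omega
    have hf := h.analytic_f.scaleBoundsOn hC.le hγ₀ (n := n) (Λ := Λ) (by nlinarith)
    simpa using h.analytic_r.of_mul hγ₀ hγ h.le_r
      (contDiff_smoothTerm (ε := ε) (ε₂ := ε₂) h.analytic_b.contDiff h.analytic_r.contDiff
        h.analytic_f.contDiff hr0 0) (hΛ.trans' (by gcongr))
      (by simpa [smoothTerm, mul_div_cancel₀ _ (hr0 _)] using hf)
  | succ j ih =>
    have hnN : (n : ℝ) * γ₀ ≤ N * γ₀ := by gcongr; omega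
    have hy := ih (n := n + 2) (by omega)
    have hby := h.analytic_b.mul (hy.mono_order (n + 1).le_succ).deriv hC.le hγ₀ (by positivity)
      (by linarith)
    have hsource := (hy.deriv.deriv.const_mul (ε ^ 2)).sub (hby.const_mul ε₂)
    have hsmall : ε₂ * Λ ≤ τ := hτ.trans' (by gcongr; exact hε.le)
    refine (h.analytic_r.of_mul hγ₀ hγ h.le_r
      (contDiff_smoothTerm h.analytic_b.contDiff h.analytic_r.contDiff h.analytic_f.contDiff hr0 _)
      (hΛ.trans' (by gcongr))
      (by simpa only [smoothTerm, mul_div_cancel₀ _ (hr0 _)] using hsource)).mono_const hΛ0 ?_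
    rw [abs_of_nonneg (sq_nonneg ε), abs_of_nonneg hε.nonneg]
    calc _ = 2 / γ * ((ε * Λ) ^ 2 + 2 * C * (ε₂ * Λ)) * (2 / γ * C * q ^ j) := by ring
      _ ≤ 2 / γ * (τ ^ 2 + 2 * C * τ) * (2 / γ * C * q ^ j) := by gcongr
      _ ≤ q * (2 / γ * C * q ^ j) := by gcongr
      _ = 2 / γ * C * q ^ (j + 1) := by ring

theorem scaleBoundsOn_smoothPart (h : DataBounds b r f C γ₀ γ) (hε : ReactionDominated ε ε₂)
    (hr0 : ∀ x, r x ≠ 0) (hΛ : 4 * C * (N * γ₀) ≤ γ * Λ) (hτ : ε * Λ ≤ τ)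
    (hq : 2 / γ * (τ ^ 2 + 2 * C * τ) ≤ q) (hq0 : 0 ≤ q) (hq2 : q ≤ 1 / 2)
    (hn : n + 2 * k ≤ N) :
    ScaleBoundsOn (Icc 0 1) n (4 / γ * C) Λ (smoothPart ε ε₂ b r f k) := by
  have hC := h.C_pos
  have hγ := h.pos
  have hγ₀ := h.rate_nonneg
  have hΛ0 : 0 ≤ Λ := nonneg_of_mul_nonneg_right (le_trans (by positivity) hΛ) hγ
  refine (ScaleBoundsOn.sum fun j hj => h.scaleBoundsOn_smoothTerm hε hr0 hΛ hτ hq (n := n)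
    (by have := Finset.mem_range.1 hj; omega)).mono_const hΛ0 ?_
  calc ∑ j ∈ Finset.range k, 2 / γ * C * q ^ j
      ≤ ∑ j ∈ Finset.range k, 2 / γ * C * (1 / 2) ^ j := by gcongr
    _ = 2 / γ * C * ∑ j ∈ Finset.range k, (1 / 2 : ℝ) ^ j := by rw [Finset.mul_sum]
    _ ≤ 2 / γ * C * 2 := by
        gcongr
        exact sum_geometric_two_le _
    _ = 4 / γ * C := by ring

end DataBounds

open scoped Manifold in
theorem exists_contDiff_pos_eqOn {K : Set ℝ} (hK : IsClosed K) (hr : ContDiff ℝ ∞ r)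
    (hpos : ∀ x ∈ K, 0 < r x) : ∃ R : ℝ → ℝ, ContDiff ℝ ∞ R ∧ (∀ x, 0 < R x) ∧ EqOn R r K := by
  obtain ⟨φ, hφ₀, hφ₁, hφ⟩ := exists_contMDiffMap_zero_one_of_isClosed 𝓘(ℝ, ℝ) (n := (⊤ : ℕ∞))
    (isClosed_le hr.continuous continuous_const) hK
    (disjoint_left.2 fun x hx hxK => (hpos x hxK).not_ge hx)
  refine ⟨fun x => φ x * r x + (1 - φ x), ?_, fun x => ?_, fun x hx => ?_⟩
  · exact (φ.contMDiff.contDiff.mul hr).add (contDiff_const.sub φ.contMDiff.contDiff)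
  · rcases le_or_gt (r x) 0 with hx | hx
    · simp [hφ₀ hx]
    · exact (lt_min hx one_pos).trans_le (by
        nlinarith [(hφ x).1, (hφ x).2, min_le_left (r x) 1, min_le_right (r x) 1])
  · simp [hφ₁ hx]

end SmoothPart

section Decomposition

open scoped ContDiff

variable {b r f u w : ℝ → ℝ} {s ε ε₂ C γ₀ γ κ ρ V Λ : ℝ} {k : ℕ}

theorem boundaryLayers_le {x : ℝ} (hκ : 0 ≤ κ) (hx : x ∈ Icc s (1 - s)) :
    boundaryLayers κ x ≤ 2 * Real.exp (-(κ * s)) := by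
  have hl : Real.exp (-κ * x) ≤ Real.exp (-(κ * s)) := by
    rw [neg_mul]
    gcongr
    exact hx.1
  have hr : Real.exp (-κ * (1 - x)) ≤ Real.exp (-(κ * s)) := by
    rw [neg_mul]
    gcongr
    linarith [hx.2]
  rw [boundaryLayers]
  linarith

namespace DataBounds

theorem exists_smooth_approx (h : DataBounds b r f C γ₀ γ) (hε : ReactionDominated ε ε₂)
    (hΛ : 4 * C * ((3 * k + 2) * γ₀) ≤ γ * Λ) (hτ : ε * Λ ≤ γ * Real.exp (-1) / (6 * C)) :
    ∃ w, ScaleBoundsOn (Icc 0 1) (k + 2) (4 / γ * C) Λ w ∧ ∀ x ∈ Icc (0 : ℝ) 1,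
      |f x - diffOp ε ε₂ b r w x| ≤ C * (2 / γ * C) * Real.exp (-k) := by
  have hC := h.C_pos
  have hγ := h.pos
  obtain ⟨R, hR, hRpos, hRr⟩ := exists_contDiff_pos_eqOn isClosed_Icc h.analytic_r.contDiff
    fun x hx => hγ.trans_le (h.le_r x hx)
  have hR0 (x : ℝ) : R x ≠ 0 := (hRpos x).ne'
  have hdata : DataBounds b R f C γ₀ γ :=
    { h with
      analytic_r := h.analytic_r.congr (uniqueDiffOn_Icc zero_lt_one) hR hRr
      le_r := fun x hx => (hRr hx).symm ▸ h.le_r x hx }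
  have hq2 : Real.exp (-1) ≤ 1 / 2 := by
    rw [Real.exp_neg, one_div]
    exact inv_anti₀ two_pos (by linarith [Real.add_one_le_exp (1 : ℝ)])
  have hq : 2 / γ * ((γ * Real.exp (-1) / (6 * C)) ^ 2 + 2 * C * (γ * Real.exp (-1) / (6 * C))) ≤
      Real.exp (-1) := by
    have hle : γ * Real.exp (-1) / (6 * C) ≤ C := by
      rw [div_le_iff₀ (by positivity)]
      nlinarith [h.le_C, h.one_le_C]
    calc _ ≤ 2 / γ * (C * (γ * Real.exp (-1) / (6 * C)) +
          2 * C * (γ * Real.exp (-1) / (6 * C))) := by rw [sq]; gcongr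
      _ = Real.exp (-1) := by field_simp; ring
  have hΛ' : 4 * C * ((3 * k + 2 : ℕ) * γ₀) ≤ γ * Λ := by push_cast; exact hΛ
  refine ⟨smoothPart ε ε₂ b R f k, hdata.scaleBoundsOn_smoothPart hε hR0 hΛ' hτ hq
    (Real.exp_nonneg _) hq2 (by omega), fun x hx => ?_⟩
  have hterm := (hdata.scaleBoundsOn_smoothTerm hε hR0 hΛ' hτ hq (n := 0) (j := k)
    (by omega)).abs_le hx
  have hop := diffOp_smoothPart (ε := ε) (ε₂ := ε₂) h.analytic_b.contDiff hR
    h.analytic_f.contDiff hR0 k x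
  rw [diffOp, hRr hx] at hop
  rw [diffOp, hop, sub_sub_cancel, abs_mul, mul_assoc]
  rw [← Real.exp_nat_mul, mul_neg_one] at hterm
  gcongr
  exact h.analytic_r.abs_le hx

theorem abs_sub_le (h : DataBounds b r f C γ₀ γ) (hε : ReactionDominated ε ε₂)
    (hu : ContDiff ℝ 2 u) (hbvp : SolvesBVP (ε ^ 2) ε₂ b r f u) (hw : ContDiff ℝ 2 w)
    (hwV : ∀ x ∈ Icc (0 : ℝ) 1, |w x| ≤ V)
    (hL : ∀ x ∈ Icc (0 : ℝ) 1, |f x - diffOp ε ε₂ b r w x| ≤ ρ) (hs : 0 ≤ s) (hs4 : s ≤ 1 / 4) :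
    ∀ x ∈ Icc s (1 - s),
      |u x - w x| ≤ ρ / γ + 2 * V * Real.exp (-(γ / (2 * C) / ε * s)) ∧
      ε * |deriv u x - deriv w x| ≤
        (8 * C + 1) * (ρ / γ + 2 * V * Real.exp (-(γ / (2 * C) / ε * s))) + ρ := by
  have h0 : (0 : ℝ) ∈ Icc (0 : ℝ) 1 := left_mem_Icc.2 zero_le_one
  have h1 : (1 : ℝ) ∈ Icc (0 : ℝ) 1 := right_mem_Icc.2 zero_le_one
  have hV := (abs_nonneg _).trans (hwV 0 h0)
  have hκ : 0 ≤ γ / (2 * C) / ε :=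
    div_nonneg (div_pos h.pos (mul_pos two_pos h.C_pos)).le hε.pos.le
  have hres (x : ℝ) (hx : x ∈ Icc (0 : ℝ) 1) :
      |diffOp ε ε₂ b r (fun t => u t - w t) x| ≤ ρ := by
    rw [diffOp_sub hu hw, show diffOp ε ε₂ b r u x = f x from hbvp.2.2 x hx]
    exact hL x hx
  have hsub : Icc s (1 - s) ⊆ Icc 0 1 := Icc_subset_Icc hs (by linarith)
  have hvalue (x : ℝ) (hx : x ∈ Icc s (1 - s)) :
      |u x - w x| ≤ ρ / γ + 2 * V * Real.exp (-(γ / (2 * C) / ε * s)) := by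
    have hmax := h.abs_le hε hV (hu.sub hw) hres (by simpa [hbvp.1] using hwV 0 h0)
      (by simpa [hbvp.2.1] using hwV 1 h1) x (hsub hx)
    linarith [mul_le_mul_of_nonneg_left (boundaryLayers_le hκ hx) hV]
  have hderiv := h.abs_deriv_le hε hs (by linarith) (by linarith) (hu.sub hw) hvalue
    fun x hx => hres x (hsub hx)
  refine fun x hx => ⟨hvalue x hx, ?_⟩
  rw [← deriv_fun_sub (hu.differentiable two_ne_zero x) (hw.differentiable two_ne_zero x)]
  exact hderiv x hx

theorem exists_decomposition (h : DataBounds b r f C γ₀ γ) :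
    ∃ A, 0 < A ∧ ∀ {ε ε₂ u k Λ}, ReactionDominated ε ε₂ → ContDiff ℝ 2 u →
      SolvesBVP (ε ^ 2) ε₂ b r f u → 4 * C * ((3 * (k : ℕ) + 2) * γ₀) ≤ γ * Λ →
      ε * Λ ≤ γ * Real.exp (-1) / (6 * C) →
      ∃ w, ScaleBoundsOn (Icc 0 1) (k + 2) A Λ w ∧
        ∀ s, 0 ≤ s → s ≤ 1 / 4 → ∀ x ∈ Icc s (1 - s),
          |u x - w x| ≤ A * (Real.exp (-k) + Real.exp (-(γ / (2 * C) / ε * s))) ∧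
          ε * |deriv u x - deriv w x| ≤
            A * (Real.exp (-k) + Real.exp (-(γ / (2 * C) / ε * s))) := by
  have hC := h.C_pos
  have hγ := h.pos
  have hγ₀ := h.rate_nonneg
  obtain ⟨V, hV⟩ : ∃ V, V = 4 / γ * C := ⟨_, rfl⟩
  obtain ⟨D, hD⟩ : ∃ D, D = C * (2 / γ * C) := ⟨_, rfl⟩
  have hV0 : 0 < V := by rw [hV]; positivity
  have hD0 : 0 < D := by rw [hD]; positivity
  obtain ⟨G, hG⟩ : ∃ G, G = D / γ + 2 * V := ⟨_, rfl⟩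
  have hG0 : 0 < G := by rw [hG]; positivity
  refine ⟨V + G + (8 * C * G + D), by positivity, fun {ε ε₂ u k Λ} hε hu hbvp hΛ hτ => ?_⟩
  have hΛ0 : 0 ≤ Λ := nonneg_of_mul_nonneg_right (le_trans (by positivity) hΛ) hγ
  obtain ⟨w, hw, hL⟩ := h.exists_smooth_approx hε hΛ hτ
  rw [← hV] at hw
  rw [← hD] at hL
  refine ⟨w, hw.mono_const hΛ0 (by rw [add_assoc]; exact le_add_of_nonneg_right (by positivity)),
    fun s hs hs4 x hx => ?_⟩
  obtain ⟨hvalue, hderiv⟩ := h.abs_sub_le hε hu hbvp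
    (hw.contDiff.of_le (WithTop.coe_le_coe.2 le_top)) (fun x hx => hw.abs_le hx) hL hs hs4 x hx
  have hE₁ := Real.exp_pos (-k : ℝ)
  have hE₂ := Real.exp_pos (-(γ / (2 * C) / ε * s))
  generalize Real.exp (-k : ℝ) = E₁ at *
  generalize Real.exp (-(γ / (2 * C) / ε * s)) = E₂ at *
  have hGE : D * E₁ / γ + 2 * V * E₂ ≤ G * (E₁ + E₂) := by
    calc D * E₁ / γ + 2 * V * E₂ = D / γ * E₁ + 2 * V * E₂ := by ring
      _ ≤ D / γ * (E₁ + E₂) + 2 * V * (E₁ + E₂) := by gcongr <;> linarith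
      _ = G * (E₁ + E₂) := by rw [hG]; ring
  have hVE : 0 ≤ V * (E₁ + E₂) := by positivity
  have hDE : D * E₁ ≤ D * (E₁ + E₂) := by gcongr; linarith
  have hCG : 0 ≤ 8 * C * (G * (E₁ + E₂)) := by positivity
  constructor
  · have hDE₂ : 0 ≤ D * (E₁ + E₂) := by positivity
    linarith
  · have hCGE : 8 * C * (D * E₁ / γ + 2 * V * E₂) ≤ 8 * C * (G * (E₁ + E₂)) := by gcongr
    linarith

end DataBounds

end Decomposition

section CellApproximation

open Polynomial Real
open scoped ContDiff

variable {b r f u w y : ℝ → ℝ} {a c ε ε₂ C γ₀ γ K M Y η η' Λ : ℝ} {k p : ℕ}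

/-- On the cell `[a, c]` there is a polynomial of degree at most `p` which agrees with `y` at the
end points and approximates both `y` and, with the weight `ε`, its derivative up to `η`. -/
def CellApprox (y : ℝ → ℝ) (ε a c : ℝ) (p : ℕ) (η : ℝ) : Prop :=
  ∃ Q : ℝ[X], Q.natDegree ≤ p ∧ Q.eval a = y a ∧ Q.eval c = y c ∧
    ∀ x ∈ Icc a c, |y x - Q.eval x| ≤ η ∧ ε * |deriv y x - Q.derivative.eval x| ≤ η

namespace CellApprox

theorem mono (h : CellApprox y ε a c p η) (hη : η ≤ η') : CellApprox y ε a c p η' := by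
  obtain ⟨Q, hdeg, ha, hc, hQ⟩ := h
  exact ⟨Q, hdeg, ha, hc, fun x hx => ⟨(hQ x hx).1.trans hη, (hQ x hx).2.trans hη⟩⟩

theorem of_add_sub (hε : 0 ≤ ε) (hu : Differentiable ℝ u) (hw : Differentiable ℝ w)
    (h : CellApprox w ε a c p η) (h' : CellApprox (fun t => u t - w t) ε a c p η') :
    CellApprox u ε a c p (η + η') := by
  obtain ⟨Q, hQdeg, hQa, hQc, hQ⟩ := h
  obtain ⟨P, hPdeg, hPa, hPc, hP⟩ := h'
  refine ⟨Q + P, natDegree_add_le_of_degree_le hQdeg hPdeg, ?_, ?_, fun x hx => ?_⟩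
  · rw [eval_add, hQa, hPa, add_sub_cancel]
  · rw [eval_add, hQc, hPc, add_sub_cancel]
  obtain ⟨hQ₀, hQ₁⟩ := hQ x hx
  obtain ⟨hP₀, hP₁⟩ := hP x hx
  rw [deriv_fun_sub (hu x) (hw x)] at hP₁
  rw [derivative_add, eval_add, eval_add,
    show u x - (Q.eval x + P.eval x) = w x - Q.eval x + (u x - w x - P.eval x) by ring,
    show deriv u x - (Q.derivative.eval x + P.derivative.eval x) =
      deriv w x - Q.derivative.eval x + (deriv u x - deriv w x - P.derivative.eval x) by ring]
  refine ⟨(abs_add_le _ _).trans (add_le_add hQ₀ hP₀), ?_⟩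
  exact (mul_le_mul_of_nonneg_left (abs_add_le _ _) hε).trans
    ((mul_add _ _ _).trans_le (add_le_add hQ₁ hP₁))

theorem of_bound (hac : a < c) (hp : 1 ≤ p) (hε : 0 ≤ ε) (hy : Differentiable ℝ y)
    (hY : ∀ x ∈ Icc a c, |y x| ≤ Y ∧ ε * |deriv y x| ≤ Y) : CellApprox y ε a c p (2 * Y) := by
  refine ⟨chord y a c, (natDegree_chord_le y a c).trans hp, eval_chord_left y a c,
    eval_chord_right y a c, fun x hx => ⟨?_, ?_⟩⟩
  · have hchord := abs_eval_chord_le hac hx (hY a (left_mem_Icc.2 hac.le)).1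
      (hY c (right_mem_Icc.2 hac.le)).1
    linarith [abs_sub (y x) ((chord y a c).eval x), (hY x hx).1]
  · obtain ⟨ξ, hξ, hslope⟩ := exists_deriv_eq_slope' y hac hy.continuous.continuousOn
      hy.differentiableOn
    rw [derivative_chord, eval_C, ← hslope]
    have hsub := mul_le_mul_of_nonneg_left (abs_sub (deriv y x) (deriv y ξ)) hε
    linarith [(hY x hx).2, (hY ξ (Ioo_subset_Icc_self hξ)).2]

theorem div_pow_mul_pow_le_exp_neg (hΛ : 0 ≤ Λ) (hac : a ≤ c) (hlen : (c - a) * Λ * exp 1 ≤ p)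
    (hkp : 2 * k + 2 ≤ p) : ((c - a) / (2 * ((p : ℝ) - 1 - k))) ^ k * Λ ^ k ≤ exp (-k) := by
  have hkp' : 2 * (k : ℝ) + 2 ≤ p := mod_cast hkp
  have hp : (0 : ℝ) < p := by linarith [k.cast_nonneg (α := ℝ)]
  have hle : (p : ℝ) ≤ 2 * (p - 1 - k) := by linarith
  have hac' : 0 ≤ c - a := sub_nonneg.2 hac
  rw [← mul_pow, ← mul_neg_one (k : ℝ), exp_nat_mul]
  refine pow_le_pow_left₀ (mul_nonneg (div_nonneg hac' (hp.le.trans hle)) hΛ) ?_ k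
  calc (c - a) / (2 * ((p : ℝ) - 1 - k)) * Λ ≤ (c - a) / p * Λ := by gcongr
    _ ≤ exp (-1) := by
      rw [exp_neg, div_mul_eq_mul_div, div_le_iff₀ hp, inv_mul_eq_div, le_div_iff₀ (exp_pos 1)]
      exact hlen

theorem of_scaleBoundsOn (hac : a < c) (hε : 0 ≤ ε) (hy : ScaleBoundsOn (Icc a c) (k + 2) M Λ y)
    (hΛ : 0 ≤ Λ) (hlen : (c - a) * Λ * exp 1 ≤ p) (hεΛ : ε * Λ ≤ K * p) (hkp : 2 * k + 2 ≤ p) :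
    CellApprox y ε a c p (π * M * (1 + K) * p ^ 2 * exp (-k)) := by
  have hp : (0 : ℝ) < p := Nat.cast_pos.2 (by lia)
  have hM : 0 ≤ M := (abs_nonneg _).trans (hy.abs_le (left_mem_Icc.2 hac.le))
  have hK : 0 ≤ K := nonneg_of_mul_nonneg_left ((mul_nonneg hε hΛ).trans hεΛ) hp
  have hlen' : (c - a) * Λ ≤ p :=
    (le_mul_of_one_le_right (by positivity) (one_le_exp zero_le_one)).trans hlen
  obtain ⟨Q, hdeg, ha, hc, hQ', hQ⟩ := exists_polynomial_abs_sub_le hac (by lia : k + 2 ≤ p)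
    (hy.contDiff.of_le (WithTop.coe_le_coe.2 le_top)) (hy.abs_iteratedDeriv_le (k + 2) le_rfl)
  have hpow := div_pow_mul_pow_le_exp_neg hΛ hac.le hlen hkp
  have hkp' : 0 ≤ (p : ℝ) - 1 - k := by
    have : (k : ℝ) + 1 ≤ p := mod_cast (by lia)
    linarith
  have hX : 0 ≤ ((c - a) / (2 * ((p : ℝ) - 1 - k))) ^ k * Λ ^ k := by positivity
  generalize ((c - a) / (2 * ((p : ℝ) - 1 - k))) ^ k = X at *
  refine ⟨Q, hdeg, ha, hc, fun x hx => ⟨(hQ x hx).trans ?_, ?_⟩⟩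
  · calc π * (c - a) * X * (M * Λ ^ (k + 2)) * (c - a)
        = π * M * ((c - a) * Λ) ^ 2 * (X * Λ ^ k) := by ring
      _ ≤ π * M * (p : ℝ) ^ 2 * exp (-k) := by gcongr
      _ = π * M * 1 * (p : ℝ) ^ 2 * exp (-k) := by ring
      _ ≤ _ := by gcongr; linarith
  · calc ε * |deriv y x - Q.derivative.eval x|
        ≤ ε * (π * (c - a) * X * (M * Λ ^ (k + 2))) := mul_le_mul_of_nonneg_left (hQ' x hx) hε
      _ = π * M * ((c - a) * Λ) * (ε * Λ) * (X * Λ ^ k) := by ring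
      _ ≤ π * M * p * (K * p) * exp (-k) := by gcongr
      _ = π * M * K * (p : ℝ) ^ 2 * exp (-k) := by ring
      _ ≤ _ := by gcongr; linarith

end CellApprox

end CellApproximation

section LayerMeshApproximation

open Real
open scoped ContDiff

variable {b r f u : ℝ → ℝ} {a c ε ε₂ C γ₀ γ κ : ℝ} {k p n : ℕ} {m : Mesh n}

namespace IsSBLmeshRD

theorem card_le_three {ε₁ : ℝ} (hm : IsSBLmeshRD κ p ε₁ m) : n ≤ 3 := by
  rcases hm with ⟨-, rfl⟩ | ⟨-, rfl, -⟩ <;> norm_num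

theorem forall_cell (hm : IsSBLmeshRD κ p (ε ^ 2) m) (hε : 0 ≤ ε) {P : ℝ → ℝ → Prop}
    (hcoarse : 1 / 2 ≤ κ * p * ε ^ 2 → P 0 1)
    (hfine : 0 < κ * p * ε → κ * p * ε < 1 / 2 → P 0 (κ * p * ε) ∧
      P (κ * p * ε) (1 - κ * p * ε) ∧ P (1 - κ * p * ε) 1) (j : Fin n) :
    P (m.xl j) (m.xr j) := by
  rcases hm with ⟨hκ, rfl⟩ | ⟨-, rfl, h₁, h₂⟩
  · have hl : m.pt 0 = 0 := m.left
    have hr : m.pt 1 = 1 := m.right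
    fin_cases j
    change P (m.pt 0) (m.pt 1)
    rw [hl, hr]
    exact hcoarse hκ
  · have h₀ : m.pt 0 = 0 := m.left
    have h₃ : m.pt 3 = 1 := m.right
    have h₀₁ : m.pt 0 < m.pt 1 := m.mono (by decide)
    have h₁₂ : m.pt 1 < m.pt 2 := m.mono (by decide)
    rw [sqrt_sq hε] at h₁ h₂
    rw [h₀, h₁] at h₀₁
    rw [h₁, h₂] at h₁₂
    obtain ⟨hleft, hmiddle, hright⟩ := hfine h₀₁ (by linarith)
    fin_cases j
    · change P (m.pt 0) (m.pt 1)
      rwa [h₀, h₁]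
    · change P (m.pt 1) (m.pt 2)
      rwa [h₁, h₂]
    · change P (m.pt 2) (m.pt 3)
      rwa [h₂, h₃]

end IsSBLmeshRD

namespace DataBounds

theorem cellApprox_of_length_le (h : DataBounds b r f C γ₀ γ) (hε : ReactionDominated ε ε₂)
    (hu : ContDiff ℝ ∞ u) (hbvp : SolvesBVP (ε ^ 2) ε₂ b r f u) (hac : a < c) (ha : 0 ≤ a)
    (hc : c ≤ 1) (hk : 12 * (k * γ₀) ≤ p) (hkp : 2 * k + 2 ≤ p)
    (hlen : (c - a) * ((5 * C + 1) / ε) ≤ p / 6) :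
    CellApprox u ε a c p
      (π * ((9 * C + 1) * (C / γ)) * (5 * C + 3) * p ^ 2 * exp (-k)) := by
  have hε0 := hε.pos
  have hC := h.C_pos
  have hp : (1 : ℝ) ≤ p := mod_cast (by lia)
  have hkγ₀ : 0 ≤ 2 * (k * γ₀) := by have := h.rate_nonneg; positivity
  have hεΛ : ε * ((5 * C + 1) / ε + 2 * (k * γ₀)) = 5 * C + 1 + ε * (2 * (k * γ₀)) := by
    field_simp
  obtain ⟨Λ, hΛ⟩ : ∃ Λ, Λ = (5 * C + 1) / ε + 2 * (k * γ₀) := ⟨_, rfl⟩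
  rw [← hΛ] at hεΛ
  have hscale : ScaleBoundsOn (Icc 0 1) (k + 2) ((9 * C + 1) * (C / γ)) Λ u :=
    h.scaleBoundsOn_solution hε hu hbvp (by rw [hΛ]; exact le_add_of_nonneg_left (by positivity))
      (by rw [hεΛ]; exact le_add_of_nonneg_right (by positivity))
  have hΛ0 : 0 ≤ Λ := by rw [hΛ]; positivity
  have hcΛ : (c - a) * Λ ≤ p / 3 := by
    have : (c - a) * (2 * (k * γ₀)) ≤ 1 * (2 * (k * γ₀)) := by gcongr; linarith
    rw [hΛ, mul_add]
    linarith
  have happrox := CellApprox.of_scaleBoundsOn (K := 5 * C + 2) (p := p) hac hε0.le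
    (hscale.mono_set (Icc_subset_Icc ha hc)) hΛ0 ?_ ?_ hkp
  · convert happrox using 4
    ring
  · calc (c - a) * Λ * exp 1 ≤ p / 3 * 3 := by
          gcongr
          linarith [exp_one_lt_d9]
      _ = p := by ring
  · have hεk : ε * (2 * (k * γ₀)) ≤ 1 * p := by
      gcongr
      · exact hε.le_one
      · linarith
    have hCp : 5 * C + 1 ≤ (5 * C + 1) * p := le_mul_of_one_le_right (by positivity) hp
    rw [hεΛ]
    linarith

theorem exists_cellApprox_middle (h : DataBounds b r f C γ₀ γ) :
    ∃ A, 0 < A ∧ ∀ {ε ε₂ u a k p Λ}, ReactionDominated ε ε₂ → ContDiff ℝ ∞ u →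
      SolvesBVP (ε ^ 2) ε₂ b r f u → 0 < a → a < 1 / 2 → 2 * (k : ℕ) + 2 ≤ (p : ℕ) →
      4 * C * ((3 * k + 2) * γ₀) ≤ γ * Λ → 3 * Λ ≤ p → ε * Λ ≤ γ * exp (-1) / (6 * C) →
      k ≤ γ / (2 * C) / ε * (a / 2) → CellApprox u ε a (1 - a) p (A * p ^ 2 * exp (-k)) := by
  obtain ⟨A, hA, hdec⟩ := h.exists_decomposition
  have hC := h.C_pos
  have hγ := h.pos
  have hγ₀ := h.rate_nonneg
  obtain ⟨τ, hτ⟩ : ∃ τ, τ = γ * exp (-1) / (6 * C) := ⟨_, rfl⟩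
  have hτ0 : 0 < τ := by rw [hτ]; positivity
  rw [← hτ] at hdec ⊢
  refine ⟨π * A * (1 + τ) + 4 * A, by positivity,
    fun {ε ε₂ u a k p Λ} hε hu hbvp ha ha' hkp hΛ hΛp hεΛ hka => ?_⟩
  have hε0 := hε.pos
  have hp : (1 : ℝ) ≤ p := mod_cast (by lia)
  have hΛ0 : 0 ≤ Λ := nonneg_of_mul_nonneg_right (le_trans (by positivity) hΛ) hγ
  have haa : a < 1 - a := by linarith
  obtain ⟨w, hw, huw⟩ := hdec hε (hu.of_le (WithTop.coe_le_coe.2 le_top)) hbvp hΛ hεΛ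
  have hsmooth : CellApprox w ε a (1 - a) p (π * A * (1 + τ) * p ^ 2 * exp (-k)) := by
    refine .of_scaleBoundsOn haa hε0.le (hw.mono_set (Icc_subset_Icc ha.le (by linarith))) hΛ0 ?_
      (hεΛ.trans (le_mul_of_one_le_right hτ0.le hp)) hkp
    calc (1 - a - a) * Λ * exp 1 ≤ 1 * Λ * 3 := by
          gcongr
          · linarith
          · linarith [exp_one_lt_d9]
      _ ≤ p := by linarith
  have hud : Differentiable ℝ u := hu.differentiable (by simp)
  have hwd : Differentiable ℝ w := hw.contDiff.differentiable (by simp)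
  have hlayer : exp (-(γ / (2 * C) / ε * (a / 2))) ≤ exp (-k) := exp_le_exp.2 (neg_le_neg hka)
  have hdiff : CellApprox (fun t => u t - w t) ε a (1 - a) p (2 * (A * (2 * exp (-k)))) := by
    refine .of_bound haa (by lia) hε0.le (hud.sub hwd) fun x hx => ?_
    have hx' := huw (a / 2) (by positivity) (by linarith) x
      (Icc_subset_Icc (by linarith) (by linarith) hx)
    have hle := mul_le_mul_of_nonneg_left (add_le_add_right hlayer (exp (-k))) hA.le
    rw [← two_mul] at hle
    rw [deriv_fun_sub (hud x) (hwd x)]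
    exact ⟨hx'.1.trans hle, hx'.2.trans hle⟩
  refine (hsmooth.of_add_sub hε0.le hud hwd hdiff).mono ?_
  have hone : A * exp (-k) * 1 ≤ A * exp (-k) * (p : ℝ) ^ 2 := by
    gcongr
    exact one_le_pow₀ hp
  linear_combination 4 * hone

theorem exists_cellApprox_middle_of_mul_le (h : DataBounds b r f C γ₀ γ) (hκ : 0 < κ) :
    ∃ L A : ℝ, 0 < A ∧ ∀ {ε ε₂ u} {k p : ℕ}, ReactionDominated ε ε₂ → ContDiff ℝ ∞ u →
      SolvesBVP (ε ^ 2) ε₂ b r f u → 0 < κ * p * ε → κ * p * ε < 1 / 2 →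
      2 * k + 2 ≤ p → L * (k + 1) ≤ p →
      CellApprox u ε (κ * p * ε) (1 - κ * p * ε) p (A * p ^ 2 * exp (-k)) := by
  obtain ⟨A, hA, hmiddle⟩ := h.exists_cellApprox_middle
  have hC := h.C_pos
  have hγ := h.pos
  have hγ₀ := one_pos.trans_le h.one_le_rate
  obtain ⟨T, hT⟩ : ∃ T, T = 12 * C * γ₀ / γ := ⟨_, rfl⟩
  have hγT : γ * T = 12 * C * γ₀ := by rw [hT]; field_simp
  obtain ⟨τ, hτ⟩ : ∃ τ, τ = γ * exp (-1) / (6 * C) := ⟨_, rfl⟩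
  have hτ0 : 0 < τ := by rw [hτ]; positivity
  rw [← hτ] at hmiddle
  refine ⟨max (3 * T) (max (T / (2 * κ * τ)) (4 * C / (γ * κ))), A, hA,
    fun {ε ε₂ u k p} hε hu hbvp ha0 ha hkp hL => ?_⟩
  have hε0 := hε.pos
  simp only [max_mul_of_nonneg _ _ (k.cast_add_one_pos (α := ℝ)).le, max_le_iff,
    div_mul_eq_mul_div] at hL
  obtain ⟨hLT, hLτ, hLα⟩ := hL
  rw [div_le_iff₀ (by positivity)] at hLτ hLα
  refine hmiddle hε hu hbvp ha0 ha hkp (Λ := T * (k + 1)) ?_ (by rwa [← mul_assoc]) ?_ ?_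
  · have : 0 ≤ C * γ₀ := by positivity
    linear_combination 4 * this - (k + 1) * hγT
  · calc ε * (T * (k + 1)) ≤ ε * (p * (2 * κ * τ)) := by gcongr
      _ = 2 * τ * (κ * p * ε) := by ring
      _ ≤ 2 * τ * (1 / 2) := by gcongr
      _ = τ := by ring
  · have hα : γ / (2 * C) / ε * (κ * p * ε / 2) = p * (γ * κ) / (4 * C) := by
      field_simp
      ring
    rw [hα, le_div_iff₀ (by positivity)]
    linarith

theorem exists_cellApprox_of_mul_le (h : DataBounds b r f C γ₀ γ) :
    ∃ κ L A : ℝ, 0 < κ ∧ 0 < L ∧ 0 < A ∧ ∀ {ε ε₂ u} {k p n : ℕ} {m : Mesh n},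
      ReactionDominated ε ε₂ → ContDiff ℝ ∞ u → SolvesBVP (ε ^ 2) ε₂ b r f u → L * (k + 1) ≤ p →
      IsSBLmeshRD κ p (ε ^ 2) m →
      ∀ j, CellApprox u ε (m.xl j) (m.xr j) p (A * p ^ 2 * exp (-k)) := by
  have hC := h.C_pos
  have hγ := h.pos
  have hγ₀ := h.one_le_rate
  obtain ⟨κ, hκ⟩ : ∃ κ, κ = 1 / (12 * (5 * C + 1)) := ⟨_, rfl⟩
  have hκ0 : 0 < κ := by rw [hκ]; positivity
  have hκC : κ * (5 * C + 1) = 1 / 12 := by rw [hκ]; field_simp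
  obtain ⟨L, A, hA, hmiddle⟩ := h.exists_cellApprox_middle_of_mul_le hκ0
  obtain ⟨B, hB⟩ : ∃ B, B = π * ((9 * C + 1) * (C / γ)) * (5 * C + 3) := ⟨_, rfl⟩
  have hB0 : 0 < B := by rw [hB]; positivity
  refine ⟨κ, max (12 * γ₀) L, A + B, hκ0, by positivity, by positivity,
    fun {ε ε₂ u k p n m} hε hu hbvp hL hm => ?_⟩
  have hε0 := hε.pos
  rw [max_mul_of_nonneg _ _ k.cast_add_one_pos.le, max_le_iff] at hL
  have hkp : 2 * k + 2 ≤ p := by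
    have : 12 * 1 * ((k : ℝ) + 1) ≤ p := hL.1.trans' (by gcongr)
    exact_mod_cast (by linarith : 2 * (k : ℝ) + 2 ≤ p)
  have hkγ₀ : 12 * (k * γ₀) ≤ p := by linear_combination hL.1 + 12 * hγ₀
  have hlayer {a c : ℝ} (hac : a < c) (ha : 0 ≤ a) (hc : c ≤ 1)
      (hlen : (c - a) * ((5 * C + 1) / ε) ≤ p / 6) :
      CellApprox u ε a c p ((A + B) * p ^ 2 * exp (-k)) := by
    refine (h.cellApprox_of_length_le hε hu hbvp hac ha hc hkγ₀ hkp hlen).mono ?_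
    rw [← hB]
    gcongr
    linarith
  have hfine : κ * p * ε * ((5 * C + 1) / ε) ≤ p / 6 := by
    calc κ * p * ε * ((5 * C + 1) / ε) = p * (κ * (5 * C + 1)) := by field_simp
      _ ≤ p / 6 := by rw [hκC]; linarith [p.cast_nonneg (α := ℝ)]
  refine hm.forall_cell hε0.le (P := fun a c => CellApprox u ε a c p _)
    (fun hcoarse => hlayer one_pos le_rfl le_rfl ?_) fun ha0 ha =>
    ⟨hlayer ha0 le_rfl (by linarith) (by rwa [sub_zero]),
      (hmiddle hε hu hbvp ha0 ha hkp hL.2).mono (by gcongr; linarith),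
      hlayer (by linarith) (by linarith) le_rfl (by rwa [sub_sub_cancel])⟩
  have hκε : 1 / 2 ≤ κ * p * ε :=
    hcoarse.trans (by gcongr; exact pow_le_of_le_one hε0.le hε.le_one two_ne_zero)
  rw [sub_zero, one_mul, div_le_iff₀ hε0]
  linear_combination 2 * (5 * C + 1) * hκε + 2 * p * ε * hκC

end DataBounds

end LayerMeshApproximation

section RobustApproximation

open Real
open scoped ContDiff

variable {b r f : ℝ → ℝ} {C γ₀ γ L x : ℝ}

theorem exists_nat_mul_le_and_lt (hL : 0 < L) (hx : L ≤ x) :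
    ∃ k : ℕ, L * (k + 1) ≤ x ∧ x < L * (k + 2) := by
  have hone : 1 ≤ x / L := (one_le_div hL).2 hx
  obtain ⟨k, hk⟩ := Nat.exists_eq_add_of_le' (Nat.floor_pos.2 hone)
  have hfloor := Nat.floor_le (zero_le_one.trans hone)
  have hlt := Nat.lt_floor_add_one (x / L)
  rw [hk, Nat.cast_add_one] at hfloor hlt
  rw [le_div_iff₀ hL] at hfloor
  rw [div_lt_iff₀ hL] at hlt
  exact ⟨k, by linarith, by linarith⟩

theorem DataBounds.exists_cellApprox (h : DataBounds b r f C γ₀ γ) :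
    ∃ κ δ A : ℝ, 0 < κ ∧ 0 < δ ∧ 0 < A ∧ ∀ {ε ε₂ u} {p n : ℕ} {m : Mesh n},
      ReactionDominated ε ε₂ → ContDiff ℝ ∞ u → SolvesBVP (ε ^ 2) ε₂ b r f u → 1 ≤ p →
      IsSBLmeshRD κ p (ε ^ 2) m →
      ∀ j, CellApprox u ε (m.xl j) (m.xr j) p (A * p ^ 2 * exp (-(δ * p))) := by
  obtain ⟨κ, L, A, hκ, hL, hA, happrox⟩ := h.exists_cellApprox_of_mul_le
  obtain ⟨M, hM⟩ : ∃ M, M = (9 * C + 1) * (C / γ) := ⟨_, rfl⟩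
  have hM0 : 0 < M := by
    have hC := h.C_pos
    have hγ := h.pos
    rw [hM]
    positivity
  refine ⟨κ, L⁻¹, A * exp 2 + 2 * M * exp 1, hκ, inv_pos.2 hL, by positivity,
    fun {ε ε₂ u p n m} hε hu hbvp hp hm j => ?_⟩
  rcases lt_or_ge (p : ℝ) L with hpL | hpL
  · have hexp : 1 ≤ exp 1 * exp (-(L⁻¹ * p)) := by
      rw [← exp_add]
      refine one_le_exp ?_
      have : L⁻¹ * p ≤ 1 := (inv_mul_le_one₀ hL).2 hpL.le
      linarith
    have hp2 : (1 : ℝ) ≤ (p : ℝ) ^ 2 := one_le_pow₀ (mod_cast hp)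
    have hlinear : CellApprox u ε (m.xl j) (m.xr j) p (2 * M) :=
      .of_bound (m.xl_lt_xr j) hp hε.pos.le (hu.differentiable (by simp)) fun x hx =>
        hM ▸ h.abs_solution_le hε (hu.of_le (WithTop.coe_le_coe.2 le_top)) hbvp x
          (m.Icc_subset j hx)
    refine hlinear.mono ?_
    calc 2 * M ≤ 2 * M * ((p : ℝ) ^ 2 * (exp 1 * exp (-(L⁻¹ * p)))) :=
          le_mul_of_one_le_right (by positivity) (one_le_mul_of_one_le_of_one_le hp2 hexp)
      _ = 2 * M * exp 1 * p ^ 2 * exp (-(L⁻¹ * p)) := by ring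
      _ ≤ _ := by gcongr; exact le_add_of_nonneg_left (by positivity)
  · obtain ⟨k, hk, hk'⟩ := exists_nat_mul_le_and_lt hL hpL
    have hexp : exp (-k) ≤ exp 2 * exp (-(L⁻¹ * p)) := by
      rw [← exp_add]
      refine exp_le_exp.2 ?_
      have : L⁻¹ * p ≤ k + 2 := (inv_mul_le_iff₀ hL).2 hk'.le
      linarith
    refine (happrox hε hu hbvp hk hm j).mono ?_
    calc A * p ^ 2 * exp (-k) ≤ A * p ^ 2 * (exp 2 * exp (-(L⁻¹ * p))) := by gcongr
      _ = A * exp 2 * p ^ 2 * exp (-(L⁻¹ * p)) := by ring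
      _ ≤ _ := by gcongr; exact le_add_of_nonneg_right (by positivity)

end RobustApproximation

section RobustConvergence

open Real Filter Topology
open scoped ContDiff Nat

theorem AnalyticBoundsOn.mono {s : Set ℝ} {C C' γ₀ γ₀' : ℝ} {g : ℝ → ℝ}
    (h : AnalyticBoundsOn s C γ₀ g) (hC : 0 ≤ C) (hγ₀ : 0 ≤ γ₀) (hCC : C ≤ C') (hγγ : γ₀ ≤ γ₀') :
    AnalyticBoundsOn s C' γ₀' g :=
  ⟨h.contDiff, fun k x hx => (h.abs_iteratedDeriv_le k x hx).trans <| by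
    have := hC.trans hCC
    gcongr⟩

theorem AnalyticData.exists_analyticBoundsOn {g : ℝ → ℝ} (hg : AnalyticData g) :
    ∃ C₀ γ₀, ∀ C ≥ C₀, ∀ γ ≥ γ₀, AnalyticBoundsOn (Icc 0 1) C γ g := by
  obtain ⟨hsmooth, C₀, γ₀, hC₀, hγ₀, hbound⟩ := hg
  exact ⟨C₀, γ₀, fun C hC γ hγ =>
    AnalyticBoundsOn.mono ⟨hsmooth, hbound⟩ hC₀.le hγ₀.le hC hγ⟩

theorem le_of_forall_le_sub_mul_div_two {γ c d : ℝ}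
    (h : ∀ t ∈ Ioc (0 : ℝ) 1, γ ≤ c - t * d / 2) : γ ≤ c := by
  have hlim : Tendsto (fun t => c - t * d / 2) (𝓝[>] 0) (𝓝 (c - 0 * d / 2)) :=
    (Continuous.tendsto (by fun_prop) 0).mono_left nhdsWithin_le_nhds
  rw [zero_mul, zero_div, sub_zero] at hlim
  exact ge_of_tendsto hlim (eventually_of_mem (Ioc_mem_nhdsGT one_pos) h)

theorem exists_dataBounds {bb rr ff : ℝ → ℝ} {γ : ℝ} (hb : AnalyticData bb) (hr : AnalyticData rr)
    (hf : AnalyticData ff) (hγ : 0 < γ)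
    (hγ' : ∀ ε₂ ∈ Ioc (0 : ℝ) 1, ∀ x ∈ Icc (0 : ℝ) 1, γ ≤ rr x - ε₂ * deriv bb x / 2) :
    ∃ C γ₀, DataBounds bb rr ff C γ₀ γ := by
  obtain ⟨Cb, γb, hb⟩ := hb.exists_analyticBoundsOn
  obtain ⟨Cr, γr, hr⟩ := hr.exists_analyticBoundsOn
  obtain ⟨Cf, γf, hf⟩ := hf.exists_analyticBoundsOn
  exact ⟨max (max 1 Cb) (max Cr Cf), max (max 1 γb) (max γr γf),
    hb _ (by simp) _ (by simp), hr _ (by simp) _ (by simp), hf _ (by simp) _ (by simp),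
    by simp, by simp, hγ, fun x hx => le_of_forall_le_sub_mul_div_two fun t ht => hγ' t ht x hx⟩

theorem DataBounds.coefficientBounds {bb rr ff : ℝ → ℝ} {B γ₀ γ ε₂ : ℝ}
    (h : DataBounds bb rr ff B γ₀ γ) (hbpos : ∀ x ∈ Icc (0 : ℝ) 1, 0 ≤ bb x)
    (hγ : ∀ x ∈ Icc (0 : ℝ) 1, γ ≤ rr x - ε₂ * deriv bb x / 2) :
    CoefficientBounds ε₂ γ B bb rr (Icc 0 1) where
  contDiff_bb := h.analytic_b.contDiff.of_le (WithTop.coe_le_coe.2 le_top)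
  continuous_rr := h.analytic_r.contDiff.continuous
  pos := h.pos
  bb_nonneg := hbpos
  abs_bb_le _ hx := h.analytic_b.abs_le hx
  abs_rr_le _ hx := h.analytic_r.abs_le hx
  le_sub := hγ

theorem cube_mul_exp_neg_le {δ x : ℝ} (hδ : 0 < δ) (hx : 0 ≤ x) :
    x ^ 3 * exp (-(δ * x)) ≤ 48 / δ ^ 3 * exp (-(δ / 2) * x) := by
  have hpow : (δ / 2 * x) ^ 3 / 6 ≤ exp (δ / 2 * x) := by
    simpa [Nat.factorial] using pow_div_factorial_le_exp (δ / 2 * x) (by positivity) 3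
  have hcube : x ^ 3 = 48 / δ ^ 3 * ((δ / 2 * x) ^ 3 / 6) := by
    field_simp
    ring
  calc x ^ 3 * exp (-(δ * x)) ≤ 48 / δ ^ 3 * exp (δ / 2 * x) * exp (-(δ * x)) := by
        rw [hcube]
        gcongr
    _ = 48 / δ ^ 3 * exp (-(δ / 2) * x) := by
        rw [mul_assoc, ← exp_add]
        congr 2
        ring

theorem IsWGsol.sqrt_normP2_error_le {N n : ℕ} {m : Mesh N} {ε ε₂ γ B η : ℝ}
    {bb rr ff u : ℝ → ℝ} {up0 Dup Dcup Derr : Fin N → ℝ → ℝ} {upb : Fin (N + 1) → ℝ}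
    (hε : 0 ≤ ε) (hε₂ : 0 ≤ ε₂) (hεε : ε₂ ^ 2 ≤ ε ^ 2)
    (hc : CoefficientBounds ε₂ γ B bb rr (Icc 0 1)) (hu : ContDiff ℝ 2 u)
    (hbvp : SolvesBVP (ε ^ 2) ε₂ bb rr ff u)
    (hwg : IsWGsol m (ε ^ 2) ε₂ bb rr ff (n + 1) up0 upb Dup Dcup)
    (hD : IsWeakDeriv m n (fun j t => u t - up0 j t) (fun i => u (m.pt i) - upb i) Derr)
    (hη : 0 ≤ η) (happrox : ∀ j, CellApprox u ε (m.xl j) (m.xr j) (n + 1) η) :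
    √(normP2 m (ε ^ 2) ε₂ bb (stdPen m (ε ^ 2) (n + 1)) (fun j t => u t - up0 j t)
        (fun i => u (m.pt i) - upb i) Derr)
      ≤ √(N * ((4 + 4 / γ) * (7 + 2 * B ^ 2 / γ) + 4)) * (((n + 1 : ℕ) : ℝ) * η) := by
  have hγ := hc.pos
  choose Q hQ hQl hQr hQη using happrox
  have herr := hwg.normP2_error_le (sq_nonneg ε) hε₂ hεε hc hu hbvp hD hQ hQl hQr
    (fun j x hx => (hQη j x hx).1) fun j x hx => by
      rw [← mul_pow, ← sq_abs, abs_mul, abs_of_nonneg hε]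
      exact pow_le_pow_left₀ (by positivity) (hQη j x hx).2 2
  refine sqrt_le_iff.2 ⟨by positivity, herr.trans_eq ?_⟩
  rw [mul_pow, sq_sqrt (by positivity), Nat.cast_add_one]
  ring

theorem IsWGsol.sqrt_normP2_error_le_exp {N n : ℕ} {m : Mesh N} {κ ε ε₂ γ B A δ : ℝ}
    {bb rr ff u : ℝ → ℝ} {up0 Dup Dcup Derr : Fin N → ℝ → ℝ} {upb : Fin (N + 1) → ℝ}
    (hε : 0 ≤ ε) (hε₂ : 0 ≤ ε₂) (hεε : ε₂ ^ 2 ≤ ε ^ 2) (hA : 0 ≤ A) (hδ : 0 < δ)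
    (hc : CoefficientBounds ε₂ γ B bb rr (Icc 0 1)) (hu : ContDiff ℝ 2 u)
    (hbvp : SolvesBVP (ε ^ 2) ε₂ bb rr ff u) (hm : IsSBLmeshRD κ (n + 1) (ε ^ 2) m)
    (hwg : IsWGsol m (ε ^ 2) ε₂ bb rr ff (n + 1) up0 upb Dup Dcup)
    (hD : IsWeakDeriv m n (fun j t => u t - up0 j t) (fun i => u (m.pt i) - upb i) Derr)
    (happrox : ∀ j, CellApprox u ε (m.xl j) (m.xr j) (n + 1)
      (A * ((n + 1 : ℕ) : ℝ) ^ 2 * exp (-(δ * ((n + 1 : ℕ) : ℝ))))) :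
    √(normP2 m (ε ^ 2) ε₂ bb (stdPen m (ε ^ 2) (n + 1)) (fun j t => u t - up0 j t)
        (fun i => u (m.pt i) - upb i) Derr)
      ≤ √(3 * ((4 + 4 / γ) * (7 + 2 * B ^ 2 / γ) + 4)) * A * (48 / δ ^ 3)
        * exp (-(δ / 2) * ((n + 1 : ℕ) : ℝ)) := by
  have hγ := hc.pos
  have herr := hwg.sqrt_normP2_error_le hε hε₂ hεε hc hu hbvp hD (by positivity) happrox
  have hp : (0 : ℝ) ≤ (n + 1 : ℕ) := Nat.cast_nonneg _
  generalize ((n + 1 : ℕ) : ℝ) = p at *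
  have hN : (N : ℝ) ≤ 3 := mod_cast hm.card_le_three
  set K := (4 + 4 / γ) * (7 + 2 * B ^ 2 / γ) + 4
  calc _ ≤ √(N * K) * (p * (A * p ^ 2 * exp (-(δ * p)))) := herr
    _ ≤ √(3 * K) * (p * (A * p ^ 2 * exp (-(δ * p)))) := by gcongr
    _ = √(3 * K) * A * (p ^ 3 * exp (-(δ * p))) := by ring
    _ ≤ √(3 * K) * A * (48 / δ ^ 3 * exp (-(δ / 2) * p)) :=
        mul_le_mul_of_nonneg_left (cube_mul_exp_neg_le hδ hp) (by positivity)
    _ = _ := by ring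

end RobustConvergence

/-- Robust exponential convergence in the reaction-diffusion regime
`ε₂² ≪ ε₁ ≤ 1`: on the Spectral Boundary Layer mesh `ω_BL(κ,p)` there holds
`|||u − u_p|||_p ≤ C e^{−σ p}`, uniformly in `ε₁, ε₂` and `p`. -/
theorem statement10 (bb rr ff : ℝ → ℝ)
    (hb : AnalyticData bb) (hr : AnalyticData rr) (hf : AnalyticData ff)
    (hbpos : ∀ x ∈ Set.Icc (0 : ℝ) 1, 0 < bb x)
    (hrpos : ∀ x ∈ Set.Icc (0 : ℝ) 1, 0 ≤ rr x)
    (γ : ℝ) (hγ : 0 < γ)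
    (hγ' : ∀ ε₂ ∈ Set.Ioc (0 : ℝ) 1, ∀ x ∈ Set.Icc (0 : ℝ) 1,
      γ ≤ rr x - ε₂ * deriv bb x / 2) :
    ∃ κ σ C : ℝ, 0 < κ ∧ 0 < σ ∧ 0 < C ∧
      ∀ ε₁ ε₂ : ℝ, 0 < ε₁ → 0 < ε₂ → ε₂ ^ 2 ≤ ε₁ → ε₁ ≤ 1 →
      ∀ p : ℕ, 1 ≤ p →
      ∀ (N : ℕ) (m : Mesh N), IsSBLmeshRD κ p ε₁ m →
      ∀ u : ℝ → ℝ, ContDiff ℝ (⊤ : ℕ∞) u → SolvesBVP ε₁ ε₂ bb rr ff u →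
      ∀ (up0 : Fin N → ℝ → ℝ) (upb : Fin (N + 1) → ℝ) (Dup Dcup : Fin N → ℝ → ℝ),
        IsWGsol m ε₁ ε₂ bb rr ff p up0 upb Dup Dcup →
      ∀ D : Fin N → ℝ → ℝ,
        IsWeakDeriv m (p - 1) (fun j t => u t - up0 j t)
          (fun i => u (m.pt i) - upb i) D →
        Real.sqrt (normP2 m ε₁ ε₂ bb (stdPen m ε₁ p)
            (fun j t => u t - up0 j t) (fun i => u (m.pt i) - upb i) D)
          ≤ C * Real.exp (-σ * p) := by
  obtain ⟨B, γ₀, h⟩ := exists_dataBounds hb hr hf hγ hγ'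
  obtain ⟨κ, δ, A, hκ, hδ, hA, happrox⟩ := h.exists_cellApprox
  refine ⟨κ, δ / 2, Real.sqrt (3 * ((4 + 4 / γ) * (7 + 2 * B ^ 2 / γ) + 4)) * A * (48 / δ ^ 3),
    hκ, by positivity, by positivity, ?_⟩
  intro ε₁ ε₂ hε₁ hε₂ hεε hε₁1 p hp N m hm u hu hbvp up0 upb Dup Dcup hwg D hD
  obtain ⟨ε, hε, rfl⟩ : ∃ ε, 0 < ε ∧ ε₁ = ε ^ 2 :=
    ⟨Real.sqrt ε₁, Real.sqrt_pos.2 hε₁, (Real.sq_sqrt hε₁.le).symm⟩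
  obtain ⟨n, rfl⟩ := Nat.exists_eq_add_of_le' hp
  have hε1 : ε ≤ 1 := (sq_le_one_iff₀ hε.le).1 hε₁1
  have hεε' : ε₂ ≤ ε := (sq_le_sq₀ hε₂.le hε.le).1 hεε
  have hc : CoefficientBounds ε₂ γ B bb rr (Icc 0 1) :=
    h.coefficientBounds (fun x hx => (hbpos x hx).le) (hγ' ε₂ ⟨hε₂, hεε'.trans hε1⟩)
  exact hwg.sqrt_normP2_error_le_exp hε.le hε₂.le hεε hA.le hδ hc
    (hu.of_le (WithTop.coe_le_coe.2 le_top)) hbvp hm hD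
    (happrox ⟨hε, hε1, hε₂.le, hεε'⟩ hu hbvp hp hm)
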